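/- For every strict partition λ, the number of standard Young tableaux of shifted shape λ equals the number of balanced shifted tableaux of shape λ: |SYT(λ)| = |BS(λ)|. -/

import Mathlib

open scoped BigOperators

namespace BST

/-- `lam` (1-indexed, with `d` parts) is a strict partition: strictly decreasing
positive parts `lam 1 > lam 2 > ⋯ > lam d > 0`. -/
def IsStrictPartition (d : ℕ) (lam : ℕ → ℕ) : Prop :=
  (∀ i : ℕ, 1 ≤ i → i < d → lam (i + 1) < lam i) ∧ 1 ≤ lam d

/-- The size `|λ| = λ_1 + ⋯ + λ_d`. -/
def sizeP (d : ℕ) (lam : ℕ → ℕ) : ℕ := ∑ i ∈ Finset.Icc 1 d, lam i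

/-- The shifted diagram `D(λ) ⊆ ℤ × ℤ`: row `i` (1 ≤ i ≤ d) occupies columns
`i - d, …, λ_i + i - d - 1`. -/
def Diagram (d : ℕ) (lam : ℕ → ℕ) : Set (ℤ × ℤ) :=
  {p : ℤ × ℤ | 1 ≤ p.1 ∧ p.1 ≤ (d : ℤ) ∧ p.1 - (d : ℤ) ≤ p.2 ∧
    p.2 + (d : ℤ) + 1 ≤ (lam p.1.toNat : ℤ) + p.1}

/-- The hook `H(i,c)`. -/
def Hook (d : ℕ) (lam : ℕ → ℕ) (i c : ℤ) : Set (ℤ × ℤ) :=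
  {(i, c)} ∪ {p ∈ Diagram d lam | (p.1 = i ∧ c < p.2) ∨ (p.2 = c ∧ i < p.1)} ∪
    {p ∈ Diagram d lam | c < 0 ∧ p.1 = (d : ℤ) + 1 + c}

/-- The extended hook `H̃(i,c)`. -/
def ExtHook (d : ℕ) (lam : ℕ → ℕ) (i c : ℤ) : Set (ℤ × ℤ) :=
  Hook d lam i c ∪ {p : ℤ × ℤ | c < 0 ∧ p = ((d : ℤ) + 1 + c, c)}

/-- The extended diagram `D(λ) ∪ {(i, i - d - 1) : 1 ≤ i ≤ d}`. -/
def ExtDiagram (d : ℕ) (lam : ℕ → ℕ) : Set (ℤ × ℤ) :=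
  Diagram d lam ∪ {p : ℤ × ℤ | 1 ≤ p.1 ∧ p.1 ≤ (d : ℤ) ∧ p.2 = p.1 - ((d : ℤ) + 1)}

/-- The extended filling `B̃`, with `B̃(i, i - d - 1) = B(i, 0)`. -/
def ExtFilling (d : ℕ) (B : ℤ × ℤ → ℕ) : ℤ × ℤ → ℕ :=
  fun p => if p.2 = p.1 - ((d : ℤ) + 1) then B (p.1, 0) else B p

/-- The rank function `rk(i,c)`. -/
def rk (d : ℕ) (lam : ℕ → ℕ) (i c : ℤ) : ℤ :=
  if 0 ≤ c then (lam i.toNat : ℤ) - d + i - c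
  else (lam i.toNat : ℤ) - d + i + (lam ((d : ℤ) + 1 + c).toNat : ℤ) + c + 1

/-- A bijective filling of `D(λ)` with `1, …, |λ|` (normalized to be `0` off the diagram). -/
def IsFilling (d : ℕ) (lam : ℕ → ℕ) (B : ℤ × ℤ → ℕ) : Prop :=
  Set.BijOn B (Diagram d lam) (Set.Icc 1 (sizeP d lam)) ∧
    ∀ p : ℤ × ℤ, p ∉ Diagram d lam → B p = 0

/-- A balanced shifted tableau: a bijective filling such that at each box `(i,c)`,
`B(i,c)` is the `rk(i,c)`-th largest entry of the multiset of values of `B̃` on the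
extended hook, i.e. exactly `rk(i,c) - 1` boxes of the extended hook carry a value
strictly larger than `B(i,c)`. -/
def IsBalanced (d : ℕ) (lam : ℕ → ℕ) (B : ℤ × ℤ → ℕ) : Prop :=
  IsFilling d lam B ∧ ∀ p ∈ Diagram d lam,
    ({q ∈ ExtHook d lam p.1 p.2 | B p < ExtFilling d B q}.ncard : ℤ) =
      rk d lam p.1 p.2 - 1

/-- A standard Young tableau of shifted shape `λ`. -/
def IsSYT (d : ℕ) (lam : ℕ → ℕ) (B : ℤ × ℤ → ℕ) : Prop :=
  IsFilling d lam B ∧ ∀ p ∈ Diagram d lam, ∀ q ∈ Diagram d lam,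
    ((p.1 = q.1 ∧ p.2 < q.2) → B p < B q) ∧ ((p.2 = q.2 ∧ p.1 < q.1) → B p < B q)

/-- The simple reflections of `W(B_n)`, acting on `ℤ`: `s 0` swaps `1 ↔ -1`,
and `s a` (for `a ≥ 1`) swaps `a ↔ a+1` and `-a ↔ -(a+1)`. -/
def sB (a : ℕ) : Equiv.Perm ℤ :=
  if a = 0 then Equiv.swap 1 (-1)
  else Equiv.swap (a : ℤ) ((a : ℤ) + 1) * Equiv.swap (-(a : ℤ)) (-(a : ℤ) - 1)

/-- The product `s_{a_1} s_{a_2} ⋯ s_{a_m}` of a word. -/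
def wordProd (L : List ℕ) : Equiv.Perm ℤ := (L.map sB).prod

/-- A signed permutation in `W(B_n)`: odd, and the identity beyond `n`. -/
def IsSignedPerm (n : ℕ) (w : Equiv.Perm ℤ) : Prop :=
  (∀ i : ℤ, w (-i) = -(w i)) ∧ ∀ i : ℤ, (n : ℤ) < |i| → w i = i

/-- The Coxeter length of `w` in `W(B_n)`. -/
noncomputable def lengthB (n : ℕ) (w : Equiv.Perm ℤ) : ℕ :=
  sInf {m : ℕ | ∃ L : List ℕ, (∀ a ∈ L, a < n) ∧ wordProd L = w ∧ L.length = m}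

/-- `L` is a reduced word of `w` in `W(B_n)`. -/
def IsReducedWord (n : ℕ) (w : Equiv.Perm ℤ) (L : List ℕ) : Prop :=
  (∀ a ∈ L, a < n) ∧ wordProd L = w ∧ L.length = lengthB n w

/-- The vector `e_k` (for `k ≥ 1` the `k`-th standard basis vector, with the
conventions `e 0 = 0` and `e (-k) = - e k`), represented as an odd function `ℤ → ℤ`. -/
def eVec (k : ℤ) : ℤ → ℤ :=
  fun t => if t = 0 then 0 else if t = k then 1 else if t = -k then -1 else 0

/-- The positive roots of type `B_n`. -/
def PosRoots (n : ℕ) : Set (ℤ → ℤ) :=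
  {v | (∃ i j : ℤ, 1 ≤ i ∧ i < j ∧ j ≤ (n : ℤ) ∧
        (v = eVec j - eVec i ∨ v = eVec j + eVec i)) ∨
       (∃ i : ℤ, 1 ≤ i ∧ i ≤ (n : ℤ) ∧ v = eVec i)}

/-- The action of a signed permutation on vectors: `w · e_i = e_{w(i)}`. -/
def actB (w : Equiv.Perm ℤ) (v : ℤ → ℤ) : ℤ → ℤ := fun t => v (w⁻¹ t)

/-- The inversion set `Inv(w) = {α ∈ Φ⁺ : w⁻¹ · α ∈ -Φ⁺}`. -/
def InvSet (n : ℕ) (w : Equiv.Perm ℤ) : Set (ℤ → ℤ) :=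
  {α | α ∈ PosRoots n ∧ -(actB w⁻¹ α) ∈ PosRoots n}

/-- The simple roots: `α_0 = e_1` and `α_a = e_{a+1} - e_a` for `a ≥ 1`. -/
def alphaRoot (a : ℕ) : ℤ → ℤ :=
  if a = 0 then eVec 1 else eVec ((a : ℤ) + 1) - eVec (a : ℤ)

/-- The reflection order of a word: `reflOrder L t = γ_{t+1} = s_{a_1} ⋯ s_{a_t} · α_{a_{t+1}}`
(0-indexed). -/
def reflOrder (L : List ℕ) (t : ℕ) : ℤ → ℤ :=
  actB (wordProd (L.take t)) (alphaRoot (L.getD t 0))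

/-- The trapezoid `Z(d,r) = (r+2d-1, r+2d-3, …, r+1)`. -/
def Zlam (d r : ℕ) : ℕ → ℕ := fun i => r + 2 * d + 1 - 2 * i

/-- The labeling `f : D(Z(d,r)) → Φ⁺`. -/
def fLabel (d r : ℕ) (p : ℤ × ℤ) : ℤ → ℤ :=
  if p.2 ≤ 0 then eVec ((d : ℤ) + 1 - p.1) - eVec p.2
  else if p.2 ≤ (r : ℤ) then eVec ((d : ℤ) + 1 - p.1) + eVec (p.2 + (d : ℤ))
  else eVec ((d : ℤ) + 1 - p.1) - eVec (p.2 - (r : ℤ))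

/-- The extended labeling `f̃`, with `f̃(i, i - d - 1) = 2 e_{d+1-i}`. -/
def fExtLabel (d r : ℕ) (p : ℤ × ℤ) : ℤ → ℤ :=
  if p.2 = p.1 - ((d : ℤ) + 1) then (2 : ℤ) • eVec ((d : ℤ) + 1 - p.1)
  else fLabel d r p

/-- `w` is the signed permutation `w^{(d,r)} ∈ W(B_{d+r})`, i.e.
`w(i) = d + i` for `1 ≤ i ≤ r` and `w(i) = -(i - r)` for `r < i ≤ d + r`. -/
def IsWdr (d r : ℕ) (w : Equiv.Perm ℤ) : Prop :=
  IsSignedPerm (d + r) w ∧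
    (∀ i : ℤ, 1 ≤ i → i ≤ (r : ℤ) → w i = (d : ℤ) + i) ∧
    (∀ i : ℤ, (r : ℤ) < i → i ≤ (d : ℤ) + (r : ℤ) → w i = -(i - r))


/-- `x` lies strictly between `y` and `z` (i.e. `min(y,z) < x < max(y,z)`). -/
def Between (x y z : ℕ) : Prop := (y < x ∧ x < z) ∨ (z < x ∧ x < y)

/-- A nonempty list is unimodal: strictly decreasing down to its minimum
(at 0-indexed position `k`), then strictly increasing. -/
def Unimodal (L : List ℕ) : Prop :=
  ∃ k : ℕ, k < L.length ∧
    (∀ a b : ℕ, a < b → b ≤ k → L.getD b 0 < L.getD a 0) ∧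
    (∀ a b : ℕ, k ≤ a → a < b → b < L.length → L.getD a 0 < L.getD b 0)

/-- Row `i` of the distinguished tableau of shape `Z(d,r)`:
`(r+d-i, …, r+1, 0, 1, …, r+d-i)`. -/
def rowWord (d r i : ℕ) : List ℕ :=
  (List.range (r + 2 * (d - i) + 1)).map fun t =>
    if t < d - i then r + (d - i) - t else t - (d - i)

/-- The reading word `π(T) = T_d T_{d-1} ⋯ T_1` of the distinguished tableau of
shape `Z(d,r)`. -/
def piWord (d r : ℕ) : List ℕ :=
  (List.range d).flatMap fun k => rowWord d r (d - k)

/-- `μ_i = Z(d,r)_i - λ_i`. -/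
def muF (d r : ℕ) (lam : ℕ → ℕ) (i : ℕ) : ℕ := r + 2 * d + 1 - 2 * i - lam i

/-- `σ_i = μ_1 + ⋯ + μ_i`. -/
def sigmaF (d r : ℕ) (lam : ℕ → ℕ) (i : ℕ) : ℕ := ∑ t ∈ Finset.Icc 1 i, muF d r lam t

/-- `ν_i = min{μ_i, …, μ_d}`. -/
noncomputable def nuF (d r : ℕ) (lam : ℕ → ℕ) (i : ℕ) : ℕ :=
  sInf {m : ℕ | ∃ j : ℕ, i ≤ j ∧ j ≤ d ∧ m = muF d r lam j}

/-- The word `a^λ`: the concatenation over `i = 1, …, d` of the increasing runs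
`(d+r-i-μ_i+1, …, d+r-i)`. -/
def aLamWord (d r : ℕ) (lam : ℕ → ℕ) : List ℕ :=
  (List.range d).flatMap fun k =>
    (List.range (muF d r lam (k + 1))).map fun t =>
      d + r - (k + 1) - muF d r lam (k + 1) + 1 + t

/-- Row `i` of the tableau `P(w^λ)`: entries `P(i,c) = c` for `c ≥ 0` and
`P(i,c) = r - c - ν_{d+1+c}` for `c < 0`. -/
noncomputable def rowWordP (d r : ℕ) (lam : ℕ → ℕ) (i : ℕ) : List ℕ :=
  (List.range (lam i)).map fun t =>
    if t < d - i then r + (d - i) - t - nuF d r lam (i + 1 + t) else t - (d - i)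

/-- The reading word `π(P(w^λ))`. -/
noncomputable def piWordP (d r : ℕ) (lam : ℕ → ℕ) : List ℕ :=
  (List.range d).flatMap fun k => rowWordP d r lam (d - k)

/-- The shape obtained from `λ` by adding one box at the end of row `i`. -/
def stepShape (lam : ℕ → ℕ) (i : ℕ) : ℕ → ℕ :=
  fun t => if t = i then lam i + 1 else lam t

/-- The box-adding map `f_i` on fillings: swap columns `j = λ_i + i - d` and `j + 1`
(in rows `1, …, i-1`), and put the value `N + 1` in the new box `(i, j)`. -/
def addBox (d : ℕ) (lam : ℕ → ℕ) (i : ℕ) (N : ℕ) (B : ℤ × ℤ → ℕ) : ℤ × ℤ → ℕ :=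
  fun p =>
    if p = ((i : ℤ), (lam i : ℤ) + (i : ℤ) - (d : ℤ)) then N + 1
    else if 1 ≤ p.1 ∧ p.1 < (i : ℤ) ∧ p.2 = (lam i : ℤ) + (i : ℤ) - (d : ℤ) then
      B (p.1, p.2 + 1)
    else if 1 ≤ p.1 ∧ p.1 < (i : ℤ) ∧ p.2 = (lam i : ℤ) + (i : ℤ) - (d : ℤ) + 1 then
      B (p.1, p.2 - 1)
    else B p

/-- Successively apply the box-adding maps along a list of row indices,
tracking the current shape. -/
def FmapAux (d : ℕ) : List ℕ → (ℕ → ℕ) → (ℤ × ℤ → ℕ) → (ℤ × ℤ → ℕ)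
  | [], _, B => B
  | i :: rest, lam, B => FmapAux d rest (stepShape lam i) (addBox d lam i (sizeP d lam) B)

/-- The shape after successively adding boxes along a list of row indices. -/
def shapeAux : List ℕ → (ℕ → ℕ) → (ℕ → ℕ)
  | [], lam => lam
  | i :: rest, lam => shapeAux rest (stepShape lam i)

/-- The list of row indices `1^{μ_1} 2^{μ_2} ⋯ d^{μ_d}` used to pad `λ` to `Z(d,r)`. -/
def rowsList (d r : ℕ) (lam : ℕ → ℕ) : List ℕ :=
  (List.range d).flatMap fun k => List.replicate (muF d r lam (k + 1)) (k + 1)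

/-- `BS(Z(d,r))|_λ`: balanced tableaux of shape `Z(d,r)` such that for each
`i ∈ {1,…,d}` the entries `N + σ_{i-1} + 1, …, N + σ_i` all occur in row `i`. -/
def BSRestricted (d r : ℕ) (lam : ℕ → ℕ) : Set (ℤ × ℤ → ℕ) :=
  {T | IsBalanced d (Zlam d r) T ∧ ∀ i : ℕ, 1 ≤ i → i ≤ d →
    ∀ k : ℕ, sizeP d lam + sigmaF d r lam (i - 1) + 1 ≤ k →
      k ≤ sizeP d lam + sigmaF d r lam i →
      ∃ c : ℤ, ((i : ℤ), c) ∈ Diagram d (Zlam d r) ∧ T ((i : ℤ), c) = k}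

/-- `w ∈ W(B_n)` pattern embeds the signed pattern `v` (given as its one-line
notation, a list of nonzero integers). -/
def PatternEmbeds (n : ℕ) (w : Equiv.Perm ℤ) (v : List ℤ) : Prop :=
  ∃ idx : Fin v.length → ℤ, StrictMono idx ∧
    (∀ j, 1 ≤ idx j ∧ idx j ≤ (n : ℤ)) ∧
    (∀ j, 0 < w (idx j) ↔ 0 < v.get j) ∧
    (∀ j k, |w (idx j)| < |w (idx k)| ↔ |v.get j| < |v.get k|)


def tauF (p q x : ℤ) : ℤ :=
  if x = p then q else if x = q then p else if x = 1 - p then 1 - q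
  else if x = 1 - q then 1 - p else x

lemma tauF_invol (p q x : ℤ) : tauF p q (tauF p q x) = x := by
  unfold tauF; split_ifs <;> omega

def tau (p q : ℤ) : Equiv.Perm ℤ :=
  ⟨tauF p q, tauF p q, tauF_invol p q, tauF_invol p q⟩

lemma tau_apply (p q x : ℤ) : tau p q x = tauF p q x := rfl
lemma tau_symm_apply (p q x : ℤ) : (tau p q).symm x = tauF p q x := rfl
lemma tau_mul_self (p q : ℤ) : tau p q * tau p q = 1 := by
  ext x; simp [tau_apply, tauF_invol]

def OddP (w : Equiv.Perm ℤ) : Prop := ∀ x, w (1 - x) = 1 - w x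
def FixP (n : ℤ) (w : Equiv.Perm ℤ) : Prop := ∀ x, n < x → w x = x

lemma OddP.symm {w : Equiv.Perm ℤ} (h : OddP w) (x : ℤ) : w.symm (1 - x) = 1 - w.symm x := by
  apply w.injective; rw [h]; simp

lemma oddP_tau (p q : ℤ) : OddP (tau p q) := by
  intro x; simp only [tau_apply, tauF]; split_ifs <;> omega

lemma OddP.mul {v w : Equiv.Perm ℤ} (hv : OddP v) (hw : OddP w) : OddP (v * w) := by
  intro x; simp [Equiv.Perm.mul_apply, hw x, hv _]

lemma symm_mul_apply (v w : Equiv.Perm ℤ) (x : ℤ) : (v * w).symm x = w.symm (v.symm x) := rfl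

def Cov (p q : ℤ) (w : Equiv.Perm ℤ) : Prop :=
  p < q ∧ w.symm p < w.symm q ∧
  (∀ z, p < z → z < q → w.symm p < w.symm z → w.symm z < w.symm q → False) ∧
  (p + q = 1 ∨ ¬ (p ≤ 0 ∧ 0 < q ∧ w.symm p ≤ 0 ∧ 0 < w.symm q))

lemma symm_iff (w : Equiv.Perm ℤ) (z c : ℤ) : w c = z ↔ w.symm z = c := by
  constructor
  · rintro rfl; simp
  · rintro rfl; simp

lemma tauF_cases (w : Equiv.Perm ℤ) (hw : OddP w) (p q x c : ℤ) (hx : w c = x) :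
    (x = p ∧ w.symm p = c ∧ tauF p q x = q) ∨ (x = q ∧ w.symm q = c ∧ tauF p q x = p) ∨
    (x = 1 - p ∧ w.symm p = 1 - c ∧ tauF p q x = 1 - q) ∨
    (x = 1 - q ∧ w.symm q = 1 - c ∧ tauF p q x = 1 - p) ∨ 
    (x ≠ p ∧ x ≠ q ∧ x ≠ 1 - p ∧ x ≠ 1 - q ∧ tauF p q x = x) := by
  have h : w.symm x = c := by rw [← hx]; simp
  have h1 := hw.symm x
  unfold tauF
  split_ifs with h1 h2 h3 h4
  · subst h1; simp [h]
  · subst h2; simp [h]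
  · subst h3; right; right; left; rw [hw.symm] at h; refine ⟨rfl, by omega, rfl⟩
  · subst h4; right; right; right; left; rw [hw.symm] at h; refine ⟨rfl, by omega, rfl⟩
  · right; right; right; right; simp [*]

lemma Cov.not_mem {p q : ℤ} {w : Equiv.Perm ℤ} (hc : Cov p q w) (z c : ℤ) (h : w.symm z = c) : 
    ¬ (p < z ∧ z < q ∧ w.symm p < c ∧ c < w.symm q) := by
  subst h; rintro ⟨a, b, c, d⟩; exact hc.2.2.1 z a b c d

set_option maxHeartbeats 4000000 in
lemma key1 (w : Equiv.Perm ℤ) (hw : OddP w) (p q a : ℤ) (ha : 0 ≤ a)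
    (hns : ¬ ((w.symm p = a ∧ w.symm q = a+1) ∨ 
      (w.symm p = -a ∧ w.symm q = 1-a)))
    (hc : Cov p q w) (hd : (tau p q * w) (a+1) < (tau p q * w) a) : w (a+1) < w a := by
  by_contra hlt
  have hne : w (a+1) ≠ w a := fun h => by have := w.injective h; omega
  have hlt' : w a < w (a+1) := by omega
  simp only [Equiv.Perm.mul_apply, tau_apply] at hd
  have z1 := hc.not_mem (w a) a (by simp)
  have z2 := hc.not_mem (w (a+1)) (a+1) (by simp)
  have z3 := hc.not_mem (1 - w a) (1-a) (by rw [← hw]; simp)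
  have z4 := hc.not_mem (1 - w (a+1)) (1-(a+1)) (by rw [← hw]; simp)
  have z5 := hc.not_mem (1-p) _ (hw.symm p)
  have z6 := hc.not_mem (1-q) _ (hw.symm q)
  have X := tauF_cases w hw p q (w a) a rfl
  have Y := tauF_cases w hw p q (w (a+1)) (a+1) rfl
  have h0 : a = 0 → w (a+1) = 1 - w a := fun h => by subst h; rw [← hw]; rfl
  have h0' : p + q = 1 → w.symm p + w.symm q = 1 := fun h => by
    obtain rfl : q = 1 - p := by omega
    rw [hw.symm]; omega
  obtain ⟨h1, h2, h3, h4⟩ := hc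
  clear h3 
  generalize w a = x at *
  generalize w (a+1) = y at *
  generalize w.symm p = P at *
  generalize w.symm q = Q at *
  generalize tauF p q x = X' at *
  generalize tauF p q y = Y' at *
  rcases X with ⟨rfl,rfl,rfl⟩|⟨rfl,rfl,rfl⟩|⟨rfl,rfl,rfl⟩|⟨rfl,rfl,rfl⟩|⟨n1,n2,n3,n4,rfl⟩ <;> 
  rcases Y with ⟨h,h',rfl⟩|⟨h,h',rfl⟩|⟨h,h',rfl⟩|⟨h,h',rfl⟩|⟨m1,m2,m3,m4,rfl⟩ <;> omega

lemma sord (a X Y : ℤ) (h : tauF a (a+1) X < tauF a (a+1) Y) :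
    X < Y ∨ (X = a + 1 ∧ Y = a) ∨ (X = 1 - a ∧ Y = -a) := by
  unfold tauF at h; split_ifs at h <;> omega

lemma sord' (a X Y : ℤ) (h : X < Y) (h' : ¬ ((X = a ∧ Y = a+1) ∨ (X = -a ∧ Y = 1-a))) :
    tauF a (a+1) X < tauF a (a+1) Y := by
  unfold tauF; split_ifs <;> omega

lemma spos (a X : ℤ) (ha : 0 ≤ a) (h : tauF a (a+1) X ≤ 0) : X ≤ 0 ∨ (X = 1 ∧ a = 0) := by
  unfold tauF at h; split_ifs at h <;> omega

lemma spos' (a X : ℤ) (ha : 0 ≤ a) (h : 0 < tauF a (a+1) X) : 0 < X ∨ (X = 0 ∧ a = 0) := by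
  unfold tauF at h; split_ifs at h <;> omega

set_option maxHeartbeats 1000000 in
lemma key2 (w : Equiv.Perm ℤ) (hw : OddP w) (p q a : ℤ) (ha : 0 ≤ a)
    (hns : ¬ ((w.symm p = a ∧ w.symm q = a+1) ∨
      (w.symm p = -a ∧ w.symm q = 1-a)))
    (hc : Cov p q w) (hd : (tau p q * w) (a+1) < (tau p q * w) a ↔ w (a+1) < w a) :
    Cov p q (w * tau a (a+1)) := by
  simp only [Equiv.Perm.mul_apply, tau_apply] at hd
  have X := tauF_cases w hw p q (w a) a rfl
  have Y := tauF_cases w hw p q (w (a+1)) (a+1) rfl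
  have h0 : a = 0 → w (a+1) = 1 - w a := fun h => by subst h; rw [← hw]; rfl
  have SP : ∀ z, (w * tau a (a+1)).symm z = tauF a (a+1) (w.symm z) := fun z => rfl
  refine ⟨hc.1, ?_, ?_, ?_⟩
  · rw [SP, SP]
    exact sord' _ _ _ hc.2.1 hns
  · intro z hz1 hz2 hz3 hz4
    rw [SP, SP] at hz3 hz4
    have z0 := hc.not_mem z _ rfl
    have o1 := hw a
    have o2 : w (-a) = 1 - w (a+1) := by rw [← hw]; congr 1; omega
    obtain ⟨h1, h2, h3, h4⟩ := hc
    rcases sord _ _ _ hz3 with hA | ⟨hA, hB⟩ | ⟨hA, hB⟩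
    · rcases sord _ _ _ hz4 with hA' | ⟨hA', hB'⟩ | ⟨hA', hB'⟩
      · omega
      · have e1 := (symm_iff w z _).2 hA'
        have e2 := (symm_iff w q _).2 hB'
        omega
      · have e1 := (symm_iff w z _).2 hA'
        have e2 := (symm_iff w q _).2 hB'
        omega
    · have e1 := (symm_iff w p _).2 hA
      have e2 := (symm_iff w z _).2 hB
      omega
    · have e1 := (symm_iff w p _).2 hA
      have e2 := (symm_iff w z _).2 hB
      omega
  · rw [SP, SP]
    obtain ⟨h1, h2, h3, h4⟩ := hc
    by_contra hcon
    push Not at hcon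
    obtain ⟨c1, c2, c3, c4, c5⟩ := hcon
    rcases spos _ _ ha c4 with hA | ⟨hA, hB⟩
    · rcases spos' _ _ ha c5 with hA' | ⟨hA', hB'⟩
      · omega
      · subst hB'
        have e1 := (symm_iff w q _).2 hA'
        norm_num at *
        omega
    · subst hB
      have e1 := (symm_iff w p _).2 hA
      norm_num at *
      omega

lemma tau_comm (p q : ℤ) : tau p q = tau q p := by
  ext x; simp only [tau_apply, tauF]; split_ifs <;> omega

lemma tau_neg (a : ℤ) : tau (-a) (1-a) = tau a (a+1) := by
  ext x; simp only [tau_apply, tauF]; split_ifs <;> omega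

lemma tau_mul_mul (w : Equiv.Perm ℤ) (hw : OddP w) (x y : ℤ) :
    tau (w x) (w y) * w = w * tau x y := by
  ext c
  have hw' : ∀ x, w (1-x) = 1 - w x := hw
  simp only [Equiv.Perm.mul_apply, tau_apply, tauF, ← hw', w.injective.eq_iff]
  split_ifs <;> rfl

lemma desc_s (w : Equiv.Perm ℤ) (a : ℤ) :
    ((w * tau a (a+1)) (a+1) < (w * tau a (a+1)) a) ↔ w a < w (a+1) := by
  have h1 : tau a (a+1) (a+1) = a := by simp only [tau_apply, tauF]; split_ifs <;> omega
  have h2 : tau a (a+1) a = a+1 := by simp only [tau_apply, tauF]; split_ifs <;> omega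
  simp [Equiv.Perm.mul_apply, h1, h2]

lemma key (w : Equiv.Perm ℤ) (hw : OddP w) (p q a : ℤ) (ha : 0 ≤ a)
    (hns : ¬ ((w.symm p = a ∧ w.symm q = a+1) ∨ (w.symm p = a+1 ∧ w.symm q = a) ∨
      (w.symm p = -a ∧ w.symm q = 1-a) ∨ (w.symm p = 1-a ∧ w.symm q = -a))) :
    (Cov p q w ∧ (tau p q * w) (a+1) < (tau p q * w) a) ↔
    (w (a+1) < w a ∧ Cov p q (w * tau a (a+1))) := by
  constructor
  · rintro ⟨hc, hd⟩
    have h1 := key1 w hw p q a ha (by tauto) hc hd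
    exact ⟨h1, key2 w hw p q a ha (by tauto) hc (by tauto)⟩
  · rintro ⟨hd, hc⟩
    have hw' := hw.mul (oddP_tau a (a+1))
    have hns' : ¬ (((w * tau a (a+1)).symm p = a ∧ (w * tau a (a+1)).symm q = a+1) ∨
      ((w * tau a (a+1)).symm p = -a ∧ (w * tau a (a+1)).symm q = 1-a)) := by
      simp only [symm_mul_apply, tau_symm_apply, tauF]
      split_ifs <;> omega
    have hww : w * tau a (a+1) * tau a (a+1) = w := by rw [mul_assoc, tau_mul_self, mul_one]
    have e1 : ¬ ((w * tau a (a+1)) (a+1) < (w * tau a (a+1)) a) := by rw [desc_s]; omega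
    have e2 : ¬ ((tau p q * (w * tau a (a+1))) (a+1) < (tau p q * (w * tau a (a+1))) a) :=
      fun h => e1 (key1 _ hw' p q a ha hns' hc h)
    have e3 := key2 _ hw' p q a ha hns' hc (by tauto)
    rw [hww] at e3
    refine ⟨e3, ?_⟩
    rw [← mul_assoc, desc_s] at e2
    have : (tau p q * w) a ≠ (tau p q * w) (a+1) := fun h => by
      have := (tau p q * w).injective h; omega
    omega

lemma adj (w : Equiv.Perm ℤ) (hw : OddP w) (x y a : ℤ) (ha : 0 ≤ a) (hy : w.symm y = w.symm x + 1)
    (hx : w.symm x = a ∨ w.symm x = -a) :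
    tau x y * w * tau a (a+1) = w ∧ (x < y → Cov x y w ∧ ¬ (w (a+1) < w a) ∧
      (tau x y * w) (a+1) < (tau x y * w) a) ∧ (y < x → w (a+1) < w a ∧
      Cov y x (w * tau a (a+1))) := by
  have e1 : x = w (w.symm x) := by simp
  have e2 : y = w (w.symm x + 1) := by rw [← hy]; simp
  have ht : tau x y * w = w * tau a (a+1) := by
    rw [e2]; conv_lhs => rw [e1]
    simp only [Equiv.symm_apply_apply]
    rw [tau_mul_mul w hw]
    rcases hx with h | h <;> rw [h]
    rw [← tau_neg a]; congr 2; omega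
  have hd : (w (a+1) < w a ↔ y < x) := by
    rcases hx with h | h
    · rw [h] at e1 e2; rw [← e1, ← e2]
    · rw [h] at e1 e2
      have o1 := hw a
      have o2 : w (-a) = 1 - w (a+1) := by rw [← hw]; congr 1; omega
      have o3 : w (-a+1) = w (1-a) := by congr 1; omega
      omega
  refine ⟨?_, ?_, ?_⟩
  · rw [ht, mul_assoc, tau_mul_self, mul_one]
  · intro h
    refine ⟨⟨h, by omega, fun z _ _ _ _ => by omega, ?_⟩, by omega, ?_⟩
    · by_contra hcon
      push Not at hcon
      have : w.symm x = 0 := by omega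
      rw [this] at e1 e2
      have := hw 0
      simp at this e2
      omega
    · rw [ht, desc_s]
      have : w a ≠ w (a+1) := fun h => by
        have := w.injective h; omega
      omega
  · intro h
    refine ⟨by omega, h, ?_⟩
    simp only [symm_mul_apply, tau_symm_apply]
    have f1 : tauF a (a+1) (w.symm x) = w.symm y := by
      rw [hy]; unfold tauF; split_ifs <;> omega
    have f2 : tauF a (a+1) (w.symm y) = w.symm x := by
      rw [hy]; unfold tauF; split_ifs <;> omega
    rw [f1, f2]
    refine ⟨by omega, fun z _ _ _ _ => by omega, ?_⟩
    by_contra hcon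
    push Not at hcon
    have : w.symm x = 0 := by omega
    rw [this] at e1 e2
    have := hw 0
    simp at this e2
    omega

noncomputable def G : ℕ → Equiv.Perm ℤ → ℕ
  | 0, w => by classical exact if w = 1 then 1 else 0
  | N+1, w => ∑ᶠ a : ℕ, if w ((a:ℤ)+1) < w a then G N (w * tau a (a+1)) else 0

lemma FixP.le {n : ℤ} {w : Equiv.Perm ℤ} (h : FixP n w) {x : ℤ} (hx : x ≤ n) : w x ≤ n := by
  by_contra hc
  have := h (w x) (by omega)
  have := w.injective this
  omega

lemma FixP.symm_le {n : ℤ} {w : Equiv.Perm ℤ} (h : FixP n w) {x : ℤ} (hx : x ≤ n) :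
    w.symm x ≤ n := by
  by_contra hc
  have := h (w.symm x) (by omega)
  simp at this
  omega

lemma FixP.symm_fix {n : ℤ} {w : Equiv.Perm ℤ} (h : FixP n w) {x : ℤ} (hx : n < x) :
    w.symm x = x := by
  rw [← symm_iff]; exact h x hx

lemma FixP.mono {n m : ℤ} {w : Equiv.Perm ℤ} (h : FixP n w) (hx : n ≤ m) : FixP m w :=
  fun x hx => h x (by omega)

lemma FixP.desc {n a : ℤ} {w : Equiv.Perm ℤ} (h : FixP n w) (hd : w (a+1) < w a) : a < n := by
  by_contra hc
  have h1 := h (a+1) (by omega)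
  have : w a ≤ a := (h.mono (by omega) : FixP a w).le le_rfl
  omega

lemma FixP.mul_s {n a : ℤ} {w : Equiv.Perm ℤ} (h : FixP n w) (ha : 0 ≤ a) (han : a < n) :
    FixP n (w * tau a (a+1)) := by
  intro x hx
  have : tau a (a+1) x = x := by simp only [tau_apply, tauF]; split_ifs <;> omega
  rw [Equiv.Perm.mul_apply, this, h x hx]

lemma FixP.tau_mul {n p q : ℤ} {w : Equiv.Perm ℤ} (h : FixP n w) (hp : p ≤ n) (hq : q ≤ n)
    (hp' : -n < p) (hq' : -n < q) : FixP n (tau p q * w) := by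
  intro x hx
  rw [Equiv.Perm.mul_apply, h x hx]
  simp only [tau_apply, tauF]; split_ifs <;> omega

lemma G_succ {n : ℤ} {w : Equiv.Perm ℤ} (h : FixP n w) (N K : ℕ) (hK : n ≤ K) :
    G (N+1) w = ∑ a ∈ Finset.range K, if w ((a:ℤ)+1) < w a then G N (w * tau a (a+1)) else 0 := by
  rw [G]
  apply finsum_eq_sum_of_support_subset
  intro a ha
  simp only [Function.mem_support, ne_eq, ite_eq_right_iff, Classical.not_imp] at ha
  have := h.desc ha.1
  simp; omega

open Classical in
noncomputable def HH (N : ℕ) (r : ℤ) (w : Equiv.Perm ℤ) (z : ℤ) : ℤ :=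
  (if Cov z r w then (G N (tau z r * w) : ℤ) else 0) - 
  (if Cov r z w then (G N (tau r z * w) : ℤ) else 0)

open Classical in
noncomputable def FF (N : ℕ) (r : ℤ) (w : Equiv.Perm ℤ) (z a : ℤ) : ℤ :=
  (if Cov z r w ∧ (tau z r * w) (a+1) < (tau z r * w) a
    then (G N (tau z r * w * tau a (a+1)) : ℤ) else 0) - 
  (if Cov r z w ∧ (tau r z * w) (a+1) < (tau r z * w) a
    then (G N (tau r z * w * tau a (a+1)) : ℤ) else 0) - 
  (if w (a+1) < w a then HH N r (w * tau a (a+1)) z else 0)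

lemma Cov.lt {p q : ℤ} {w : Equiv.Perm ℤ} (h : Cov p q w) : p < q := h.1

lemma FF_zero (N : ℕ) (r : ℤ) (w : Equiv.Perm ℤ) (hw : OddP w) (z a : ℤ) (ha : 0 ≤ a)
    (hns : ¬ ((w.symm z = a ∧ w.symm r = a+1) ∨ (w.symm z = a+1 ∧ w.symm r = a) ∨
      (w.symm z = -a ∧ w.symm r = 1-a) ∨ (w.symm z = 1-a ∧ w.symm r = -a))) :
    FF N r w z a = 0 := by
  classical
  unfold FF HH
  have k1 := key w hw z r a ha hns
  have k2 := key w hw r z a ha (by tauto)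
  by_cases h : w (a+1) < w a
  · simp only [h, true_and, if_true] at *
    simp only [k1, k2, mul_assoc]; ring
  · simp only [h, false_and, if_false] at *
    simp only [k1, k2, if_false]; simp

lemma FF_up (N : ℕ) (r : ℤ) (w : Equiv.Perm ℤ) (hw : OddP w) (z a : ℤ) (ha : 0 ≤ a)
    (hz : w.symm z = w.symm r + 1) (h : w.symm r = a ∨ w.symm r = -a) : 
    FF N r w z a = - G N w := by
  classical
  obtain ⟨h1, h2, h3⟩ := adj w hw r z a ha hz h
  unfold FF HH
  rcases lt_trichotomy r z with hlt | rfl | hlt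
  · obtain ⟨c1, c2, c3⟩ := h2 hlt
    have : ¬ Cov z r w := fun hc => by have := hc.lt; omega
    simp only [this, c1, c2, c3, h1, false_and, true_and, if_true, if_false]; simp
  · omega
  · obtain ⟨c1, c2⟩ := h3 hlt
    have n1 : ¬ Cov r z w := fun hc => by have := hc.lt; omega
    have n2 : ¬ Cov r z (w * tau a (a+1)) := fun hc => by have := hc.lt; omega
    have n3 : ¬ Cov z r w := fun hc => by have := hc.2.1; omega
    rw [tau_comm r z] at h1
    simp [n1, n2, n3, c1, c2, ← mul_assoc, h1]

lemma FF_down (N : ℕ) (r : ℤ) (w : Equiv.Perm ℤ) (hw : OddP w) (z a : ℤ) (ha : 0 ≤ a)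
    (hz : w.symm r = w.symm z + 1) (h : w.symm z = a ∨ w.symm z = -a) : 
    FF N r w z a = G N w := by
  classical
  obtain ⟨h1, h2, h3⟩ := adj w hw z r a ha hz h
  unfold FF HH
  rcases lt_trichotomy z r with hlt | rfl | hlt
  · obtain ⟨c1, c2, c3⟩ := h2 hlt
    have : ¬ Cov r z w := fun hc => by have := hc.lt; omega
    simp only [this, c1, c2, c3, h1, false_and, true_and, if_true, if_false]; simp
  · omega
  · obtain ⟨c1, c2⟩ := h3 hlt
    have n1 : ¬ Cov z r w := fun hc => by have := hc.lt; omega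
    have n2 : ¬ Cov z r (w * tau a (a+1)) := fun hc => by have := hc.lt; omega
    have n3 : ¬ Cov r z w := fun hc => by have := hc.2.1; omega
    rw [tau_comm z r] at h1
    simp [n1, n2, n3, c1, c2, ← mul_assoc, h1]

theorem transition (N : ℕ) : ∀ (w : Equiv.Perm ℤ) (_ : OddP w) (n r : ℤ) (_ : FixP n w)
    (K : ℕ) (_ : n + |r| + 3 ≤ K) (_ : 0 ≤ n), ∑ z ∈ Finset.Icc (-K:ℤ) K, HH N r w z = 0 := by
  classical
  induction N with
  | zero =>
    intro w hw n r hn K hK hn0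
    apply Finset.sum_eq_zero
    have aux : ∀ p q, Cov p q w → G 0 (tau p q * w) = 0 := by
      intro p q hc
      rw [G, if_neg]
      intro h
      have : w = tau p q := by
        have := congrArg (tau p q * ·) h
        simpa [← mul_assoc, tau_mul_self] using this
      have h1 := hc.1; have h2 := hc.2.1
      rw [this] at h2
      simp only [tau_symm_apply, tauF] at h2
      split_ifs at h2 <;> omega
    intro z hz
    unfold HH
    have a1 := aux z r
    have a2 := aux r z
    split_ifs with c1 c2 c2
    · simp [a1 c1, a2 c2]
    · simp [a1 c1]
    · simp [a2 c2]
    · simp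
  | succ N ih =>
    intro w hw n r hn K hK hn0
    have hr := abs_le.1 (le_refl |r|)
    have e1 : ∀ z ∈ Finset.Icc (-K:ℤ) K, HH (N+1) r w z =
        ∑ a ∈ Finset.range (K+1), FF N r w z a + 
        ∑ a ∈ Finset.range (K+1), (if w ((a:ℤ)+1) < w a then HH N r (w * tau a (a+1)) z else 0) := by
      intro z hz
      rw [Finset.mem_Icc] at hz
      have f1 : FixP (K+1) (tau z r * w) := (hn.mono (by omega)).tau_mul (by omega) (by omega)
        (by omega) (by omega)
      have g1 := G_succ f1 N (K+1) (by push_cast; omega)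
      have g2 := g1
      rw [tau_comm] at g2
      unfold HH FF
      simp only [Finset.sum_sub_distrib]
      rw [g1, g2]
      by_cases c1 : Cov z r w <;> by_cases c2 : Cov r z w <;> simp [c1, c2, HH]
      · congr 1 <;> exact Finset.sum_congr rfl fun x _ => by split_ifs with h <;> simp [h]
      · exact Finset.sum_congr rfl fun x _ => by split_ifs with h <;> simp [h]
      · exact Finset.sum_congr rfl fun x _ => by split_ifs with h <;> simp [h]
    rw [Finset.sum_congr rfl e1, Finset.sum_add_distrib]
    have e2 : ∑ z ∈ Finset.Icc (-K:ℤ) K, ∑ a ∈ Finset.range (K+1),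
        (if w ((a:ℤ)+1) < w a then HH N r (w * tau a (a+1)) z else 0) = 0 := by
      rw [Finset.sum_comm]
      apply Finset.sum_eq_zero
      intro a ha
      split_ifs with hd
      · exact ih _ (hw.mul (oddP_tau _ _)) n r (hn.mul_s (by omega) (hn.desc hd)) K hK hn0
      · simp
    rw [e2, add_zero, ← Finset.sum_product']
    set k := w.symm r with hk
    have hkr : w k = r := by simp [hk]
    have bd : ∀ c, -(n+|r|+2) ≤ c → c ≤ n+|r|+2 → -(n+|r|+2) ≤ w c ∧ w c ≤ n+|r|+2 := by
      intro c h1 h2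
      have := (hn.mono (by omega) : FixP (n+|r|+2) w).le h2
      have h3 := (hn.mono (by omega) : FixP (n+|r|+3) w).le (x := 1 - c) (by omega)
      rw [hw] at h3
      omega
    have bk : -(n+|r|+1) ≤ k ∧ k ≤ n+|r|+1 := by
      have := (hn.mono (by omega) : FixP (n+|r|+1) w).symm_le (x := r) (by omega)
      have h3 := (hn.mono (by omega) : FixP (n+|r|+2) w).symm_le (x := 1 - r) (by omega)
      rw [hw.symm] at h3
      omega
    have sp : w.symm (w (k+1)) = k+1 := by simp
    have sm : w.symm (w (k-1)) = k-1 := by simp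
    have b1 := bd (k+1) (by omega) (by omega)
    have b2 := bd (k-1) (by omega) (by omega)
    rw [Finset.sum_eq_add (w (k+1), if 1 ≤ k then k.toNat else (-k).toNat)
      (w (k-1), if 1 ≤ k then (k-1).toNat else (1-k).toNat)]
    · simp only
      rw [FF_up _ _ _ hw, FF_down _ _ _ hw]
      · simp
      · omega
      · omega
      · rw [sm]; split_ifs <;> omega
      · omega
      · omega
      · split_ifs <;> omega
    · intro h
      have := congrArg Prod.fst h
      have := w.injective this
      omega
    · rintro ⟨z, a⟩ hza ⟨h1, h2⟩
      apply FF_zero _ _ _ hw _ _ (by simp)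
      intro hcon
      simp only [ne_eq, Prod.mk.injEq, not_and] at h1 h2
      dsimp only at hcon
      rcases hcon with ⟨c1, c2⟩ | ⟨c1, c2⟩ | ⟨c1, c2⟩ | ⟨c1, c2⟩
      · apply h2
        · rw [← symm_iff] at c1; rw [← c1]; congr 1; omega
        · split_ifs <;> omega
      · apply h1
        · rw [← symm_iff] at c1; rw [← c1]; congr 1; omega
        · split_ifs <;> omega
      · apply h2
        · rw [← symm_iff] at c1; rw [← c1]; congr 1; omega
        · split_ifs <;> omega
      · apply h1
        · rw [← symm_iff] at c1; rw [← c1]; congr 1; omega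
        · split_ifs <;> omega
    · intro h; exfalso; apply h
      simp only [Finset.mem_product, Finset.mem_Icc, Finset.mem_range]
      refine ⟨by omega, ?_⟩
      split_ifs <;> omega
    · intro h; exfalso; apply h
      simp only [Finset.mem_product, Finset.mem_Icc, Finset.mem_range]
      refine ⟨by omega, ?_⟩
      split_ifs <;> omega

structure Good (w : Equiv.Perm ℤ) (N : ℕ) (T : ℤ → ℤ → ℕ) : Prop where
  zero : ∀ p q, ¬ p < q → T p q = 0
  symm : ∀ p q, T p q = T (1-q) (1-p)
  pos : ∀ p q, p < q → 1 ≤ T p q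
  le : ∀ p q, T p q ≤ N + 1
  inv : ∀ p q, p < q → (T p q ≤ N ↔ w.symm q < w.symm p)
  inj : ∀ p q p' q', p < q → p' < q' → T p q ≤ N → T p q = T p' q' →
    (p' = p ∧ q' = q) ∨ (p' = 1 - q ∧ q' = 1 - p)
  surj : ∀ k, 1 ≤ k → k ≤ N → ∃ p q, p < q ∧ T p q = k
  btw : ∀ p q r, p < q → q < r → min (T p q) (T q r) ≤ T p r ∧ T p r ≤ max (T p q) (T q r)

lemma mono_eq_one {n : ℤ} {w : Equiv.Perm ℤ} (hn : FixP n w)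
    (hm : ∀ p q, p < q → w.symm p < w.symm q) : w = 1 := by
  have hm' : ∀ p q, p < q → w p < w q := by
    intro p q hpq
    by_contra hc
    have hne : w p ≠ w q := fun h => by have := w.injective h; omega
    have := hm (w q) (w p) (by omega)
    simp at this; omega
  have a1 : ∀ k : ℕ, w (n+1-k) ≤ n+1-k := by
    intro k
    induction k with
    | zero => simp [hn (n+1) (by omega)]
    | succ k ih => have := hm' (n+1-(k+1:ℕ)) (n+1-k) (by push_cast; omega); push_cast at *; omega
  have a2 : ∀ k : ℕ, w.symm (n+1-k) ≤ n+1-k := by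
    intro k
    induction k with
    | zero => simp [hn.symm_fix (x := n+1) (by omega)]
    | succ k ih => have := hm (n+1-(k+1:ℕ)) (n+1-k) (by push_cast; omega); push_cast at *; omega
  have b1 : ∀ x, w x ≤ x := by
    intro x
    by_cases h : n < x
    · rw [hn x h]
    · have := a1 (n+1-x).toNat
      have e : n + 1 - ((n+1-x).toNat : ℤ) = x := by omega
      rwa [e] at this
  have b2 : ∀ x, w.symm x ≤ x := by
    intro x
    by_cases h : n < x
    · rw [hn.symm_fix h]
    · have := a2 (n+1-x).toNat
      have e : n + 1 - ((n+1-x).toNat : ℤ) = x := by omega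
      rwa [e] at this
  ext x
  have := b2 (w x)
  simp at this
  have := b1 x
  simp; omega

def Spec (w : Equiv.Perm ℤ) (a p q : ℤ) : Prop :=
  (p = w (a+1) ∧ q = w a) ∨ (p = 1 - w a ∧ q = 1 - w (a+1))

open Classical in
noncomputable def upT (w : Equiv.Perm ℤ) (N : ℕ) (a : ℤ) (T : ℤ → ℤ → ℕ) : ℤ → ℤ → ℕ := fun p q =>
  if T p q = N + 1 then (if Spec w a p q then N+1 else N+2) else T p q

lemma ord_s (w : Equiv.Perm ℤ) (hw : OddP w) (a p q : ℤ) (hd : w (a+1) < w a)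
    (hpq : p < q) : (w * tau a (a+1)).symm q < (w * tau a (a+1)).symm p ↔
    (w.symm q < w.symm p ∧ ¬ Spec w a p q) := by
  simp only [symm_mul_apply, tau_symm_apply]
  have o1 : 1 - w a = w (1-a) := by rw [hw a]
  have o2 : 1 - w (a+1) = w (-a) := by rw [← hw]; congr 1; omega
  have es : Spec w a p q ↔ (w.symm q = a ∧ w.symm p = a+1) ∨ (w.symm q = -a ∧ w.symm p = 1-a) := by
    unfold Spec
    rw [o1, o2, ← symm_iff w q, ← symm_iff w q, ← symm_iff w p, ← symm_iff w p]
    tauto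
  rw [es]
  constructor
  · intro h
    rcases sord _ _ _ h with h1 | ⟨h1, h2⟩ | ⟨h1, h2⟩
    · refine ⟨h1, ?_⟩
      rintro (⟨h3, h4⟩ | ⟨h3, h4⟩) <;> rw [h3, h4] at h <;> unfold tauF at h <;>
      split_ifs at h <;> omega
    · rw [← symm_iff] at h1 h2; omega
    · rw [← symm_iff] at h1 h2; omega
  · rintro ⟨h1, h2⟩
    exact sord' _ _ _ h1 h2

lemma good_L1 {w : Equiv.Perm ℤ} (hw : OddP w) {N : ℕ} {T : ℤ → ℤ → ℕ} (h : Good w (N+1) T) :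
    ∃ a : ℕ, w ((a:ℤ)+1) < w a ∧ T (w ((a:ℤ)+1)) (w a) = N + 1 := by
  obtain ⟨p, q, hpq, hT⟩ := h.surj (N+1) (by omega) le_rfl
  have hin := (h.inv p q hpq).1 (by omega)
  have hadj : ∀ z, w.symm q < w.symm z → w.symm z < w.symm p → False := by
    intro z h1 h2
    have z1 : z ≠ q := by rintro rfl; omega
    have z2 : z ≠ p := by rintro rfl; omega
    rcases lt_or_gt_of_ne z2 with c | c
    · have i1 := (h.inv z q (by omega)).2 h1
      have i2 := (h.inv z p c)
      have b := h.btw z p q c hpq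
      have := h.inj p q z q hpq (by omega) (by omega) (by omega)
      omega
    · rcases lt_or_gt_of_ne z1 with c' | c'
      · have i1 := (h.inv p z c).2 h2
        have i2 := (h.inv z q c').2 h1
        have b := h.btw p z q c c'
        have := h.inj p q z q hpq (by omega) (by omega)
        have := h.inj p q p z hpq (by omega) (by omega)
        omega
      · have i1 := (h.inv p z (by omega)).2 h2
        have i2 := (h.inv q z c')
        have b := h.btw p q z hpq c'
        have := h.inj p q p z hpq (by omega) (by omega) (by omega)
        omega
  have hp : w.symm p = w.symm q + 1 := by
    by_contra hc
    apply hadj (w (w.symm q + 1)) <;> simp <;> omega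
  by_cases hc : 0 ≤ w.symm q
  · refine ⟨(w.symm q).toNat, ?_⟩
    have e1 : ((w.symm q).toNat : ℤ) = w.symm q := by omega
    rw [e1, ← hp]
    simp; exact ⟨hpq, hT⟩
  · refine ⟨(-w.symm q).toNat, ?_⟩
    have e1 : ((-w.symm q).toNat : ℤ) = 1 - w.symm p := by omega
    have e2 : 1 - w.symm p + 1 = 1 - w.symm q := by omega
    rw [e1, e2, hw, hw]
    simp; refine ⟨hpq, ?_⟩
    rw [← h.symm]; exact hT

lemma good_spec {w : Equiv.Perm ℤ} {N : ℕ} {T : ℤ → ℤ → ℕ} (h : Good w (N+1) T)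
    {a : ℤ} (hd : w (a+1) < w a) (hT : T (w (a+1)) (w a) = N+1) (p q : ℤ) :
    T p q = N+1 ↔ Spec w a p q := by
  constructor
  · intro h1
    have hpq : p < q := by
      by_contra hc; rw [h.zero p q hc] at h1; omega
    have := h.inj _ _ p q hd hpq (by omega) (by omega)
    unfold Spec; tauto
  · rintro (⟨rfl, rfl⟩ | ⟨rfl, rfl⟩)
    · exact hT
    · rw [← h.symm]; exact hT

lemma good_down {w : Equiv.Perm ℤ} (hw : OddP w) {N : ℕ} {T : ℤ → ℤ → ℕ} (h : Good w (N+1) T)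
    {a : ℤ} (hd : w (a+1) < w a) (hT : T (w (a+1)) (w a) = N+1) :
    Good (w * tau a (a+1)) N (fun p q => min (T p q) (N+1)) := by
  have hs := good_spec h hd hT
  constructor
  · intro p q hpq; simp [h.zero p q hpq]
  · intro p q; rw [h.symm p q]
  · intro p q hpq; have := h.pos p q hpq; omega
  · intro p q; omega
  · intro p q hpq
    rw [ord_s w hw a p q hd hpq, ← hs, ← h.inv p q hpq]; omega
  · intro p q p' q' h1 h2 h3 h4
    beta_reduce at h3 h4
    exact h.inj p q p' q' h1 h2 (by omega) (by omega)
  · intro k h1 h2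
    obtain ⟨p, q, h3, h4⟩ := h.surj k h1 (by omega)
    exact ⟨p, q, h3, by omega⟩
  · intro p q r h1 h2
    have := h.btw p q r h1 h2
    omega

lemma up_down {w : Equiv.Perm ℤ} {N : ℕ} {T : ℤ → ℤ → ℕ} (h : Good w (N+1) T)
    {a : ℤ} (hd : w (a+1) < w a) (hT : T (w (a+1)) (w a) = N+1) :
    upT w N a (fun p q => min (T p q) (N+1)) = T := by
  funext p q
  have hs := good_spec h hd hT p q
  have := h.le p q
  unfold upT
  by_cases c : Spec w a p q
  · have := hs.2 c
    simp [c, this]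
  · have : T p q ≠ N+1 := fun h => c (hs.1 h)
    simp only [c, if_false]; split_ifs <;> omega

lemma down_up (w : Equiv.Perm ℤ) {N : ℕ} {T : ℤ → ℤ → ℕ} (a : ℤ) (h : ∀ p q, T p q ≤ N+1) :
    (fun p q => min (upT w N a T p q) (N+1)) = T := by
  funext p q
  have := h p q
  unfold upT; split_ifs <;> omega

lemma spec_symm (w : Equiv.Perm ℤ) (a p q : ℤ) : Spec w a (1-q) (1-p) ↔ Spec w a p q := by
  unfold Spec; constructor <;> (rintro (⟨h1, h2⟩ | ⟨h1, h2⟩) <;> omega)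

lemma up_spec {w : Equiv.Perm ℤ} (hw : OddP w) {N : ℕ} {T : ℤ → ℤ → ℕ} {a : ℤ}
    (hd : w (a+1) < w a) (h : Good (w * tau a (a+1)) N T) {p q : ℤ} (hs : Spec w a p q) :
    p < q ∧ T p q = N+1 ∧ w.symm q < w.symm p := by
  have hpq : p < q := by rcases hs with h | h <;> omega
  have := h.inv p q hpq
  rw [ord_s w hw a p q hd hpq] at this
  have := h.le p q
  refine ⟨hpq, ?_, ?_⟩
  · by_contra hc; have : T p q ≤ N := by omega
    tauto
  · rcases hs with ⟨rfl, rfl⟩ | ⟨rfl, rfl⟩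
    · simp
    · rw [hw.symm, hw.symm]; simp

lemma good_up {w : Equiv.Perm ℤ} (hw : OddP w) {N : ℕ} {T : ℤ → ℤ → ℕ} {a : ℤ}
    (hd : w (a+1) < w a) (h : Good (w * tau a (a+1)) N T) : Good w (N+1) (upT w N a T) := by
  have hinv : ∀ p q, p < q → (upT w N a T p q ≤ N+1 ↔ w.symm q < w.symm p) := by
    intro p q hpq
    have h1 := h.inv p q hpq
    rw [ord_s w hw a p q hd hpq] at h1
    have h2 := h.le p q
    by_cases hs : Spec w a p q
    · have := up_spec hw hd h hs
      unfold upT; simp [this, hs]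
    · unfold upT; simp only [hs, if_false]
      simp only [hs, not_false_eq_true, and_true] at h1
      rw [← h1]; split_ifs <;> omega
  have hval : ∀ p q, (upT w N a T p q ≤ N → T p q = upT w N a T p q) ∧
      (upT w N a T p q = N+1 → Spec w a p q) ∧ T p q ≤ upT w N a T p q ∧
      (upT w N a T p q = N+1 → T p q = N+1) ∧ (T p q ≤ N → upT w N a T p q ≤ N) := by
    intro p q
    unfold upT; split_ifs with h1 h2
    · exact ⟨by omega, fun _ => h2, by omega, by omega, by omega⟩
    · exact ⟨by omega, by omega, by omega, by omega, by omega⟩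
    · exact ⟨by omega, by omega, by omega, by omega, by omega⟩
  constructor
  · intro p q hpq; unfold upT; simp [h.zero p q hpq]
  · intro p q; unfold upT; rw [← h.symm p q]; have := spec_symm w a p q
    by_cases c : Spec w a p q <;> simp [c, this]
  · intro p q hpq; have := h.pos p q hpq; have := hval p q; omega
  · intro p q; have := h.le p q; unfold upT; split_ifs <;> omega
  · exact hinv
  · intro p q p' q' h1 h2 h3 h4
    by_cases hc : upT w N a T p q ≤ N
    · have e1 := (hval p q).1 hc
      have e2 := (hval p' q').1 (by omega)
      exact h.inj p q p' q' h1 h2 (by omega) (by omega)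
    · have e1 := (hval p q).2.1 (by omega)
      have e2 := (hval p' q').2.1 (by omega)
      unfold Spec at e1 e2; omega
  · intro k h1 h2
    by_cases hk : k ≤ N
    · obtain ⟨p, q, h3, h4⟩ := h.surj k h1 hk
      exact ⟨p, q, h3, by unfold upT; rw [if_neg (by omega), h4]⟩
    · have hs : Spec w a (w (a+1)) (w a) := Or.inl ⟨rfl, rfl⟩
      have := up_spec hw hd h hs
      refine ⟨_, _, this.1, ?_⟩
      unfold upT; simp [this, hs]; omega
  · intro p q r h1 h2
    have b := h.btw p q r h1 h2
    have i1 := hinv p q h1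
    have i2 := hinv q r h2
    have i3 := hinv p r (by omega)
    obtain ⟨v1, -, v2, v3, v4⟩ := hval p q
    obtain ⟨v1', -, v2', v3', v4'⟩ := hval q r
    obtain ⟨v1'', -, v2'', v3'', v4''⟩ := hval p r
    have t1 := h.le p q
    have t2 := h.le q r
    have t3 := h.le p r
    have u : ∀ p q, upT w N a T p q ≤ N+2 := by
      intro p q; have := h.le p q; unfold upT; split_ifs <;> omega
    have u1 := u p q
    have u2 := u q r
    have u3 := u p r
    generalize upT w N a T p q = A at *
    generalize upT w N a T q r = B at *
    generalize upT w N a T p r = C at *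
    clear u hval hinv
    by_cases cA : A ≤ N+1 <;> by_cases cB : B ≤ N+1 <;> by_cases cC : C ≤ N+1 <;> omega

theorem good_card (N : ℕ) : ∀ (w : Equiv.Perm ℤ) (_ : OddP w) (n : ℕ) (_ : FixP n w),
    Finite {T // Good w N T} ∧ Nat.card {T // Good w N T} = G N w := by
  classical
  induction N with
  | zero =>
    intro w hw n hn
    have hT : ∀ T, Good w 0 T → T = fun p q => if p < q then 1 else 0 := by
      intro T h
      funext p q
      split_ifs with hpq
      · have := h.pos p q hpq; have := h.le p q; omega
      · exact h.zero p q hpq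
    have hw1 : ∀ T, Good w 0 T → w = 1 := by
      intro T h
      apply mono_eq_one hn
      intro p q hpq
      have h1 := h.inv p q hpq
      have := h.pos p q hpq
      have : w.symm p ≠ w.symm q := fun h => by have := w.symm.injective h; omega
      omega
    have hsub : Subsingleton {T // Good w 0 T} :=
      ⟨fun ⟨T, h⟩ ⟨T', h'⟩ => Subtype.ext ((hT T h).trans (hT T' h').symm)⟩
    refine ⟨inferInstance, ?_⟩
    rw [G]
    split_ifs with h1
    · subst h1
      have : Good 1 0 (fun p q => if p < q then 1 else 0) := by
        constructor
        · intro p q h; simp only [h, if_false]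
        · intro p q; congr 1; simp
        · intro p q h; simp only [h, if_true]; omega
        · intro p q; split_ifs <;> omega
        · intro p q h; simp only [h, if_true]
          have : (Equiv.symm (1 : Equiv.Perm ℤ)) = 1 := rfl
          rw [this]; simp; omega
        · intro p q p' q' h h'; simp only [h, if_true]; omega
        · intro k; omega
        · intro p q r h1 h2; simp [h1, h2, h1.trans h2]
      rw [Nat.card_eq_one_iff_unique]
      exact ⟨hsub, ⟨⟨_, this⟩⟩⟩
    · have : IsEmpty {T // Good w 0 T} := ⟨fun ⟨T, h⟩ => h1 (hw1 T h)⟩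
      simp
  | succ N ih =>
    intro w hw n hn
    let S := (Finset.range n).filter (fun a : ℕ => w ((a:ℤ)+1) < w a)
    have hS : ∀ a : S, w ((a:ℤ)+1) < w (a:ℕ) := fun a => (Finset.mem_filter.1 a.2).2
    have hfix : ∀ a : S, FixP n (w * tau (a:ℕ) ((a:ℕ)+1)) := fun a =>
      hn.mul_s (by omega) (hn.desc (hS a))
    have hI := fun a : S => ih (w * tau (a:ℕ) ((a:ℕ)+1)) (hw.mul (oddP_tau _ _)) n (hfix a)
    let f : (Σ a : S, {T // Good (w * tau (a:ℕ) ((a:ℕ)+1)) N T}) → {T // Good w (N+1) T} :=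
      fun x => ⟨upT w N (x.1:ℕ) x.2.1, good_up hw (hS x.1) x.2.2⟩
    have hf : Function.Bijective f := by
      constructor
      · rintro ⟨a, T, hT⟩ ⟨b, T', hT'⟩ hab
        have e : upT w N (a:ℕ) T = upT w N (b:ℕ) T' := congrArg Subtype.val hab
        have sa : Spec w (a:ℕ) (w ((a:ℤ)+1)) (w (a:ℕ)) := Or.inl ⟨rfl, rfl⟩
        have ua := up_spec hw (hS a) hT sa
        have va : upT w N (a:ℕ) T (w ((a:ℤ)+1)) (w (a:ℕ)) = N+1 := by
          unfold upT; simp [ua, sa]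
        have sb : Spec w (b:ℕ) (w ((b:ℤ)+1)) (w (b:ℕ)) := Or.inl ⟨rfl, rfl⟩
        have ub := up_spec hw (hS b) hT' sb
        have vb : upT w N (b:ℕ) T' (w ((b:ℤ)+1)) (w (b:ℕ)) = N+1 := by
          unfold upT; simp [ub, sb]
        rw [← e] at vb
        have := (good_up hw (hS a) hT).inj _ _ _ _ ua.1 ub.1 (by omega) (va.trans vb.symm)
        have hab : a = b := by
          apply Subtype.ext
          rcases this with ⟨h1, -⟩ | ⟨h1, -⟩
          · have := w.injective h1; omega
          · rw [← hw] at h1; have := w.injective h1; omega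
        subst hab
        have : T = T' := by
          rw [← down_up w (a:ℕ) hT.le, ← down_up w (a:ℕ) hT'.le, e]
        subst this; rfl
      · rintro ⟨T, hT⟩
        obtain ⟨a, hd, hv⟩ := good_L1 hw hT
        have ha : a ∈ S := Finset.mem_filter.2 ⟨Finset.mem_range.2 (by have := hn.desc hd; omega), hd⟩
        exact ⟨⟨⟨a, ha⟩, ⟨_, good_down hw hT hd hv⟩⟩, Subtype.ext (up_down hT hd hv)⟩
    have hfin : ∀ a : S, Finite {T // Good (w * tau (a:ℕ) ((a:ℕ)+1)) N T} := fun a => (hI a).1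
    refine ⟨Finite.of_surjective f hf.2, ?_⟩
    rw [← Nat.card_congr (Equiv.ofBijective f hf), Nat.card_sigma, G_succ hn N n le_rfl]
    simp_rw [fun a => (hI a).2]
    rw [← Finset.sum_filter]
    exact Finset.sum_coe_sort S (fun a : ℕ => G N (w * tau (a:ℤ) ((a:ℤ)+1)))

structure Term (d : ℕ) (lam : ℕ → ℕ) (w : Equiv.Perm ℤ) : Prop where
  odd : OddP w
  mono : ∀ x y, 0 < x → x < y → w.symm x < w.symm y
  neg : ∀ c : ℕ, 1 ≤ c → (w c ≤ 0 ↔ ∃ i, 1 ≤ i ∧ i ≤ d ∧ lam i = c)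
  str : ∀ i k, 1 ≤ i → i < k → k ≤ d → 0 < lam k → lam k < lam i

def lamR (lam : ℕ → ℕ) (a : ℕ) : ℕ → ℕ := fun i => if lam i = a + 1 then a else lam i

lemma Term.gap {d : ℕ} {lam : ℕ → ℕ} {w : Equiv.Perm ℤ} (h : Term d lam w) (i : ℕ) (hi : 1 ≤ i)
    (k m : ℕ) (hk : k = i + m) (hkd : k ≤ d) (h0 : 0 < lam k) : lam k + m ≤ lam i := by
  induction m generalizing k with
  | zero => subst hk; simp
  | succ m ih =>
    have h1 := h.str (i+m) k (by omega) (by omega) hkd h0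
    have := ih (i+m) rfl (by omega) (by omega)
    omega

lemma Term.desc_iff {d : ℕ} {lam : ℕ → ℕ} {w : Equiv.Perm ℤ} (h : Term d lam w) (a : ℕ) :
    w ((a:ℤ)+1) < w a ↔ (w ((a:ℤ)+1) ≤ 0 ∧ 0 < w a) := by
  constructor
  · intro hd
    have o1 := h.odd a
    have o2 : w (-a) = 1 - w ((a:ℤ)+1) := by rw [← h.odd]; congr 1; omega
    have h0 : a = 0 → w ((a:ℤ)+1) = 1 - w a := by rintro rfl; rw [← h.odd]; rfl
    by_cases c1 : w ((a:ℤ)+1) ≤ 0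
    · refine ⟨c1, ?_⟩
      by_contra c2
      by_cases ha : a = 0
      · have := h0 ha; omega
      · have := h.mono (1 - w a) (1 - w ((a:ℤ)+1)) (by omega) (by omega)
        rw [← o1, ← o2] at this; simp at this; omega
    · exfalso
      have := h.mono _ _ (by omega) hd
      simp at this
  · rintro ⟨h1, h2⟩; omega

lemma Term.row {d : ℕ} {lam : ℕ → ℕ} {w : Equiv.Perm ℤ} (h : Term d lam w) {a : ℕ}
    (hd : w ((a:ℤ)+1) < w a) : ∃ i, 1 ≤ i ∧ i ≤ d ∧ lam i = a + 1 := by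
  have := (h.neg (a+1) (by omega)).1 (by push_cast; exact ((h.desc_iff a).1 hd).1)
  exact this

lemma Term.uniq {d : ℕ} {lam : ℕ → ℕ} {w : Equiv.Perm ℤ} (h : Term d lam w) {a i k : ℕ}
    (hi : 1 ≤ i) (hi' : i ≤ d) (hk : 1 ≤ k) (hk' : k ≤ d) (h1 : lam i = a+1) (h2 : lam k = a+1) :
    i = k := by
  rcases lt_trichotomy i k with c | c | c
  · have := h.str i k hi c hk' (by omega); omega
  · exact c
  · have := h.str k i hk c hi' (by omega); omega

lemma Term.noA {d : ℕ} {lam : ℕ → ℕ} {w : Equiv.Perm ℤ} (h : Term d lam w) {a : ℕ}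
    (hd : w ((a:ℤ)+1) < w a) (k : ℕ) (hk : 1 ≤ k) (hkd : k ≤ d) (h0 : 0 < lam k) : lam k ≠ a := by
  intro he
  have := (h.neg a (by omega)).2 ⟨k, hk, hkd, he⟩
  have := ((h.desc_iff a).1 hd).2
  omega

lemma Term.step {d : ℕ} {lam : ℕ → ℕ} {w : Equiv.Perm ℤ} (h : Term d lam w) {a : ℕ}
    (hd : w ((a:ℤ)+1) < w a) : Term d (lamR lam a) (w * tau a (a+1)) := by
  have hd' := (h.desc_iff a).1 hd
  obtain ⟨i0, hi1, hi2, hi3⟩ := h.row hd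
  refine ⟨h.odd.mul (oddP_tau _ _), ?_, ?_, ?_⟩
  · intro x y hx hxy
    have h1 := h.mono x y hx hxy
    have h2 := (ord_s w h.odd a x y hd hxy).1
    have : (w * tau a (a+1)).symm x ≠ (w * tau a (a+1)).symm y := fun h => by
      have := (w * tau a (a+1)).symm.injective h; omega
    by_contra hc
    have := (h2 (by omega)).1
    omega
  · intro c hc
    rw [Equiv.Perm.mul_apply]
    by_cases c1 : c = a + 1
    · have e : tau a (a+1) (c:ℤ) = a := by
        simp only [tau_apply, tauF]; split_ifs <;> omega
      rw [e]
      refine iff_of_false (by omega) ?_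
      rintro ⟨i, h1, h2, h3⟩
      unfold lamR at h3; split_ifs at h3 <;> omega
    · by_cases c2 : c = a
      · have e : tau a (a+1) (c:ℤ) = a + 1 := by
          simp only [tau_apply, tauF]; split_ifs <;> omega
        rw [e]
        refine iff_of_true (by omega) ⟨i0, hi1, hi2, ?_⟩
        unfold lamR; simp [hi3, c2]
      · have e : tau a (a+1) (c:ℤ) = c := by
          simp only [tau_apply, tauF]; split_ifs <;> omega
        rw [e, h.neg c hc]
        refine exists_congr fun i => and_congr_right fun _ => and_congr_right fun _ => ?_
        unfold lamR; split_ifs <;> omega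
  · intro i k h1 h2 h3 h4
    have s1 := h.str i k h1 h2 h3
    have s2 := h.noA hd k (by omega) h3
    unfold lamR at *
    split_ifs at * <;> omega

lemma Term.size {d : ℕ} {lam : ℕ → ℕ} {w : Equiv.Perm ℤ} (h : Term d lam w) {a : ℕ}
    (hd : w ((a:ℤ)+1) < w a) : sizeP d lam = sizeP d (lamR lam a) + 1 := by
  obtain ⟨i0, hi1, hi2, hi3⟩ := h.row hd
  unfold sizeP
  have : ∀ i ∈ Finset.Icc 1 d, lam i = lamR lam a i + if i = i0 then 1 else 0 := by
    intro i hi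
    rw [Finset.mem_Icc] at hi
    unfold lamR
    by_cases c : lam i = a + 1
    · have := h.uniq hi.1 hi.2 hi1 hi2 c hi3
      simp [this, hi3]
    · have : i ≠ i0 := by rintro rfl; exact c hi3
      simp [this, c]
  rw [Finset.sum_congr rfl this, Finset.sum_add_distrib]
  simp [hi1, hi2]

lemma Term.diag {d : ℕ} {lam : ℕ → ℕ} {w : Equiv.Perm ℤ} (h : Term d lam w) {a i0 : ℕ}
    (hi1 : 1 ≤ i0) (hi2 : i0 ≤ d) (hi3 : lam i0 = a+1) (p : ℤ × ℤ) :
    p ∈ Diagram d lam ↔ (p ∈ Diagram d (lamR lam a) ∨ p = ((i0:ℤ), (a:ℤ) + i0 - d)) := by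
  obtain ⟨x, y⟩ := p
  simp only [Diagram, Set.mem_ofPred_eq, Prod.mk.injEq]
  by_cases c : 1 ≤ x ∧ x ≤ d
  · have hu : lam x.toNat = a + 1 → i0 = x.toNat := fun hx =>
      h.uniq hi1 hi2 (by omega) (by omega) hi3 hx
    have hu' : x = i0 → lam x.toNat = a + 1 := by rintro rfl; simpa using hi3
    unfold lamR
    split_ifs with c2
    · have := hu c2; omega
    · omega
  · omega

lemma Term.box_not {d : ℕ} {lam : ℕ → ℕ} {a i0 : ℕ}
    (hi3 : lam i0 = a+1) : ((i0:ℤ), (a:ℤ) + i0 - d) ∉ Diagram d (lamR lam a) := by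
  simp only [Diagram, Set.mem_ofPred_eq, lamR]
  simp [hi3]

/-- adding the box -/
lemma Term.addB {d : ℕ} {lam : ℕ → ℕ} {w : Equiv.Perm ℤ} (h : Term d lam w) {a i0 : ℕ}
    (hd : w ((a:ℤ)+1) < w a)
    (hi1 : 1 ≤ i0) (hi2 : i0 ≤ d) (hi3 : lam i0 = a+1) {B : ℤ × ℤ → ℕ}
    (hB : IsSYT d (lamR lam a) B) :
    IsSYT d lam (Function.update B ((i0:ℤ), (a:ℤ) + i0 - d) (sizeP d lam)) := by
  have hdg := h.diag hi1 hi2 hi3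
  have hbn := Term.box_not (d := d) hi3
  have hsz := h.size hd
  set b : ℤ × ℤ := ((i0:ℤ), (a:ℤ) + i0 - d) with hb
  obtain ⟨⟨⟨m, inj, sj⟩, hz⟩, hinc⟩ := hB
  have hv : ∀ p, p ≠ b → Function.update B b (sizeP d lam) p = B p := fun p hp =>
    Function.update_of_ne hp _ _
  have hvb : Function.update B b (sizeP d lam) b = sizeP d lam := Function.update_self ..
  have hne : ∀ p ∈ Diagram d (lamR lam a), p ≠ b := by rintro p hp rfl; exact hbn hp
  have hle : ∀ p ∈ Diagram d (lamR lam a), 1 ≤ B p ∧ B p < sizeP d lam := by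
    intro p hp; have := m hp; rw [Set.mem_Icc] at this; omega
  refine ⟨⟨⟨?_, ?_, ?_⟩, ?_⟩, ?_⟩
  · intro p hp
    rcases (hdg p).1 hp with h1 | h1
    · rw [hv p (hne p h1)]; have := hle p h1; rw [Set.mem_Icc]; omega
    · subst h1; rw [hvb, Set.mem_Icc]; omega
  · intro p hp q hq he
    rcases (hdg p).1 hp with h1 | h1 <;> rcases (hdg q).1 hq with h2 | h2
    · rw [hv p (hne p h1), hv q (hne q h2)] at he; exact inj h1 h2 he
    · subst h2; rw [hv p (hne p h1), hvb] at he; have := hle p h1; omega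
    · subst h1; rw [hv q (hne q h2), hvb] at he; have := hle q h2; omega
    · rw [h1, h2]
  · intro k hk
    rw [Set.mem_Icc] at hk
    by_cases c : k = sizeP d lam
    · exact ⟨b, (hdg b).2 (Or.inr rfl), by rw [hvb, c]⟩
    · obtain ⟨p, hp, he⟩ := sj (Set.mem_Icc.2 ⟨hk.1, by omega⟩ : k ∈ _)
      exact ⟨p, (hdg p).2 (Or.inl hp), by rw [hv p (hne p hp), he]⟩
  · intro p hp
    have := mt (hdg p).2 hp
    push Not at this
    rw [hv p this.2, hz p this.1]
  · intro p hp q hq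
    rcases (hdg p).1 hp with h1 | h1 <;> rcases (hdg q).1 hq with h2 | h2
    · rw [hv p (hne p h1), hv q (hne q h2)]; exact hinc p h1 q h2
    · subst h2; rw [hv p (hne p h1), hvb]; have := hle p h1; constructor <;> (intro; omega)
    · obtain ⟨x, y⟩ := q
      simp only [Diagram, Set.mem_ofPred_eq] at hq
      have hrow : x = i0 → lam x.toNat = a + 1 := by rintro rfl; simpa using hi3
      subst h1
      constructor
      · rintro ⟨h3, h4⟩
        simp only [hb] at h3 h4
        have := hrow h3.symm
        omega
      · rintro ⟨h3, h4⟩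
        exfalso
        simp only [hb] at h3 h4
        have g1 := h.gap (i0+1) (by omega) x.toNat (x.toNat - (i0+1)) (by omega) (by omega) (by omega)
        have g2 := h.str i0 (i0+1) hi1 (by omega) (by omega) (by omega)
        exact h.noA hd (i0+1) (by omega) (by omega) (by omega) (by omega)
    · rw [h1, h2]; constructor <;> (rintro ⟨_, h⟩; omega)

lemma Term.remB {d : ℕ} {lam : ℕ → ℕ} {w : Equiv.Perm ℤ} (h : Term d lam w) {a i0 : ℕ}
    (hd : w ((a:ℤ)+1) < w a)
    (hi1 : 1 ≤ i0) (hi2 : i0 ≤ d) (hi3 : lam i0 = a+1) {B : ℤ × ℤ → ℕ}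
    (hB : IsSYT d lam B) (hBb : B ((i0:ℤ), (a:ℤ) + i0 - d) = sizeP d lam) :
    IsSYT d (lamR lam a) (Function.update B ((i0:ℤ), (a:ℤ) + i0 - d) 0) := by
  have hdg := h.diag hi1 hi2 hi3
  have hbn := Term.box_not (d := d) hi3
  have hsz := h.size hd
  set b : ℤ × ℤ := ((i0:ℤ), (a:ℤ) + i0 - d) with hb
  obtain ⟨⟨⟨m, inj, sj⟩, hz⟩, hinc⟩ := hB
  have hv : ∀ p, p ≠ b → Function.update B b 0 p = B p := fun p hp =>
    Function.update_of_ne hp _ _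
  have hvb : Function.update B b 0 b = 0 := Function.update_self ..
  have hne : ∀ p ∈ Diagram d (lamR lam a), p ≠ b := by rintro p hp rfl; exact hbn hp
  have hin : ∀ p ∈ Diagram d (lamR lam a), p ∈ Diagram d lam := fun p hp => (hdg p).2 (Or.inl hp)
  refine ⟨⟨⟨?_, ?_, ?_⟩, ?_⟩, ?_⟩
  · intro p hp
    rw [hv p (hne p hp)]
    have h1 := m (hin p hp)
    have h2 : B p ≠ B b := fun he => hne p hp (inj (hin p hp) ((hdg b).2 (Or.inr rfl)) he)
    rw [Set.mem_Icc] at *; omega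
  · intro p hp q hq he
    rw [hv p (hne p hp), hv q (hne q hq)] at he
    exact inj (hin p hp) (hin q hq) he
  · intro k hk
    rw [Set.mem_Icc] at hk
    obtain ⟨p, hp, he⟩ := sj (Set.mem_Icc.2 ⟨hk.1, by omega⟩ : k ∈ _)
    have hpb : p ≠ b := by rintro rfl; omega
    refine ⟨p, ?_, by rw [hv p hpb, he]⟩
    rcases (hdg p).1 hp with h1 | h1
    · exact h1
    · exact absurd h1 hpb
  · intro p hp
    by_cases c : p = b
    · rw [c, hvb]
    · rw [hv p c, hz p]
      intro h1
      rcases (hdg p).1 h1 with h1 | h1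
      · exact hp h1
      · exact c h1
  · intro p hp q hq
    rw [hv p (hne p hp), hv q (hne q hq)]
    exact hinc p (hin p hp) q (hin q hq)

lemma Term.findB {d : ℕ} {lam : ℕ → ℕ} {w : Equiv.Perm ℤ} (h : Term d lam w) 
    {B : ℤ × ℤ → ℕ} (hB : IsSYT d lam B) (h0 : 0 < sizeP d lam) : ∃ a i0 : ℕ,
    w ((a:ℤ)+1) < w a ∧ 1 ≤ i0 ∧ i0 ≤ d ∧ lam i0 = a + 1 ∧
     B ((i0:ℤ), (a:ℤ) + i0 - d) = sizeP d lam := by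
  obtain ⟨⟨⟨m, inj, sj⟩, hz⟩, hinc⟩ := hB
  obtain ⟨⟨x, y⟩, hb, hv⟩ := sj (Set.mem_Icc.2 ⟨h0, le_rfl⟩ : sizeP d lam ∈ _)
  have hmax : ∀ q ∈ Diagram d lam, B q ≤ sizeP d lam := fun q hq => (Set.mem_Icc.1 (m hq)).2
  have hb' := hb
  simp only [Diagram, Set.mem_ofPred_eq] at hb'
  obtain ⟨b1, b2, b3, b4⟩ := hb'
  obtain ⟨i, rfl⟩ : ∃ i : ℕ, x = i := ⟨x.toNat, by omega⟩
  simp only [Int.toNat_natCast] at b4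
  have hend : y + d + 1 = (lam i : ℤ) + i := by
    by_contra hc
    have hq : ((i:ℤ), y+1) ∈ Diagram d lam := by
      simp only [Diagram, Set.mem_ofPred_eq, Int.toNat_natCast]; omega
    have h1 := (hinc _ hb _ hq).1 ⟨rfl, by simp⟩
    have := hmax _ hq
    omega
  have hl : lam i = (lam i - 1) + 1 := by omega
  refine ⟨lam i - 1, i, ?_, by omega, by omega, hl, ?_⟩
  · rw [h.desc_iff]
    have h1 := (h.neg (lam i) (by omega)).2 ⟨i, by omega, by omega, rfl⟩
    have e1 : (((lam i - 1 : ℕ) : ℤ) + 1) = lam i := by omega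
    rw [e1]
    refine ⟨h1, ?_⟩
    by_contra hc
    by_cases c0 : lam i = 1
    · have := h.odd 1
      simp [c0] at h1 hc this
      omega
    · obtain ⟨k, k1, k2, k3⟩ := (h.neg (lam i - 1) (by omega)).1 (by omega)
      have hk : k = i + 1 := by
        rcases lt_trichotomy i k with c | c | c
        · have := h.gap i (by omega) k (k - i) (by omega) k2 (by omega); omega
        · subst c; omega
        · have := h.str k i k1 c (by omega) (by omega); omega
      subst hk
      have hq : (((i+1:ℕ):ℤ), y) ∈ Diagram d lam := by
        simp only [Diagram, Set.mem_ofPred_eq, Int.toNat_natCast]; push_cast; omega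
      have h1 := (hinc _ hb _ hq).2 ⟨rfl, by simp⟩
      have := hmax _ hq
      omega
  · rw [← hv]; congr 2; omega

theorem syt_card (d : ℕ) (N : ℕ) : ∀ (lam : ℕ → ℕ) (w : Equiv.Perm ℤ) (_ : Term d lam w)
    (n : ℕ) (_ : FixP n w) (_ : sizeP d lam = N),
    Finite {B // IsSYT d lam B} ∧ Nat.card {B // IsSYT d lam B} = G N w := by
  classical
  induction N with
  | zero =>
    intro lam w h n hn h0
    have hl : ∀ i, 1 ≤ i → i ≤ d → lam i = 0 := by
      intro i h1 h2
      unfold sizeP at h0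
      rw [Finset.sum_eq_zero_iff] at h0
      exact h0 i (Finset.mem_Icc.2 ⟨h1, h2⟩)
    have hD : Diagram d lam = ∅ := by
      ext ⟨x, y⟩
      simp only [Diagram, Set.mem_ofPred_eq, Set.mem_empty_iff_false, iff_false]
      rintro ⟨h1, h2, h3, h4⟩
      rw [hl _ (by omega) (by omega)] at h4
      omega
    have hB : ∀ B, IsSYT d lam B ↔ B = fun _ => 0 := by
      intro B
      unfold IsSYT IsFilling
      rw [hD, h0]
      simp only [Set.mem_empty_iff_false]
      constructor
      · rintro ⟨⟨_, h2⟩, _⟩; funext p; exact h2 p (by simp)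
      · rintro rfl; simp
    have hpos : ∀ c : ℤ, 1 ≤ c → 0 < w c := by
      intro c hc
      by_contra hcon
      obtain ⟨k, rfl⟩ : ∃ k : ℕ, c = k := ⟨c.toNat, by omega⟩
      obtain ⟨i, h1, h2, h3⟩ := (h.neg k (by omega)).1 (by omega)
      have := hl i h1 h2
      omega
    have hpos' : ∀ y : ℤ, 1 ≤ y → 0 < w.symm y := by
      intro y hy
      by_contra hcon
      have := hpos (1 - w.symm y) (by omega)
      rw [h.odd] at this
      simp at this; omega
    have hw1 : w = 1 := by
      apply mono_eq_one hn
      intro p q hpq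
      by_cases c : 0 < p
      · exact h.mono p q c hpq
      · have o1 := h.odd.symm p
        have o2 := h.odd.symm q
        have := hpos' (1-p) (by omega)
        by_cases c' : 0 < q
        · have := hpos' q c'
          omega
        · have := h.mono (1-q) (1-p) (by omega) (by omega); omega
    have e : {B // IsSYT d lam B} = {B // B = fun _ : ℤ × ℤ => 0} := by simp_rw [hB]
    rw [e]
    refine ⟨inferInstance, ?_⟩
    rw [G, if_pos hw1]
    simp
  | succ N ih =>
    intro lam w h n hn h0
    let S := (Finset.range n).filter (fun a : ℕ => w ((a:ℤ)+1) < w a)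
    have hS : ∀ a : S, w ((a:ℤ)+1) < w (a:ℕ) := fun a => (Finset.mem_filter.1 a.2).2
    choose r hr1 hr2 hr3 using fun a : S => h.row (hS a)
    have hI := fun a : S => ih (lamR lam a) (w * tau (a:ℕ) ((a:ℕ)+1)) (h.step (hS a)) n 
      (hn.mul_s (by omega) (hn.desc (hS a))) (by have := h.size (hS a); omega)
    let bx : S → ℤ × ℤ := fun a => ((r a:ℤ), ((a:ℕ):ℤ) + r a - d)
    let f : (Σ a : S, {B // IsSYT d (lamR lam a) B}) → {B // IsSYT d lam B} :=
      fun x => ⟨Function.update x.2.1 (bx x.1) (sizeP d lam),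
        h.addB (hS x.1) (hr1 x.1) (hr2 x.1) (hr3 x.1) x.2.2⟩
    have hbx : ∀ a, bx a ∈ Diagram d lam := fun a =>
      (h.diag (hr1 a) (hr2 a) (hr3 a) _).2 (Or.inr rfl)
    have hbn : ∀ (a : S) B, IsSYT d (lamR lam a) B → B (bx a) = 0 := fun a B hB =>
      hB.1.2 _ (Term.box_not (hr3 a))
    have hf : Function.Bijective f := by
      constructor
      · rintro ⟨a, T, hT⟩ ⟨b, T', hT'⟩ hab
        have e : Function.update T (bx a) (sizeP d lam) = Function.update T' (bx b) (sizeP d lam) :=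
          congrArg Subtype.val hab
        have hA := (f ⟨a, T, hT⟩).2
        have va : (f ⟨a, T, hT⟩).1 (bx a) = sizeP d lam := Function.update_self ..
        have vb : (f ⟨a, T, hT⟩).1 (bx b) = sizeP d lam := by
          rw [hab]; exact Function.update_self ..
        have hbb : bx a = bx b := hA.1.1.2.1 (hbx a) (hbx b) (va.trans vb.symm)
        have h1 : r a = r b := by have := congrArg Prod.fst hbb; simpa [bx] using this
        have hab : a = b := by
          apply Subtype.ext
          have := hr3 a; have := hr3 b; rw [h1] at *; omega
        subst hab
        have : T = T' := by
          funext p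
          by_cases c : p = bx a
          · rw [c, hbn a T hT, hbn a T' hT']
          · have := congrFun e p
            rwa [Function.update_of_ne c, Function.update_of_ne c] at this
        subst this; rfl
      · rintro ⟨B, hB⟩
        obtain ⟨a, i0, hd, h1, h2, h3, h4⟩ := h.findB hB (by omega)
        have ha : a ∈ S := Finset.mem_filter.2 ⟨Finset.mem_range.2 (by have := hn.desc hd; omega), hd⟩
        have hrr : r ⟨a, ha⟩ = i0 := h.uniq (hr1 _) (hr2 _) h1 h2 (hr3 ⟨a, ha⟩) h3
        have hb : bx ⟨a, ha⟩ = ((i0:ℤ), (a:ℤ) + i0 - d) := by simp [bx, hrr]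
        refine ⟨⟨⟨a, ha⟩, ⟨_, h.remB hd h1 h2 h3 hB h4⟩⟩, Subtype.ext ?_⟩
        simp only [f, hb]
        rw [Function.update_idem, ← h4, Function.update_eq_self]
    have hfin : ∀ a : S, Finite {B // IsSYT d (lamR lam a) B} := fun a => (hI a).1
    refine ⟨Finite.of_surjective f hf.2, ?_⟩
    rw [← Nat.card_congr (Equiv.ofBijective f hf), Nat.card_sigma, G_succ hn N n le_rfl]
    simp_rw [fun a => (hI a).2]
    rw [← Finset.sum_filter]
    exact Finset.sum_coe_sort S (fun a : ℕ => G N (w * tau (a:ℤ) ((a:ℤ)+1)))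

noncomputable def Ect (w : Equiv.Perm ℤ) (k : ℤ) : ℕ :=
  ((Finset.Ioc (w.symm k) 0).filter (fun c => w c < k)).card

structure St (d : ℕ) (e : ℤ → ℕ) (r : ℤ) (w : Equiv.Perm ℤ) : Prop where
  odd : OddP w
  fix : ∃ n : ℕ, FixP n w
  rd : r ≤ d
  neg : ∀ k : ℤ, 1 ≤ k → k ≤ d → w.symm k ≤ 0
  pos : ∀ k : ℤ, (d:ℤ) < k → 0 < w.symm k
  S : ∀ x y, r < x → x < y → w.symm x < w.symm y
  I : ∀ k : ℤ, 1 ≤ k → k ≤ r → ∀ z z', z < k → z' < k → w.symm z' < w.symm z →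
    w.symm z < w.symm k → z' < z
  E : ∃ σ : Equiv.Perm ℤ, (∀ k, (1 ≤ σ k ∧ σ k ≤ d) ↔ (1 ≤ k ∧ k ≤ d)) ∧
    ∀ k : ℤ, 1 ≤ k → k ≤ d → Ect w k = e (σ k)

set_option maxHeartbeats 3000000 in
lemma St.step {d : ℕ} {e : ℤ → ℕ} {r : ℤ} {w : Equiv.Perm ℤ} (h : St d e r w) (N : ℕ)
    (q : ℤ) (hr : 1 ≤ r) (hrq : r < q) (hqd : q ≤ d) (hq : w.symm q < w.symm r)
    (hm : ∀ x, q < x → w.symm r < w.symm x) :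
    ∃ w', St d e r w' ∧ (∀ x, q - 1 < x → w'.symm r < w'.symm x) ∧ G N w' = G N w := by
  obtain ⟨n, hn⟩ := h.fix
  have hodd := h.odd
  obtain ⟨σ, hσ, hE⟩ := h.E
  have hPr := h.neg r hr h.rd
  have hPq := h.neg q (by omega) hqd
  obtain ⟨z0, ⟨hz0r, hz0q⟩, hz0m⟩ : ∃ z0 : ℤ, (z0 < r ∧ w.symm z0 < w.symm q) ∧
      ∀ z, (z < r ∧ w.symm z < w.symm q) → z ≤ z0 := by
    apply Int.exists_greatest_of_bdd (P := fun z => z < r ∧ w.symm z < w.symm q)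
    · exact ⟨r, fun z hz => hz.1.le⟩
    · refine ⟨1 - (n + 2 + |w.symm q|), ?_, ?_⟩
      · have := abs_nonneg (w.symm q); omega
      · rw [hodd.symm, hn.symm_fix (by have := abs_nonneg (w.symm q); omega)]
        have := neg_abs_le (w.symm q); omega
  have hz0P : ∀ z, z < r → w.symm z < w.symm q → z ≠ z0 → w.symm z < w.symm z0 := by
    intro z hz hzq hne
    by_contra hcon
    have h1 : w.symm z ≠ w.symm z0 := fun h => hne (w.symm.injective h)
    have := h.I r hr le_rfl z z0 hz hz0r (by omega) (by omega)
    have := hz0m z ⟨hz, hzq⟩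
    omega
  have hz0' : z0 ≤ -d ∨ 1 ≤ z0 := by
    by_contra hcon
    have := h.neg (1 - z0) (by omega) (by omega)
    rw [hodd.symm] at this
    omega
  set v := tau r q * w with hv
  have hvs : ∀ x, v.symm x = w.symm (tauF r q x) := fun x => rfl
  have hvodd : OddP v := (oddP_tau r q).mul hodd
  have hwv : tau r q * v = w := by
    rw [hv, ← mul_assoc, tau_mul_self, one_mul]
  have vr : v.symm r = w.symm q := by rw [hvs]; simp [tauF]
  have vq : v.symm q = w.symm r := by
    rw [hvs]; congr 1; unfold tauF; split_ifs <;> omega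
  have vr' : v.symm (1-r) = 1 - w.symm q := by rw [hvodd.symm, vr]
  have vq' : v.symm (1-q) = 1 - w.symm r := by rw [hvodd.symm, vq]
  have vo : ∀ x, x ≠ r → x ≠ q → x ≠ 1 - r → x ≠ 1 - q → v.symm x = w.symm x := by
    intro x h1 h2 h3 h4
    rw [hvs]; congr 1; simp [tauF, h1, h2, h3, h4]
  have vz : v.symm z0 = w.symm z0 := vo z0 (by omega) (by omega) (by omega) (by omega)
  set w' := tau z0 r * v with hw'
  have hws : ∀ x, w'.symm x = v.symm (tauF z0 r x) := fun x => rfl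
  have hw'odd : OddP w' := (oddP_tau z0 r).mul hvodd
  have wr : w'.symm r = w.symm z0 := by
    rw [hws, ← vz]; congr 1; unfold tauF; split_ifs <;> omega
  have wz : w'.symm z0 = w.symm q := by
    rw [hws, ← vr]; congr 1; unfold tauF; split_ifs <;> omega
  have wq : w'.symm q = w.symm r := by
    rw [hws, ← vq]; congr 1; unfold tauF; split_ifs <;> omega
  have wo : ∀ x, x ≠ r → x ≠ q → x ≠ z0 → x ≠ 1 - r → x ≠ 1 - q → x ≠ 1 - z0 →
      w'.symm x = w.symm x := by
    intro x h1 h2 h3 h4 h5 h6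
    rw [hws, ← vo x h1 h2 h4 h5]; congr 1; simp [tauF, h1, h3, h4, h6]
  have hcq : Cov r q v := by
    refine ⟨hrq, by omega, ?_, Or.inr (by omega)⟩
    intro z h1 h2 h3 h4
    rw [vo z (by omega) (by omega) (by omega) (by omega)] at h3
    have := h.S z q h1 h2
    omega
  have hcq' : ∀ z, Cov r z v → z = q := by
    rintro z ⟨h1, h2, h3, -⟩
    by_contra hne
    rw [vo z (by omega) hne (by omega) (by omega)] at h2 h3
    rcases lt_or_gt_of_ne hne with hlt | hgt
    · have := h.S z q h1 hlt; omega
    · exact h3 q hrq hgt (by omega) (by rw [vq]; exact hm z hgt)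
  have hzne : ∀ z, z < r → v.symm z < w.symm q → w.symm z = v.symm z := by
    intro z h1 h2
    symm; apply vo z (by omega) (by omega)
    · rintro rfl; omega
    · rintro rfl; omega
  have hcz : Cov z0 r v := by
    refine ⟨hz0r, by omega, ?_, Or.inr (by omega)⟩
    intro z h1 h2 h3 h4
    have e1 := hzne z h2 (by omega)
    have := hz0m z ⟨h2, by omega⟩
    omega
  have hcz' : ∀ z, Cov z r v → z = z0 := by
    rintro z ⟨h1, h2, h3, -⟩
    by_contra hne
    have e1 := hzne z h1 (by omega)
    have h5 := hz0P z h1 (by omega) hne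
    have h6 := hz0m z ⟨h1, by omega⟩
    exact h3 z0 (by omega) hz0r (by omega) (by omega)
  obtain ⟨n', hn'⟩ : ∃ n' : ℕ, (n:ℤ) ≤ n' ∧ -(n':ℤ) < z0 ∧ z0 ≤ n' ∧ q ≤ n' :=
    ⟨n + z0.natAbs + q.natAbs + 1, by omega⟩
  have hfv : FixP n' v := (hn.mono hn'.1).tau_mul (by omega) (by omega) (by omega) (by omega)
  have hfw' : FixP n' w' := hfv.tau_mul (by omega) (by omega) (by omega) (by omega)
  have hG : G N w' = G N w := by
    have ht := transition N v hvodd n' r hfv (n' + r.natAbs + 3) (by push_cast; omega) (by omega)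
    have hab := abs_nonneg r
    push_cast at ht
    rw [Finset.sum_eq_add_of_mem z0 q (by simp; omega) (by simp; omega) (by omega)] at ht
    · have c1 : ¬ Cov r z0 v := fun h => by have := h.lt; omega
      have c2 : ¬ Cov q r v := fun h => by have := h.lt; omega
      simp only [HH, if_pos hcz, if_neg c1, if_pos hcq, if_neg c2, hwv, ← hw'] at ht
      omega
    · intro z _ hne
      have c1 : ¬ Cov z r v := fun h => hne.1 (hcz' z h)
      have c2 : ¬ Cov r z v := fun h => hne.2 (hcq' z h)
      simp [HH, c1, c2]
  have cs : ∀ x, (x = r ∧ w'.symm x = w.symm z0) ∨ (x = q ∧ w'.symm x = w.symm r) ∨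
      (x = z0 ∧ w'.symm x = w.symm q) ∨ (x = 1 - r ∧ w'.symm x = 1 - w.symm z0) ∨
      (x = 1 - q ∧ w'.symm x = 1 - w.symm r) ∨ (x = 1 - z0 ∧ w'.symm x = 1 - w.symm q) ∨
      (x ≠ r ∧ x ≠ q ∧ x ≠ z0 ∧ x ≠ 1 - r ∧ x ≠ 1 - q ∧ x ≠ 1 - z0 ∧
        w'.symm x = w.symm x) := by
    intro x
    by_cases h1 : x = r
    · left; subst h1; exact ⟨rfl, wr⟩
    by_cases h2 : x = q
    · right; left; subst h2; exact ⟨rfl, wq⟩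
    by_cases h3 : x = z0
    · right; right; left; subst h3; exact ⟨rfl, wz⟩
    by_cases h4 : x = 1 - r
    · right; right; right; left; subst h4; exact ⟨rfl, by rw [hw'odd.symm, wr]⟩
    by_cases h5 : x = 1 - q
    · right; right; right; right; left; subst h5; exact ⟨rfl, by rw [hw'odd.symm, wq]⟩
    by_cases h6 : x = 1 - z0
    · right; right; right; right; right; left; subst h6; exact ⟨rfl, by rw [hw'odd.symm, wz]⟩
    iterate 6 right
    exact ⟨h1, h2, h3, h4, h5, h6, wo x h1 h2 h3 h4 h5 h6⟩
  have hod0 := hodd.symm z0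
  refine ⟨w', ⟨hw'odd, ⟨n', hfw'⟩, h.rd, ?_, ?_, ?_, ?_, ?_⟩, ?_, hG⟩
  · intro k h1 h2
    have := h.neg k h1 h2
    rcases cs k with c | c | c | c | c | c | c <;> omega
  · intro k h1
    have := h.pos k h1
    have := h.rd
    rcases cs k with c | c | c | c | c | c | c <;> omega
  · intro x y hx hxy
    have hS := h.S x y hx hxy
    have hxr : x ≠ r := by omega
    have hyr : y ≠ r := by omega
    have h1 : x < q → w.symm x < w.symm q := h.S x q hx
    have h2 : q < y → w.symm r < w.symm y := hm y
    have h3 : (1 - x < r ∧ w.symm (1 - x) < w.symm q) → 1 - x ≤ z0 := hz0m (1-x)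
    rw [hodd.symm] at h3
    have h4 := h.pos y
    have h5 : w.symm x ≠ 1 - w.symm q := by
      rw [← hodd.symm]; intro hh; have := w.symm.injective hh; omega
    have h6 := h.pos x
    have h7 : x = 1 - z0 → w.symm x = 1 - w.symm z0 := fun hh => by rw [hh, hod0]
    have h8 : y = 1 - z0 → w.symm y = 1 - w.symm z0 := fun hh => by rw [hh, hod0]
    rcases cs x with c | c | c | c | c | c | c <;> rcases cs y with c' | c' | c' | c' | c' | c' | c' <;>
      first
      | (exfalso; omega)
      | omega
  · intro k hk1 hkr z z' hzk hzk' hlt hlt'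
    have hk0 := h.neg k hk1 (by have := h.rd; omega)
    have i1 : w.symm z' < w.symm z → w.symm z < w.symm k → z' < z := h.I k hk1 hkr z z' hzk hzk'
    have i2 : w.symm z' < w.symm z → w.symm z < w.symm r → z' < z :=
      h.I r hr le_rfl z z' (by omega) (by omega)
    have i3 := hz0m k
    have i4 := hz0m z'
    have i5 : w.symm k ≠ w.symm q := by
      intro hh; have := w.symm.injective hh; omega
    rcases cs k with c | c | c | c | c | c | c <;> try (exfalso; omega)
    all_goals
      rcases cs z with c1 | c1 | c1 | c1 | c1 | c1 | c1 <;> try (exfalso; omega)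
    all_goals
      rcases cs z' with c' | c' | c' | c' | c' | c' | c' <;> try (exfalso; omega)
    all_goals 
      first
      | (exfalso; omega)
      | omega
      | (have : z0 < z := by
          apply h.I k hk1 hkr z z0 hzk (by omega) (by omega) (by omega)
         omega)
  · have wval : ∀ c, c ≤ 0 → c ≠ w.symm r → c ≠ w.symm q → c ≠ w.symm z0 → w' c = w c := by
      intro c h0 h1 h2 h3
      rw [symm_iff]
      have hc : w.symm (w c) = c := by simp
      have o1 := hodd.symm r
      have o2 := hodd.symm q
      rcases cs (w c) with c1 | c1 | c1 | c1 | c1 | c1 | c1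
      · rw [c1.1] at hc; omega
      · rw [c1.1] at hc; omega
      · rw [c1.1] at hc; omega
      · rw [c1.1] at hc; omega
      · rw [c1.1] at hc; omega
      · rw [c1.1] at hc; omega
      · omega
    have w1 : w' (w.symm r) = q := by rw [symm_iff, wq]
    have w2 : w' (w.symm q) = z0 := by rw [symm_iff, wz]
    have w3 : w' (w.symm z0) = r := by rw [symm_iff, wr]
    have u1 : w (w.symm r) = r := by simp
    have u2 : w (w.symm q) = q := by simp
    have u3 : w (w.symm z0) = z0 := by simp
    have cc : ∀ c, c ≤ 0 → (c = w.symm r ∧ w c = r ∧ w' c = q) ∨ (c = w.symm q ∧ w c = q ∧ w' c = z0)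
        ∨ (c = w.symm z0 ∧ w c = z0 ∧ w' c = r) ∨
        (c ≠ w.symm r ∧ c ≠ w.symm q ∧ c ≠ w.symm z0 ∧ w' c = w c) := by
      intro c h0
      by_cases h1 : c = w.symm r
      · left; rw [h1]; exact ⟨rfl, u1, w1⟩
      by_cases h2 : c = w.symm q
      · right; left; rw [h2]; exact ⟨rfl, u2, w2⟩
      by_cases h3 : c = w.symm z0
      · right; right; left; rw [h3]; exact ⟨rfl, u3, w3⟩
      exact Or.inr (Or.inr (Or.inr ⟨h1, h2, h3, wval c h0 h1 h2 h3⟩))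
    have hswap : ∀ (A B : Finset ℤ), w.symm r ∈ A → w.symm q ∈ B → w.symm r ∉ B → w.symm q ∉ A →
        (∀ c, c ≠ w.symm r → c ≠ w.symm q → (c ∈ A ↔ c ∈ B)) → A.card = B.card := by
      intro A B h1 h2 h3 h4 h5
      have : A.erase (w.symm r) = B.erase (w.symm q) := by
        ext c
        simp only [Finset.mem_erase]
        by_cases ha : c = w.symm r
        · subst ha; simp [h3]
        by_cases hb : c = w.symm q
        · subst hb; simp [h4]
        simp [ha, hb, h5 c ha hb]
      rw [← Finset.card_erase_add_one h1, ← Finset.card_erase_add_one h2, this]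
    have kq : Ect w' q = Ect w r := by
      unfold Ect; congr 1; ext c
      simp only [Finset.mem_filter, Finset.mem_Ioc, wq]
      by_cases hc : w.symm r < c ∧ c ≤ 0
      · have hx : w.symm (w c) = c := by simp
        have := h.S (w c) q
        rcases cc c hc.2 with c1 | c1 | c1 | c1
        · omega
        · omega
        · omega
        · rw [c1.2.2.2]
          have : w c ≠ r := fun hh => by rw [hh] at hx; omega
          constructor
          · intro a; refine ⟨a.1, ?_⟩; by_contra; omega
          · intro a; omega
      · tauto
    have kr : Ect w' r = Ect w q := by
      symm
      unfold Ect
      apply hswap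
      · simp; omega
      · simp [wr, w2]; omega
      · simp [w1]; omega
      · simp
      · intro c h1 h2
        simp only [Finset.mem_filter, Finset.mem_Ioc, wr]
        have hx : w.symm (w c) = c := by simp
        have hS := h.S (w c) q
        have hzz := hz0P (w c)
        rw [hx] at hS hzz
        by_cases hc : c ≤ 0
        swap
        · omega
        rcases cc c hc with c1 | c1 | c1 | c1
        · omega
        · omega
        · omega
        · have e1 : w c ≠ r := fun hh => by rw [hh] at hx; omega
          have e2 : w c ≠ z0 := fun hh => by rw [hh] at hx; omega
          rw [c1.2.2.2]
          by_cases t1 : w c < r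
          · by_cases t2 : c < w.symm q
            · have := hzz t1 t2 e2; omega
            · omega
          · by_cases t2 : w c < q
            · have := hS (by omega) t2; omega
            · omega
    have ko : ∀ k : ℤ, 1 ≤ k → k ≤ d → k ≠ r → k ≠ q → Ect w' k = Ect w k := by
      intro k hk1 hkd hkr hkq
      by_cases hkz : k = z0
      · subst hkz
        unfold Ect; congr 1; ext c
        simp only [Finset.mem_filter, Finset.mem_Ioc, wz]
        by_cases hc : c ≤ 0
        swap
        · omega
        have hx : w.symm (w c) = c := by simp
        have hzz := hz0P (w c)
        rw [hx] at hzz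
        rcases cc c hc with c1 | c1 | c1 | c1
        · omega
        · omega
        · omega
        · rw [c1.2.2.2]
          by_cases t1 : w c < k
          · by_cases t2 : c < w.symm q
            · have := hzz (by omega) t2 (by omega); omega
            · omega
          · omega
      have wk : w'.symm k = w.symm k := wo k hkr hkq hkz (by omega) (by omega) (by omega)
      have nq : w.symm k ≠ w.symm q := fun hh => hkq (w.symm.injective hh)
      have nz : w.symm k ≠ w.symm z0 := fun hh => hkz (w.symm.injective hh)
      by_cases hmid : r < k ∧ k < q
      · symm
        have := h.S k q hmid.1 hmid.2
        unfold Ect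
        apply hswap
        · simp; omega
        · simp [wk, w2]; omega
        · simp [w1]; omega
        · simp; omega
        · intro c h1 h2
          simp only [Finset.mem_filter, Finset.mem_Ioc, wk]
          by_cases hc : c ≤ 0
          swap
          · omega
          rcases cc c hc with c1 | c1 | c1 | c1
          · omega
          · omega
          · omega
          · rw [c1.2.2.2]
      · unfold Ect; congr 1; ext c
        simp only [Finset.mem_filter, Finset.mem_Ioc, wk]
        by_cases hc : c ≤ 0
        swap
        · omega
        have a1 := hm k
        have a2 := hz0m k
        rcases cc c hc with c1 | c1 | c1 | c1
        · omega
        · omega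
        · omega
        · rw [c1.2.2.2]
    have hrd := h.rd
    refine ⟨(Equiv.swap r q).trans σ, ?_, ?_⟩
    · intro k
      simp only [Equiv.trans_apply]
      rw [hσ, Equiv.swap_apply_def]
      split_ifs <;> omega
    · intro k h1 h2
      simp only [Equiv.trans_apply]
      rw [Equiv.swap_apply_def]
      split_ifs with g1 g2
      · rw [g1, kr]; exact hE q (by omega) hqd
      · rw [g2, kq]; exact hE r hr hrd
      · rw [ko k h1 h2 g1 g2]; exact hE k h1 h2
  · intro x hx
    have h1 := hm x
    have h2 := h.pos x
    have h3 := h.rd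
    rcases cs x with c | c | c | c | c | c | c <;> omega

lemma St.reduce_aux {d : ℕ} {e : ℤ → ℕ} (N : ℕ) (r : ℕ)
    (ih : ∀ w, St d e r w → ∃ w', St d e 0 w' ∧ G N w' = G N w) (m : ℕ) :
    ∀ w, St d e ((r+1 : ℕ) : ℤ) w → r + 1 + m ≤ d →
      (∀ x, ((r + 1 + m : ℕ) : ℤ) < x → w.symm ((r+1 : ℕ) : ℤ) < w.symm x) →
      ∃ w', St d e 0 w' ∧ G N w' = G N w := by
  induction m with
  | zero =>
    intro w h _ hx
    apply ih
    refine ⟨h.odd, h.fix, by have := h.rd; push_cast at this; omega, h.neg, h.pos, ?_, ?_, h.E⟩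
    · intro x y h1 h2
      by_cases hh : x = ((r+1 : ℕ) : ℤ)
      · subst hh; exact hx y (by push_cast at *; omega)
      · exact h.S x y (by push_cast at *; omega) h2
    · intro k h1 h2; exact h.I k h1 (by push_cast at *; omega)
  | succ m ihm =>
    intro w h hd hx
    by_cases hq : w.symm ((r+1 : ℕ) : ℤ) < w.symm ((r+1+(m+1) : ℕ) : ℤ)
    · apply ihm w h (by omega)
      intro x hh
      by_cases hh2 : x = ((r+1+(m+1) : ℕ) : ℤ)
      · rw [hh2]; exact hq
      · exact hx x (by push_cast at *; omega)
    · have hne : w.symm ((r+1 : ℕ) : ℤ) ≠ w.symm ((r+1+(m+1) : ℕ) : ℤ) := by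
        intro hh; have := w.symm.injective hh; push_cast at this; omega
      obtain ⟨w', h1, h2, h3⟩ := h.step N ((r+1+(m+1) : ℕ) : ℤ) (by push_cast; omega)
        (by push_cast; omega) (by exact_mod_cast hd) (by omega) hx
      obtain ⟨w2, h4, h5⟩ := ihm w' h1 (by omega) (fun x hh => h2 x (by push_cast at *; omega))
      exact ⟨w2, h4, by rw [h5, h3]⟩

lemma St.reduce {d : ℕ} {e : ℤ → ℕ} (N : ℕ) (r : ℕ) :
    ∀ w, St d e (r : ℤ) w → ∃ w', St d e 0 w' ∧ G N w' = G N w := by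
  induction r with
  | zero => intro w h; exact ⟨w, h, rfl⟩
  | succ r ih =>
    intro w h
    have hrd := h.rd
    push_cast at hrd
    apply St.reduce_aux N r ih (d - (r+1)) w h (by omega)
    intro x hx
    have h1 := h.pos x (by push_cast at hx; omega)
    have h2 := h.neg ((r+1 : ℕ) : ℤ) (by push_cast; omega) (by push_cast; omega)
    omega

lemma antitone_unique (d : ℕ) (f g : ℤ → ℕ) (σ : Equiv.Perm ℤ)
    (hσ : ∀ k, (1 ≤ σ k ∧ σ k ≤ (d:ℤ)) ↔ (1 ≤ k ∧ k ≤ (d:ℤ)))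
    (hfg : ∀ k : ℤ, 1 ≤ k → k ≤ d → f k = g (σ k))
    (hf : ∀ k l : ℤ, 1 ≤ k → k ≤ l → l ≤ d → f l ≤ f k)
    (hg : ∀ k l : ℤ, 1 ≤ k → k ≤ l → l ≤ d → g l ≤ g k) (k : ℤ) (h1 : 1 ≤ k) (h2 : k ≤ d) :
    f k = g k := by
  have hcard : ∀ t, ((Finset.Icc (1:ℤ) d).filter (fun j => t ≤ f j)).card =
      ((Finset.Icc (1:ℤ) d).filter (fun j => t ≤ g j)).card := by
    intro t
    apply Finset.card_bij (fun j _ => σ j)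
    · intro a ha
      simp only [Finset.mem_filter, Finset.mem_Icc] at ha ⊢
      exact ⟨(hσ a).2 ha.1, by rw [← hfg a ha.1.1 ha.1.2]; exact ha.2⟩
    · intro a _ b _ h; exact σ.injective h
    · intro b hb
      simp only [Finset.mem_filter, Finset.mem_Icc] at hb
      have hs : σ (σ.symm b) = b := by simp
      have hb1 := (hσ (σ.symm b)).1 (by rw [hs]; exact hb.1)
      refine ⟨σ.symm b, ?_, hs⟩
      simp only [Finset.mem_filter, Finset.mem_Icc]
      exact ⟨hb1, by rw [hfg _ hb1.1 hb1.2, hs]; exact hb.2⟩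
  have key : ∀ f g : ℤ → ℕ, (∀ k l : ℤ, 1 ≤ k → k ≤ l → l ≤ d → f l ≤ f k) →
      (∀ k l : ℤ, 1 ≤ k → k ≤ l → l ≤ d → g l ≤ g k) →
      (∀ t, ((Finset.Icc (1:ℤ) d).filter (fun j => t ≤ f j)).card =
      ((Finset.Icc (1:ℤ) d).filter (fun j => t ≤ g j)).card) → g k ≤ f k := by
    intro f g hf hg hc
    by_contra hlt
    push Not at hlt
    have a1 : Finset.Icc 1 k ⊆ (Finset.Icc (1:ℤ) d).filter (fun j => g k ≤ g j) := by
      intro j hj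
      simp only [Finset.mem_filter, Finset.mem_Icc] at hj ⊢
      exact ⟨by omega, hg j k hj.1 hj.2 h2⟩
    have a2 : (Finset.Icc (1:ℤ) d).filter (fun j => g k ≤ f j) ⊆ Finset.Icc 1 (k-1) := by
      intro j hj
      simp only [Finset.mem_filter, Finset.mem_Icc] at hj ⊢
      refine ⟨hj.1.1, ?_⟩
      by_contra hh
      have := hf k j h1 (by omega) hj.1.2
      omega
    have b1 := Finset.card_le_card a1
    have b2 := Finset.card_le_card a2
    rw [← hc] at b1
    simp only [Int.card_Icc] at b1 b2
    omega
  exact le_antisymm (key g f hg hf (fun t => (hcard t).symm)) (key f g hf hg hcard)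

lemma St.term {d : ℕ} {e : ℤ → ℕ} {w : Equiv.Perm ℤ} (h : St d e 0 w) (lam : ℕ → ℕ)
    (hlam : IsStrictPartition d lam)
    (he : ∀ i : ℕ, 1 ≤ i → i ≤ d → e i + i = lam (d + 1 - i)) : Term d lam w := by
  have hst : ∀ m i : ℕ, 1 ≤ i → i + (m+1) ≤ d → lam (i+(m+1)) < lam i := by
    intro m
    induction m with
    | zero => intro i h1 h2; exact hlam.1 i h1 (by omega)
    | succ m ih =>
      intro i h1 h2
      have := ih i h1 (by omega)
      have := hlam.1 (i+(m+1)) (by omega) (by omega)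
      have e1 : i + (m+1) + 1 = i + (m+1+1) := by omega
      rw [e1] at this
      omega
  have hst' : ∀ i k : ℕ, 1 ≤ i → i < k → k ≤ d → lam k < lam i := by
    intro i k h1 h2 h3
    have := hst (k - i - 1) i h1 (by omega)
    rwa [show i + (k - i - 1 + 1) = k by omega] at this
  have hgap : ∀ m : ℕ, ∀ k : ℤ, 0 < k → w.symm k + m ≤ w.symm (k + m) := by
    intro m
    induction m with
    | zero => intro k hk; simp
    | succ m ih =>
      intro k hk
      have := ih k hk
      have := h.S (k+m) (k+(m+1:ℕ)) (by omega) (by push_cast; omega)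
      push_cast at *
      omega
  have hE : ∀ k : ℤ, 1 ≤ k → k ≤ d → (Ect w k : ℤ) = - w.symm k - (d - k) := by
    intro k h1 h2
    have hk0 := h.neg k h1 h2
    have hc : ((Finset.Ioc (w.symm k) 0).filter (fun c => ¬ w c < k)).card = (Finset.Ioc k d).card := by
      symm
      apply Finset.card_bij (fun j _ => w.symm j)
      · intro j hj
        simp only [Finset.mem_filter, Finset.mem_Ioc] at hj ⊢
        refine ⟨⟨h.S k j (by omega) hj.1, h.neg j (by omega) hj.2⟩, ?_⟩
        simp; omega
      · intro a _ b _ hab; exact w.symm.injective hab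
      · intro c hc
        simp only [Finset.mem_filter, Finset.mem_Ioc] at hc
        refine ⟨w c, ?_, by simp⟩
        simp only [Finset.mem_Ioc]
        have hx : w.symm (w c) = c := by simp
        constructor
        · by_contra hh
          have : w c = k := by omega
          rw [this] at hx; omega
        · by_contra hh
          have := h.pos (w c) (by omega)
          omega
    have hs := Finset.card_filter_add_card_filter_not (s := Finset.Ioc (w.symm k) 0) (fun c => w c < k)
    rw [hc] at hs
    simp only [Int.card_Ioc] at hs
    unfold Ect
    have := hgap (d - k).toNat k (by omega)
    have hd0 := h.neg (k + (d-k).toNat) (by omega) (by omega)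
    omega
  obtain ⟨σ, hσ, hEσ⟩ := h.E
  have hpos : ∀ i : ℕ, 1 ≤ i → i ≤ d → 1 - w.symm (i:ℤ) = lam i := by
    intro i h1 h2
    have hu := antitone_unique d (Ect w) (fun k => e (d + 1 - k))
      (σ.trans ⟨fun x => d + 1 - x, fun x => d + 1 - x, fun x => by ring, fun x => by ring⟩)
      (by intro k; have := hσ k; simp; omega) (by
        intro k h1 h2
        rw [hEσ k h1 h2]; simp) (by
        intro k l h1 h2 h3
        have a1 := hE k h1 (by omega)
        have a2 := hE l (by omega) h3
        have a3 := hgap (l-k).toNat k (by omega)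
        rw [show k + ((l-k).toNat:ℤ) = l by omega] at a3
        omega) (by
        intro k l h1 h2 h3
        have a1 := he (d+1-k).toNat (by omega) (by omega)
        have a2 := he (d+1-l).toNat (by omega) (by omega)
        rw [show (((d+1-k).toNat : ℕ):ℤ) = d+1-k by omega] at a1
        rw [show (((d+1-l).toNat : ℕ):ℤ) = d+1-l by omega] at a2
        rcases eq_or_lt_of_le h2 with h4 | h4
        · rw [h4]
        have hlg : ∀ m i : ℕ, 1 ≤ i → i + m ≤ d → lam (i + m) + m ≤ lam i := by
          intro m
          induction m with
          | zero => intro i _ _; simp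
          | succ m ih =>
            intro i h1 h2
            have := ih i h1 (by omega)
            have := hst' (i+m) (i+(m+1)) (by omega) (by omega) (by omega)
            omega
        have a4 := hlg (l-k).toNat k.toNat (by omega) (by omega)
        rw [show d + 1 - (d+1-k).toNat = k.toNat by omega] at a1
        rw [show d + 1 - (d+1-l).toNat = k.toNat + (l-k).toNat by omega] at a2
        omega) (i:ℤ) (by omega) (by omega)
    have a1 := hE i (by omega) (by omega)
    have a2 := he (d+1-i) (by omega) (by omega)
    rw [show d + 1 - (d+1-i) = i by omega, show (((d+1-i : ℕ)):ℤ) = d+1-i by omega] at a2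
    omega
  refine ⟨h.odd, ?_, ?_, ?_⟩
  · intro x y hx hxy; exact h.S x y hx hxy
  · intro c hc
    constructor
    · intro hw
      have hx : w.symm (1 - w c) = 1 - c := by rw [h.odd.symm]; simp
      have hle : 1 - w c ≤ d := by
        by_contra hh
        have := h.pos (1 - w c) (by omega)
        omega
      refine ⟨(1 - w c).toNat, by omega, by omega, ?_⟩
      have := hpos (1 - w c).toNat (by omega) (by omega)
      rw [show (((1 - w c).toNat : ℕ):ℤ) = 1 - w c by omega, hx] at this
      omega
    · rintro ⟨i, h1, h2, h3⟩
      have := hpos i h1 h2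
      have hx : w c = 1 - i := by
        rw [symm_iff, h.odd.symm]; omega
      omega
  · intro i k h1 h2 h3 _; exact hst' i k h1 h2 h3

def gamF (m x : ℤ) : ℤ :=
  if 1 ≤ x ∧ x < m then x + 1 else if x = m then 0 else if 2 - m ≤ x ∧ x ≤ 0 then x - 1
  else if x = 1 - m then 1 else x

def gamI (m x : ℤ) : ℤ :=
  if 2 ≤ x ∧ x ≤ m then x - 1 else if x = 0 then m else if 1 - m ≤ x ∧ x ≤ -1 then x + 1
  else if x = 1 then 1 - m else x

def gam (m : ℕ) : Equiv.Perm ℤ where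
  toFun := gamF (m+1)
  invFun := gamI (m+1)
  left_inv := by intro x; unfold gamF gamI; split_ifs <;> omega
  right_inv := by intro x; unfold gamF gamI; split_ifs <;> omega

lemma gam_apply (m : ℕ) (x : ℤ) : gam m x = gamF (m+1) x := rfl
lemma gam_symm (m : ℕ) (x : ℤ) : (gam m).symm x = gamI (m+1) x := rfl

structure WL (d : ℕ) (e : ℤ → ℕ) (k : ℕ) (w : Equiv.Perm ℤ) : Prop where
  odd : OddP w
  fix : ∃ n : ℕ, FixP n w
  front : ∀ j : ℤ, 1 ≤ j → j ≤ d - k → w j = k + j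
  place : ∀ i : ℤ, 1 ≤ i → i ≤ k → d - k + e i < w.symm (1 - i)
  bef : ∀ i : ℤ, 1 ≤ i → i ≤ k → ∀ c : ℤ, d - k < c → c < w.symm (1 - i) →
    (1 - i < w c ↔ c - (d - k) ≤ e i)
  pos : ∀ x : ℤ, (d:ℤ) < x → d - k < w.symm x
  S : ∀ x y : ℤ, (d:ℤ) < x → x < y → w.symm x < w.symm y
  rest : ∀ c : ℤ, d - k < c → 1 - k ≤ w c

lemma WL.step {d : ℕ} {e : ℤ → ℕ} {k : ℕ} {w : Equiv.Perm ℤ} (h : WL d e k w) (hk : k + 1 ≤ d)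
    (he : ∀ i : ℤ, 1 ≤ i → i ≤ k → e i ≤ e (k+1)) :
    WL d e (k+1) (w * gam (d - (k+1) + e (k+1))) := by
  set m := d - (k+1) + e (k+1) with hm
  obtain ⟨n, hn⟩ := h.fix
  have ap : ∀ x, (w * gam m) x = w (gamF (m+1) x) := fun x => rfl
  have sy : ∀ x, (w * gam m).symm x = gamI (m+1) (w.symm x) := fun x => rfl
  have hfront : w.symm (k+1) = 1 := by
    rw [← symm_iff]; exact h.front 1 le_rfl (by omega)
  have hz : w.symm (-k) = 0 := by
    have := h.odd.symm (k+1)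
    rw [hfront] at this
    rw [show (-k:ℤ) = 1 - (k+1) by ring]; omega
  refine ⟨?_, ?_, ?_, ?_, ?_, ?_, ?_, ?_⟩
  · apply h.odd.mul
    intro x
    rw [gam_apply, gam_apply]; unfold gamF; split_ifs <;> omega
  · refine ⟨n + m + 1, ?_⟩
    intro x hx
    push_cast at hx
    rw [ap, show gamF (m+1) x = x by unfold gamF; split_ifs <;> omega]
    exact hn x (by omega)
  · intro j h1 h2
    rw [ap]; push_cast at h2 ⊢
    rw [show gamF (m+1) j = j + 1 by unfold gamF; split_ifs <;> omega,
      h.front _ (by omega) (by omega)]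
    ring
  · intro i h1 h2
    push_cast at h2 ⊢
    rw [sy]
    by_cases hi : i = k + 1
    · rw [hi, show (1 - ((k:ℤ)+1)) = -k by ring, hz]
      unfold gamI; split_ifs <;> omega
    · have := h.place i h1 (by omega)
      have := he i h1 (by omega)
      unfold gamI; split_ifs <;> omega
  · intro i h1 h2 c hc1 hc2
    rw [sy] at hc2
    rw [ap]
    push_cast at h2 hc1 hc2 ⊢
    by_cases hi : i = k + 1
    · subst hi
      rw [show (1 - ((k:ℤ)+1)) = -k by ring, hz,
        show gamI (m+1) 0 = m + 1 by unfold gamI; split_ifs <;> omega] at hc2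
      rw [show gamF (m+1) c = c + 1 by unfold gamF; split_ifs <;> omega]
      have := h.rest (c+1) (by omega)
      constructor <;> intro <;> omega
    · have h3 := h.place i h1 (by omega)
      have h4 := he i h1 (by omega)
      have h5 := h.bef i h1 (by omega)
      rcases lt_trichotomy c (m+1) with h6 | h6 | h6
      · rw [show gamF (m+1) c = c + 1 by unfold gamF; split_ifs <;> omega]
        rw [h5 (c+1) (by omega) (by unfold gamI at hc2; split_ifs at hc2 <;> omega)]
        constructor <;> intro <;> omega
      · rw [show gamF (m+1) c = 0 by unfold gamF; split_ifs <;> omega]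
        have : w 0 = -k := by rw [symm_iff, hz]
        rw [this]
        constructor <;> intro <;> omega
      · rw [show gamF (m+1) c = c by unfold gamF; split_ifs <;> omega]
        rw [h5 c (by omega) (by unfold gamI at hc2; split_ifs at hc2 <;> omega)]
        constructor <;> intro <;> omega
  · intro x hx
    have := h.pos x hx
    rw [sy]; push_cast
    unfold gamI; split_ifs <;> omega
  · intro x y hx hxy
    have := h.pos x hx
    have := h.S x y hx hxy
    rw [sy, sy]
    unfold gamI; split_ifs <;> omega
  · intro c hc
    rw [ap]
    push_cast at hc ⊢
    rcases lt_trichotomy c (m+1) with h6 | h6 | h6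
    · rw [show gamF (m+1) c = c + 1 by unfold gamF; split_ifs <;> omega]
      have := h.rest (c+1) (by omega); omega
    · rw [show gamF (m+1) c = 0 by unfold gamF; split_ifs <;> omega]
      have : w 0 = -k := by rw [symm_iff, hz]
      omega
    · rw [show gamF (m+1) c = c by unfold gamF; split_ifs <;> omega]
      have := h.rest c (by omega); omega

lemma WL.exists (d : ℕ) (e : ℤ → ℕ) (he : ∀ i j : ℤ, 1 ≤ i → i ≤ j → j ≤ d → e i ≤ e j)
    (k : ℕ) (hk : k ≤ d) : ∃ w, WL d e k w := by
  induction k with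
  | zero =>
    refine ⟨1, fun x => rfl, ⟨0, fun x _ => rfl⟩, ?_, ?_, ?_, ?_, ?_, ?_⟩
    · intro j _ _; simp
    · intro i h1 h2; push_cast at h2; omega
    · intro i h1 h2; push_cast at h2; omega
    · intro x hx; change _ < x; push_cast; omega
    · intro x y _ h; exact h
    · intro c hc; change _ ≤ c; push_cast at *; omega
  | succ k ih =>
    obtain ⟨w, h⟩ := ih (by omega)
    exact ⟨_, h.step hk (fun i h1 h2 => he i (k+1) h1 (by omega) (by omega))⟩

lemma WL.st {d : ℕ} {e : ℤ → ℕ} {w : Equiv.Perm ℤ} (h : WL d e d w)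
    (he : ∀ i j : ℤ, 1 ≤ i → i ≤ j → j ≤ d → e i ≤ e j) : St d e d w := by
  have hneg : ∀ k : ℤ, 1 ≤ k → k ≤ d → w.symm k ≤ 0 := by
    intro k h1 h2
    have := h.place k h1 h2
    rw [h.odd.symm] at this
    omega
  refine ⟨h.odd, h.fix, le_rfl, hneg, ?_, h.S, ?_, ⟨1, fun k => Iff.rfl, ?_⟩⟩
  · intro k hk; have := h.pos k hk; omega
  · intro k h1 h2 z z' hz hz' hlt hlt'
    by_contra hcon
    have hne : z ≠ z' := by rintro rfl; omega
    have hk0 := hneg k h1 h2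
    have hzd : z < 1 ∨ (1 ≤ z) := by omega
    have o1 := h.odd.symm z
    have o2 := h.odd.symm z'
    have o3 := h.odd.symm k
    by_cases a1 : (d:ℤ) < 1 - z'
    · have := h.S (1 - z') (1 - z) a1 (by omega)
      omega
    · by_cases a2 : 1 ≤ z'
      · have hb := h.bef z' a2 (by omega) (1 - w.symm z) (by omega) (by omega)
        have hw : w (1 - w.symm z) = 1 - z := by rw [h.odd]; simp
        rw [hw] at hb
        have := hb.1 (by omega)
        have := h.place k h1 h2
        have := he z' k a2 (by omega) h2
        omega
      · have := hneg (1 - z') (by omega) (by omega)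
        omega
  · intro k h1 h2
    have hp := h.place k h1 h2
    have o3 := h.odd.symm k
    unfold Ect
    have : (Finset.Ioc (w.symm k) 0).filter (fun c => w c < k) = Finset.Ioc (-(e k : ℤ)) 0 := by
      ext c
      simp only [Finset.mem_filter, Finset.mem_Ioc]
      by_cases hc : w.symm k < c ∧ c ≤ 0
      · have hb := h.bef k h1 h2 (1 - c) (by omega) (by omega)
        rw [h.odd] at hb
        omega
      · omega
    rw [this]; simp

def oF (x : ℤ) : ℤ := if 1 ≤ x then x else x - 1
def oI (z : ℤ) : ℤ := if 1 ≤ z then z else z + 1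

lemma oF_ne (x : ℤ) : oF x ≠ 0 := by unfold oF; split_ifs <;> omega
lemma oI_oF (x : ℤ) : oI (oF x) = x := by unfold oF oI; split_ifs <;> omega
lemma oF_oI (z : ℤ) (h : z ≠ 0) : oF (oI z) = z := by unfold oF oI; split_ifs <;> omega
lemma oF_lt {x y : ℤ} : oF x < oF y ↔ x < y := by unfold oF; split_ifs <;> omega
lemma oI_lt {x y : ℤ} (hx : x ≠ 0) (hy : y ≠ 0) : oI x < oI y ↔ x < y := by
  unfold oI; split_ifs <;> omega
lemma oF_odd (x : ℤ) : oF (1 - x) = - oF x := by unfold oF; split_ifs <;> omega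
lemma oI_odd (x : ℤ) (hx : x ≠ 0) : oI (- x) = 1 - oI x := by unfold oI; split_ifs <;> omega

def oPerm (w : Equiv.Perm ℤ) : Equiv.Perm ℤ where
  toFun z := if z = 0 then 0 else oF (w.symm (oI z))
  invFun c := if c = 0 then 0 else oF (w (oI c))
  left_inv := by
    intro z
    by_cases h : z = 0
    · simp [h]
    · simp [h, oF_ne, oI_oF, oF_oI z h]
  right_inv := by
    intro z
    by_cases h : z = 0
    · simp [h]
    · simp [h, oF_ne, oI_oF, oF_oI z h]

lemma oPerm_apply (w : Equiv.Perm ℤ) (z : ℤ) :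
    oPerm w z = if z = 0 then 0 else oF (w.symm (oI z)) := rfl
lemma oPerm_symm (w : Equiv.Perm ℤ) (z : ℤ) :
    (oPerm w).symm z = if z = 0 then 0 else oF (w (oI z)) := rfl
lemma oPerm_o (w : Equiv.Perm ℤ) (x : ℤ) : oPerm w (oF x) = oF (w.symm x) := by
  rw [oPerm_apply, if_neg (oF_ne x), oI_oF]

structure OL (d n : ℕ) (e : ℤ → ℕ) (K : Equiv.Perm ℤ) : Prop where
  odd : ∀ z, K (-z) = - K z
  fix : ∀ z : ℤ, (n:ℤ) < z → K z = z
  dn : d ≤ n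
  place : ∀ i : ℤ, 1 ≤ i → i ≤ d → e i < K (-i)
  bef : ∀ i : ℤ, 1 ≤ i → i ≤ d → ∀ c : ℤ, 1 ≤ c → c < K (-i) → (-i < K.symm c ↔ c ≤ e i)
  pos : ∀ z : ℤ, (d:ℤ) < z → 0 < K z
  S : ∀ x y : ℤ, (d:ℤ) < x → x < y → K x < K y

lemma WL.ol {d : ℕ} {e : ℤ → ℕ} {w : Equiv.Perm ℤ} (h : WL d e d w) :
    ∃ n, OL d n e (oPerm w) := by
  obtain ⟨n, hn⟩ := h.fix
  refine ⟨n + d, ?_, ?_, by omega, ?_, ?_, ?_, ?_⟩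
  · intro z
    by_cases hz : z = 0
    · simp [hz, oPerm_apply]
    · rw [oPerm_apply, oPerm_apply, if_neg (by omega), if_neg hz, oI_odd z hz, h.odd.symm, oF_odd]
  · intro z hz
    push_cast at hz
    rw [oPerm_apply, if_neg (by omega), show oI z = z by unfold oI; split_ifs <;> omega,
      hn.symm_fix (by omega)]
    unfold oF; split_ifs <;> omega
  · intro i h1 h2
    have := h.place i h1 h2
    rw [oPerm_apply, if_neg (by omega), show oI (-i) = 1 - i by unfold oI; split_ifs <;> omega]
    unfold oF; split_ifs <;> omega
  · intro i h1 h2 c hc hc2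
    have hp := h.place i h1 h2
    rw [oPerm_apply, if_neg (by omega), show oI (-i) = 1 - i by unfold oI; split_ifs <;> omega,
      show oF (w.symm (1-i)) = w.symm (1 - i) by unfold oF; split_ifs <;> omega] at hc2
    have := h.bef i h1 h2 c (by omega) hc2
    rw [oPerm_symm, if_neg (by omega), show oI c = c by unfold oI; split_ifs <;> omega]
    rw [show c ≤ (e i : ℤ) ↔ c - ((d:ℤ) - d) ≤ e i by constructor <;> intro <;> omega, ← this]
    unfold oF; split_ifs <;> omega
  · intro z hz
    have := h.pos z hz
    rw [oPerm_apply, if_neg (by omega), show oI z = z by unfold oI; split_ifs <;> omega]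
    unfold oF; split_ifs <;> omega
  · intro x y hx hy
    have := h.S x y hx hy
    rw [oPerm_apply, oPerm_apply, if_neg (by omega), if_neg (by omega), oF_lt]
    rwa [show oI x = x by unfold oI; split_ifs <;> omega,
      show oI y = y by unfold oI; split_ifs <;> omega]

def Btw (S : ℤ → ℤ → ℕ) (p q r : ℤ) : Prop :=
  min (S p q) (S q r) ≤ S p r ∧ S p r ≤ max (S p q) (S q r)

structure PreO (K : Equiv.Perm ℤ) (N : ℕ) (S : ℤ → ℤ → ℕ) : Prop where
  zero : ∀ p q, ¬ p < q → S p q = 0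
  symm : ∀ p q, S p q = S (-q) (-p)
  pos : ∀ p q, p < q → 1 ≤ S p q
  le : ∀ p q, S p q ≤ N + 1
  inv : ∀ p q, p < q → (S p q ≤ N ↔ K q < K p)
  inj : ∀ p q p' q', p < q → p' < q' → p ≠ 0 → q ≠ 0 → p' ≠ 0 → q' ≠ 0 → S p q ≤ N →
    S p q = S p' q' → (p' = p ∧ q' = q) ∨ (p' = - q ∧ q' = - p)
  surj : ∀ k, 1 ≤ k → k ≤ N → ∃ p q, p < q ∧ S p q = k
  zr : ∀ p, p < 0 → S p 0 = S p (-p)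

def toT (S : ℤ → ℤ → ℕ) : ℤ → ℤ → ℕ := fun x y => S (oF x) (oF y)
def toS (T : ℤ → ℤ → ℕ) : ℤ → ℤ → ℕ := fun p q =>
  if p = 0 then (if 0 < q then T (1 - q) q else 0)
  else if q = 0 then (if p < 0 then T (p+1) (-p) else 0) else T (oI p) (oI q)

lemma PreO.zr' {K : Equiv.Perm ℤ} {N : ℕ} {S : ℤ → ℤ → ℕ} (h : PreO K N S) (q : ℤ) (hq : 0 < q) :
    S 0 q = S (-q) q := by
  rw [h.symm 0 q]
  have := h.zr (-q) (by omega)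
  simpa using this

lemma toT_good {w : Equiv.Perm ℤ} {N : ℕ} {S : ℤ → ℤ → ℕ} (h : PreO (oPerm w) N S)
    (hb : ∀ p q r, p < q → q < r → Btw S p q r) : Good w N (toT S) := by
  refine ⟨?_, ?_, ?_, ?_, ?_, ?_, ?_, ?_⟩
  · intro p q hpq; exact h.zero _ _ (by rwa [oF_lt])
  · intro p q; unfold toT; rw [h.symm, oF_odd, oF_odd]
  · intro p q hpq; exact h.pos _ _ (by rwa [oF_lt])
  · intro p q; exact h.le _ _
  · intro p q hpq
    unfold toT
    rw [h.inv _ _ (by rwa [oF_lt]), oPerm_o, oPerm_o, oF_lt]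
  · intro p q p' q' h1 h2 h3 h4
    have := h.inj _ _ _ _ (oF_lt.2 h1) (oF_lt.2 h2) (oF_ne _) (oF_ne _) (oF_ne _) (oF_ne _) h3 h4
    rw [← oF_odd, ← oF_odd] at this
    have inj : ∀ a b, oF a = oF b → a = b := fun a b hab => by rw [← oI_oF a, hab, oI_oF]
    rcases this with ⟨a, b⟩ | ⟨a, b⟩
    · left; exact ⟨inj _ _ a, inj _ _ b⟩
    · right; exact ⟨inj _ _ a, inj _ _ b⟩
  · intro k h1 h2
    obtain ⟨p, q, hpq, hk⟩ := h.surj k h1 h2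
    have : ∃ p q, p ≠ 0 ∧ q ≠ 0 ∧ p < q ∧ S p q = k := by
      by_cases hp : p = 0
      · subst hp
        exact ⟨-q, q, by omega, by omega, by omega, by rw [← h.zr' q hpq, hk]⟩
      by_cases hq : q = 0
      · subst hq
        exact ⟨p, -p, by omega, by omega, by omega, by rw [← h.zr p hpq, hk]⟩
      exact ⟨p, q, hp, hq, hpq, hk⟩
    obtain ⟨p, q, hp, hq, hpq, hk⟩ := this
    refine ⟨oI p, oI q, (oI_lt hp hq).2 hpq, ?_⟩
    unfold toT; rw [oF_oI p hp, oF_oI q hq, hk]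
  · intro p q r h1 h2
    exact hb _ _ _ (oF_lt.2 h1) (oF_lt.2 h2)

lemma toS_pre {w : Equiv.Perm ℤ} (hw : OddP w) {N : ℕ} {T : ℤ → ℤ → ℕ} (h : Good w N T) :
    PreO (oPerm w) N (toS T) := by
  have A : ∀ p q, p ≠ 0 → q ≠ 0 → toS T p q = T (oI p) (oI q) := by
    intro p q hp hq; simp [toS, hp, hq]
  have Z1 : ∀ p, p < 0 → toS T p 0 = toS T p (-p) := by
    intro p hp
    have : p ≠ 0 := by omega
    simp only [toS, this, if_true, if_false, hp, neg_eq_zero]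
    congr 1 <;> (unfold oI; split_ifs <;> omega)
  have Z2 : ∀ q, 0 < q → toS T 0 q = toS T (-q) q := by
    intro p hp
    have : p ≠ 0 := by omega
    simp only [toS, this, if_true, if_false, hp, neg_eq_zero]
    congr 1 <;> (unfold oI; split_ifs <;> omega)
  have S0 : ∀ p q, p ≠ 0 → q ≠ 0 → toS T p q = toS T (-q) (-p) := by
    intro p q hp hq
    rw [A p q hp hq, A _ _ (by omega) (by omega), oI_odd p hp, oI_odd q hq, h.symm]
  have ko : ∀ z, z ≠ 0 → oPerm w z = oF (w.symm (oI z)) := fun z hz => by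
    rw [oPerm_apply, if_neg hz]
  have kodd : ∀ z, oPerm w (-z) = - oPerm w z := by
    intro z
    by_cases hz : z = 0
    · simp [hz, oPerm_apply]
    · rw [oPerm_apply, oPerm_apply, if_neg (by omega), if_neg hz, oI_odd z hz, hw.symm, oF_odd]
  have k0 : oPerm w 0 = 0 := by simp [oPerm_apply]
  have inv0 : ∀ p q, p ≠ 0 → q ≠ 0 → p < q → (toS T p q ≤ N ↔ oPerm w q < oPerm w p) := by
    intro p q hp hq hpq
    rw [A p q hp hq, ko p hp, ko q hq, oF_lt]
    exact h.inv _ _ ((oI_lt hp hq).2 hpq)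
  have red : ∀ p q, p < q → ∃ p' q', p' ≠ 0 ∧ q' ≠ 0 ∧ p' < q' ∧ toS T p q = toS T p' q' ∧
      (oPerm w q < oPerm w p ↔ oPerm w q' < oPerm w p') := by
    intro p q hpq
    by_cases hp : p = 0
    · subst hp
      refine ⟨-q, q, by omega, by omega, by omega, Z2 q hpq, ?_⟩
      rw [kodd, k0]; omega
    by_cases hq : q = 0
    · subst hq
      refine ⟨p, -p, by omega, by omega, by omega, Z1 p hpq, ?_⟩
      rw [kodd, k0]; omega
    exact ⟨p, q, hp, hq, hpq, rfl, Iff.rfl⟩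
  refine ⟨?_, ?_, ?_, ?_, ?_, ?_, ?_, Z1⟩
  · intro p q hpq
    by_cases hp : p = 0
    · subst hp; simp [toS, hpq]
    by_cases hq : q = 0
    · subst hq; simp [toS, hpq]
    rw [A p q hp hq]; exact h.zero _ _ (by rwa [oI_lt hp hq])
  · intro p q
    by_cases hp : p = 0
    · subst hp
      by_cases hq : 0 < q
      · rw [Z2 q hq, neg_zero, Z1 (-q) (by omega), neg_neg]
      · simp only [toS, if_true, hq, if_false, neg_zero, Left.neg_neg_iff]
        split_ifs <;> first | rfl | omega
    by_cases hq : q = 0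
    · subst hq
      by_cases hp' : p < 0
      · rw [Z1 p hp', neg_zero, Z2 (-p) (by omega), neg_neg]
      · simp only [toS, if_true, hp, hp', if_false, neg_zero, Left.neg_pos_iff]
    exact S0 p q hp hq
  · intro p q hpq
    obtain ⟨p', q', a, b, c, e, -⟩ := red p q hpq
    rw [e, A p' q' a b]; exact h.pos _ _ ((oI_lt a b).2 c)
  · intro p q
    unfold toS; split_ifs <;> first | exact h.le _ _ | omega
  · intro p q hpq
    obtain ⟨p', q', a, b, c, e, f⟩ := red p q hpq
    rw [e, f]; exact inv0 p' q' a b c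
  · intro p q p' q' h1 h2 hp hq hp' hq' h3 h4
    rw [A p q hp hq] at h3 h4
    rw [A p' q' hp' hq'] at h4
    have := h.inj _ _ _ _ ((oI_lt hp hq).2 h1) ((oI_lt hp' hq').2 h2) h3 h4
    rw [← oI_odd p hp, ← oI_odd q hq] at this
    have inj : ∀ a b, a ≠ 0 → b ≠ 0 → oI a = oI b → a = b := fun a b ha hb hab => by
      rw [← oF_oI a ha, hab, oF_oI b hb]
    rcases this with ⟨a, b⟩ | ⟨a, b⟩
    · left; exact ⟨inj _ _ hp' hp a, inj _ _ hq' hq b⟩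
    · right; exact ⟨inj _ _ hp' (by omega) a, inj _ _ hq' (by omega) b⟩
  · intro k h1 h2
    obtain ⟨p, q, hpq, hk⟩ := h.surj k h1 h2
    exact ⟨oF p, oF q, oF_lt.2 hpq, by rw [A _ _ (oF_ne _) (oF_ne _), oI_oF, oI_oF, hk]⟩

lemma toS_btw {w : Equiv.Perm ℤ} (hw : OddP w) {N : ℕ} {T : ℤ → ℤ → ℕ} (h : Good w N T) 
    (p q r : ℤ) (hpq : p < q) (hqr : q < r) : Btw (toS T) p q r := by
  have hP := toS_pre hw h
  have A : ∀ p q r, p ≠ 0 → q ≠ 0 → r ≠ 0 → p < q → q < r → Btw (toS T) p q r := by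
    intro p q r hp hq hr h1 h2
    have := h.btw (oI p) (oI q) (oI r) ((oI_lt hp hq).2 h1) ((oI_lt hq hr).2 h2)
    simpa [Btw, toS, hp, hq, hr] using this
  have A3 : ∀ p q, p < q → q < 0 → Btw (toS T) p q 0 := by
    intro p q h1 h2
    have b1 := A p q (-q) (by omega) (by omega) (by omega) h1 (by omega)
    have b2 := A p (-q) (-p) (by omega) (by omega) (by omega) (by omega) (by omega)
    have s1 := hP.symm (-q) (-p)
    simp only [neg_neg] at s1
    unfold Btw at *
    rw [hP.zr p (by omega), hP.zr q h2]
    omega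
  by_cases hp : p = 0
  · subst hp
    have := A3 (-r) (-q) (by omega) (by omega)
    have s1 := hP.symm 0 q
    have s2 := hP.symm q r
    have s3 := hP.symm 0 r
    simp only [neg_zero] at s1 s3
    unfold Btw at *
    omega
  by_cases hr : r = 0
  · subst hr; exact A3 p q hpq hqr
  by_cases hq : q = 0
  · subst hq
    have z1 := hP.zr p hpq
    have z2 := hP.zr' r hqr
    rcases lt_trichotomy (-p) r with hh | hh | hh
    · have b1 := A p (-p) r (by omega) (by omega) (by omega) (by omega) (by omega)
      have b2 := A (-r) p r (by omega) (by omega) (by omega) (by omega) (by omega)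
      have s1 := hP.symm (-r) p
      simp only [neg_neg] at s1
      unfold Btw at *
      omega
    · unfold Btw; rw [z1, z2, show r = -p by omega, neg_neg]; simp
    · have b1 := A p (-r) r (by omega) (by omega) (by omega) (by omega) (by omega)
      have b2 := A p r (-p) (by omega) (by omega) (by omega) (by omega) (by omega)
      have s1 := hP.symm p (-r)
      simp only [neg_neg] at s1
      unfold Btw at *
      omega
  exact A p q r hp hq hr hpq hqr

lemma toT_toS (T : ℤ → ℤ → ℕ) : toT (toS T) = T := by
  funext x y
  simp [toT, toS, oF_ne, oI_oF]

lemma toS_toT {K : Equiv.Perm ℤ} {N : ℕ} {S : ℤ → ℤ → ℕ} (h : PreO K N S) : toS (toT S) = S := by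
  funext p q
  unfold toS toT
  split_ifs with h1 h2 h3 h4
  · subst h1; rw [h.zr' q h2]; congr 1 <;> (unfold oF; split_ifs <;> omega)
  · subst h1; rw [h.zero _ _ h2]
  · subst h3; rw [h.zr p h4]; congr 1 <;> (unfold oF; split_ifs <;> omega)
  · subst h3; rw [h.zero _ _ h4]
  · rw [oF_oI p h1, oF_oI q h3]

theorem goodO_card {w : Equiv.Perm ℤ} (hw : OddP w) (N : ℕ) :
    Nat.card {S : ℤ → ℤ → ℕ // PreO (oPerm w) N S ∧ ∀ p q r, p < q → q < r → Btw S p q r} =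
    Nat.card {T // Good w N T} :=
  Nat.card_congr
    { toFun := fun S => ⟨toT S.1, toT_good S.2.1 S.2.2⟩
      invFun := fun T => ⟨toS T.1, toS_pre hw T.2, toS_btw hw T.2⟩
      left_inv := fun S => Subtype.ext (toS_toT S.2.1)
      right_inv := fun T => Subtype.ext (toT_toS T.1) }

def colF (d : ℕ) (K : Equiv.Perm ℤ) (z : ℤ) : ℤ := if 1 ≤ z ∧ z ≤ d then -z else K z

def Sn (d : ℕ) (i z : ℤ) : Prop := -i < z ∧ (z < i ∨ d < z)

def condA (d : ℕ) (K : Equiv.Perm ℤ) (S : ℤ → ℤ → ℕ) (i u z : ℤ) : Prop :=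
  colF d K u < colF d K z ∧ -i < z ∧ z < u ∧ S (-i) u < S z u
def condB (d : ℕ) (K : Equiv.Perm ℤ) (S : ℤ → ℤ → ℕ) (i u z : ℤ) : Prop :=
  (colF d K u < colF d K z ∧ -i < z ∧ S (-i) z < S (-i) u) ∨ (z < -d ∧ S z u < S (-i) u)

instance (d K S i u) : DecidablePred (condA d K S i u) := fun _ => by unfold condA; infer_instance
instance (d K S i u) : DecidablePred (condB d K S i u) := fun _ => by unfold condB; infer_instance

noncomputable def setA (d n : ℕ) (K : Equiv.Perm ℤ) (S : ℤ → ℤ → ℕ) (i u : ℤ) : Finset ℤ :=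
  (Finset.Icc (-(n:ℤ)) n).filter (condA d K S i u)
noncomputable def setB (d n : ℕ) (K : Equiv.Perm ℤ) (S : ℤ → ℤ → ℕ) (i u : ℤ) : Finset ℤ :=
  (Finset.Icc (-(n:ℤ)) n).filter (condB d K S i u)

def BalU (d n : ℕ) (e : ℤ → ℕ) (K : Equiv.Perm ℤ) (S : ℤ → ℤ → ℕ) : Prop :=
  ∀ i u : ℤ, 1 ≤ i → i ≤ d → Sn d i u → colF d K u ≤ e i →
    (setA d n K S i u).card = (setB d n K S i u).card

section
variable {d n N : ℕ} {e : ℤ → ℕ} {K : Equiv.Perm ℤ} {S : ℤ → ℤ → ℕ}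

lemma OL.k0 (h : OL d n e K) : K 0 = 0 := by
  have := h.odd 0
  simp at this; omega

lemma OL.kneg (h : OL d n e K) (z : ℤ) (h1 : 1 ≤ z) (h2 : z ≤ d) : K z < 0 := by
  have := h.place z h1 h2
  rw [h.odd] at this; omega

lemma OL.kneg' (h : OL d n e K) (z : ℤ) (h1 : z < -d) : K z < 0 := by
  have := h.pos (-z) (by omega)
  rw [h.odd] at this; omega

lemma OL.kpos (h : OL d n e K) (z : ℤ) (h1 : z ≤ -1) (h2 : -d ≤ z) : 0 < K z := by
  have := h.kneg (-z) (by omega) (by omega)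
  rw [h.odd] at this; omega

lemma OL.fix' (h : OL d n e K) (z : ℤ) (h1 : z < -n) : K z = z := by
  have := h.fix (-z) (by omega)
  rw [h.odd] at this; omega

lemma OL.bd (h : OL d n e K) (z : ℤ) (h1 : -n ≤ z) (h2 : z ≤ n) : -n ≤ K z ∧ K z ≤ n := by
  constructor
  · by_contra hc
    have := K.injective (h.fix' (K z) (by omega))
    omega
  · by_contra hc
    have := K.injective (h.fix (K z) (by omega))
    omega

lemma OL.col_lt (h : OL d n e K) (i z : ℤ) (h1 : 1 ≤ i) (h2 : i ≤ d) (hz : Sn d i z) :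
    K z < K (-i) ↔ colF d K z ≤ e i := by
  have hp := h.place i h1 h2
  obtain ⟨a, b⟩ := hz
  unfold colF
  split_ifs with hc
  · have := h.kneg z hc.1 hc.2
    constructor <;> intro <;> omega
  · constructor
    · intro hk
      by_cases h0 : K z ≤ 0
      · omega
      have := (h.bef i h1 h2 (K z) (by omega) hk).1 (by simpa using a)
      exact this
    · intro hk; omega

lemma OL.col_inj (h : OL d n e K) (i z z' : ℤ) (h1 : 1 ≤ i) (h2 : i ≤ d) (hz : Sn d i z) (hz' : Sn d i z')
    (hc : colF d K z = colF d K z') : z = z' := by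
  have A : ∀ x, Sn d i x → ¬ (1 ≤ x ∧ x ≤ d) → 0 ≤ K x := by
    intro x hx hn
    obtain ⟨a, b⟩ := hx
    by_cases h0 : x = 0
    · rw [h0, h.k0]
    by_cases h3 : d < x
    · exact (h.pos x h3).le
    exact (h.kpos x (by omega) (by omega)).le
  unfold colF at hc
  split_ifs at hc with c1 c2 c2
  · omega
  · have := A z' hz' c2; omega
  · have := A z hz c1; omega
  · exact K.injective hc

lemma OL.col_gt (h : OL d n e K) (i z : ℤ) (h1 : 1 ≤ i) (h2 : i ≤ d) (hz : Sn d i z) :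
    -i < colF d K z := by
  obtain ⟨a, b⟩ := hz
  unfold colF
  split_ifs with c1
  · omega
  · by_cases h0 : z = 0
    · rw [h0, h.k0]; omega
    by_cases h3 : d < z
    · have := (h.pos z h3); omega
    have := (h.kpos z (by omega) (by omega)); omega

lemma OL.col_up (h : OL d n e K) (i u z : ℤ) (hi1 : 1 ≤ i) (hi : i ≤ d) (hu : Sn d i u)
    (hc : colF d K u < colF d K z) (h1 : u < z) : K u < K z := by
  obtain ⟨a, b⟩ := hu
  unfold colF at hc
  split_ifs at hc with c1 c2 c2
  · omega
  · have := h.kneg u c1.1 c1.2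
    have := h.pos z (by omega)
    omega
  · rcases lt_trichotomy u 0 with h0 | h0 | h0
    · have := h.kpos u (by omega) (by omega); omega
    · rw [h0, h.k0] at hc; omega
    · have : d < u := by omega
      omega
  · exact hc

lemma PreO.top (h : PreO K N S) (p q : ℤ) (hpq : p < q) (hK : K p < K q) : S p q = N + 1 := by
  have h1 := h.le p q
  have h2 := h.inv p q hpq
  have : ¬ S p q ≤ N := by rw [h2]; omega
  omega

lemma PreO.inj' (h : PreO K N S) (p q p' q' : ℤ) (h1 : p < q) (h2 : p' < q') (h3 : S p q ≤ N)
    (h4 : S p q = S p' q') :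
    ∃ a b a' b', ((p ≠ 0 ∧ q ≠ 0 ∧ a = p ∧ b = q) ∨ (p = 0 ∧ a = -q ∧ b = q) ∨ (q = 0 ∧ a = p ∧ b = -p)) ∧
      ((p' ≠ 0 ∧ q' ≠ 0 ∧ a' = p' ∧ b' = q') ∨ (p' = 0 ∧ a' = -q' ∧ b' = q') ∨ (q' = 0 ∧ a' = p' ∧ b' = -p')) ∧
      ((a' = a ∧ b' = b) ∨ (a' = -b ∧ b' = -a)) := by
  have key : ∀ p q, p < q → ∃ a b, ((p ≠ 0 ∧ q ≠ 0 ∧ a = p ∧ b = q) ∨ (p = 0 ∧ a = -q ∧ b = q) ∨ (q = 0 ∧ a = p ∧ b = -p)) ∧ S p q = S a b := by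
    intro p q hpq
    by_cases hp : p = 0
    · subst hp
      exact ⟨-q, q, Or.inr (Or.inl ⟨rfl, rfl, rfl⟩), h.zr' q hpq⟩
    by_cases hq : q = 0
    · subst hq
      exact ⟨p, -p, Or.inr (Or.inr ⟨rfl, rfl, rfl⟩), h.zr p hpq⟩
    exact ⟨p, q, Or.inl ⟨hp, hq, rfl, rfl⟩, rfl⟩
  obtain ⟨a, b, hab, hs⟩ := key p q h1
  obtain ⟨a', b', hab', hs'⟩ := key p' q' h2
  refine ⟨a, b, a', b', hab, hab', ?_⟩
  exact h.inj a b a' b' (by omega) (by omega) (by omega) (by omega) (by omega) (by omega)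
    (by omega) (by omega)

lemma PreO.ne1 (h : PreO K N S) (i z u : ℤ) (h1 : 1 ≤ i) (h2 : i ≤ d) (hu : Sn d i u)
    (hz : -i < z) (hzu : z < u) (hN : S (-i) u ≤ N) : S z u ≠ S (-i) u := by
  intro he
  obtain ⟨a, b⟩ := hu
  obtain ⟨_, _, _, _, H1, H2, H3⟩ := h.inj' (-i) u z u a hzu hN he.symm
  omega

lemma PreO.ne2 (h : PreO K N S) (i z u : ℤ) (h1 : 1 ≤ i) (h2 : i ≤ d) (hu : Sn d i u) (hz : -i < z) (hzu : z ≠ u)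
    (hzi : z ≠ i) (hN : S (-i) u ≤ N) : S (-i) z ≠ S (-i) u := by
  intro he
  obtain ⟨a, b⟩ := hu
  obtain ⟨_, _, _, _, H1, H2, H3⟩ := h.inj' (-i) u (-i) z a hz hN he.symm
  omega

lemma OL.xN (hO : OL d n e K) (hS : PreO K N S) (i u : ℤ) (h1 : 1 ≤ i) (h2 : i ≤ d) (hu : Sn d i u) :
    S (-i) u ≤ N ↔ colF d K u ≤ e i := by
  rw [hS.inv _ _ hu.1, hO.col_lt i u h1 h2 hu]

lemma OL.colSn (hO : OL d n e K) (i u z : ℤ) (h1 : 1 ≤ i) (h2 : i ≤ d) (hu : Sn d i u)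
    (hz : -i < z) (hc : colF d K u < colF d K z) : Sn d i z := by
  have := hO.col_gt i u h1 h2 hu
  refine ⟨hz, ?_⟩
  by_contra hcon
  unfold colF at *
  split_ifs at * <;> omega

lemma OL.rangeA (hO : OL d n e K) (i u z : ℤ) (h1 : 1 ≤ i) (h2 : i ≤ d) 
    (h : condA d K S i u z) : -n ≤ z ∧ z ≤ n := by
  obtain ⟨a, b, c, _⟩ := h
  have := hO.dn
  refine ⟨by omega, ?_⟩
  by_contra hc
  unfold colF at a
  rw [if_neg (by omega), if_neg (by omega), hO.fix u (by omega), hO.fix z (by omega)] at a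
  omega

lemma OL.rangeB (hO : OL d n e K) (hS : PreO K N S) (i u z : ℤ) (h1 : 1 ≤ i) (h2 : i ≤ d) (hu : Sn d i u)
    (hc : colF d K u ≤ e i) (h : condB d K S i u z) : -n ≤ z ∧ z ≤ n := by
  have dn := hO.dn
  have hX := (hO.xN hS i u h1 h2 hu).2 hc
  rcases h with ⟨a, b, c⟩ | ⟨a, b⟩
  · refine ⟨by omega, ?_⟩
    by_contra hcon
    have := (hS.inv (-i) z b).1 (by omega)
    rw [hO.fix z (by omega)] at this
    have := hO.bd (-i) (by omega) (by omega)
    omega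
  · refine ⟨?_, by omega⟩
    by_contra hcon
    have := hu.1
    have := (hS.inv z u (by omega)).1 (by omega)
    rw [hO.fix' z (by omega)] at this
    by_cases hun : u ≤ n
    · have := hO.bd u (by omega) (by omega)
      omega
    · rw [hO.fix u (by omega)] at this; omega

lemma OL.AB_eq (hO : OL d n e K) (hS : PreO K N S) (i u : ℤ) (h1 : 1 ≤ i) (h2 : i ≤ d) (hu : Sn d i u)
    (hc : colF d K u ≤ e i) (hb : ∀ p q r, p < q → q < r → Btw S p q r) :
    setA d n K S i u = setB d n K S i u := by
  have hX := (hO.xN hS i u h1 h2 hu).2 hc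
  unfold setA setB
  apply Finset.filter_congr
  intro z _
  constructor
  · rintro ⟨a, b, c, f⟩
    left
    refine ⟨a, b, ?_⟩
    have := (hb (-i) z u b c).1
    have := hS.ne2 i z u h1 h2 hu b (by omega) (by have := hO.colSn i u z h1 h2 hu b a; unfold Sn at this; omega) hX
    omega
  · rintro (⟨a, b, c⟩ | ⟨a, b⟩)
    · have hzu : z ≠ u := by rintro rfl; omega
      by_cases hzu' : u < z
      · have := (hb (-i) u z hu.1 hzu').1
        have := hS.top u z hzu' (hO.col_up i u z h1 h2 hu a hzu')
        omega
      · refine ⟨a, b, by omega, ?_⟩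
        have := (hb (-i) z u b (by omega)).2
        have := hS.ne1 i z u h1 h2 hu b (by omega) hX
        omega
    · exfalso
      have := (hb z (-i) u (by omega) hu.1).1
      have := hS.top z (-i) (by omega) (by
        have := hO.kneg' z a
        have := hO.kpos (-i) (by omega) (by omega)
        omega)
      omega

lemma OL.bal (hO : OL d n e K) (hS : PreO K N S) (hb : ∀ p q r, p < q → q < r → Btw S p q r) :
    BalU d n e K S := by
  intro i u h1 h2 hu hc
  rw [hO.AB_eq hS i u h1 h2 hu hc hb]

def LamS (d : ℕ) (i z : ℤ) : Prop := (-i ≤ z ∧ z ≤ i) ∨ z < -d ∨ d < z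
def BT (d : ℕ) (S : ℤ → ℤ → ℕ) (i : ℤ) : Prop :=
  ∀ p q r, LamS d i p → LamS d i q → LamS d i r → p < q → q < r → Btw S p q r

def SeenC (d : ℕ) (K : Equiv.Perm ℤ) (S : ℤ → ℤ → ℕ) (i c : ℤ) : Prop :=
  (∀ z z', Sn d i z → Sn d i z' → c ≤ colF d K z → c ≤ colF d K z' → z < z' → Btw S (-i) z z') ∧
  (∀ z y : ℤ, Sn d i z → c ≤ colF d K z → y < -d → S (-i) z ≤ S y z)

lemma OL.AB_eq' (hO : OL d n e K) (hS : PreO K N S) (i u : ℤ) (h1 : 1 ≤ i) (h2 : i ≤ d) (hu : Sn d i u)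
    (hc : colF d K u ≤ e i) (hb : BT d S (i-1)) (hs : SeenC d K S i (colF d K u + 1))
    (hcard : (setA d n K S i u).card = (setB d n K S i u).card) :
    ∀ z, condA d K S i u z ↔ condB d K S i u z := by
  have hX := (hO.xN hS i u h1 h2 hu).2 hc
  have hl : ∀ z, Sn d i z → LamS d (i-1) z := by intro z hz; unfold Sn at hz; unfold LamS; omega
  have key : ∀ z1 z2, condA d K S i u z1 → ¬ condB d K S i u z1 → condB d K S i u z2 →
      ¬ condA d K S i u z2 → False := by
    rintro z1 z2 ⟨a1, a2, a3, a4⟩ hb1 hb2 ha2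
    have s1 := hO.colSn i u z1 h1 h2 hu a2 a1
    have g1 : S (-i) u ≤ S (-i) z1 := by
      by_contra hcon; exact hb1 (Or.inl ⟨a1, a2, by omega⟩)
    rcases hb2 with ⟨c1, c2, c3⟩ | ⟨c1, c2⟩
    · have s2 := hO.colSn i u z2 h1 h2 hu c2 c1
      have hzu : z2 ≠ u := by rintro rfl; omega
      have hz12 : z1 ≠ z2 := by rintro rfl; omega
      by_cases hlt : z2 < u
      · have g2 : S z2 u ≤ S (-i) u := by
          by_contra hcon; exact ha2 ⟨c1, c2, hlt, by omega⟩
        by_cases h12 : z1 < z2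
        · have t1 := hs.1 z1 z2 s1 s2 (by omega) (by omega) h12
          have t2 := hb z1 z2 u (hl _ s1) (hl _ s2) (hl _ hu) h12 hlt
          unfold Btw at t1 t2
          omega
        · have t1 := hs.1 z2 z1 s2 s1 (by omega) (by omega) (by omega)
          have t2 := hb z2 z1 u (hl _ s2) (hl _ s1) (hl _ hu) (by omega) a3
          have := hS.ne1 i z2 u h1 h2 hu c2 hlt hX
          unfold Btw at t1 t2
          omega
      · have t1 := hs.1 z1 z2 s1 s2 (by omega) (by omega) (by omega)
        have t2 := hb z1 u z2 (hl _ s1) (hl _ hu) (hl _ s2) a3 (by omega)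
        have := hS.top u z2 (by omega) (hO.col_up i u z2 h1 h2 hu c1 (by omega))
        unfold Btw at t1 t2
        omega
    · have t1 := hs.2 z1 z2 s1 (by omega) c1
      have t2 := hb z2 z1 u (Or.inr (Or.inl c1)) (hl _ s1) (hl _ hu) (by omega) a3
      unfold Btw at t2
      omega
  have heq : setA d n K S i u = setB d n K S i u := by
    by_cases hsub : setA d n K S i u ⊆ setB d n K S i u
    · exact Finset.eq_of_subset_of_card_le hsub hcard.ge
    · have hsub2 : setB d n K S i u ⊆ setA d n K S i u := by
        intro z2 hz2
        by_contra hz2'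
        apply hsub
        intro z1 hz1
        by_contra hz1'
        simp only [setA, setB, Finset.mem_filter] at hz1 hz2 hz1' hz2'
        exact key z1 z2 hz1.2 (fun h => hz1' ⟨hz1.1, h⟩) hz2.2 (fun h => hz2' ⟨hz2.1, h⟩)
      exact (Finset.eq_of_subset_of_card_le hsub2 hcard.le).symm
  intro z
  constructor
  · intro h
    have : z ∈ setA d n K S i u := by
      simp only [setA, Finset.mem_filter, Finset.mem_Icc]; exact ⟨hO.rangeA i u z h1 h2 h, h⟩
    rw [heq] at this
    simp only [setB, Finset.mem_filter] at this; exact this.2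
  · intro h
    have : z ∈ setB d n K S i u := by
      simp only [setB, Finset.mem_filter, Finset.mem_Icc]; exact ⟨hO.rangeB hS i u z h1 h2 hu hc h, h⟩
    rw [← heq] at this
    simp only [setA, Finset.mem_filter] at this; exact this.2

lemma OL.seen_step (hO : OL d n e K) (hS : PreO K N S) (i c : ℤ) (h1 : 1 ≤ i) (h2 : i ≤ d)
    (hc : c ≤ e i) (hb : BT d S (i-1)) (hs : SeenC d K S i (c + 1)) (hbal : BalU d n e K S) :
    SeenC d K S i c := by
  have E : ∀ u, Sn d i u → colF d K u = c → ∀ z, condA d K S i u z ↔ condB d K S i u z := by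
    intro u hu huc
    exact hO.AB_eq' hS i u h1 h2 hu (by omega) hb (by rw [huc]; exact hs)
      (hbal i u h1 h2 hu (by omega))
  constructor
  · intro z z' hz hz' hcz hcz' hlt
    by_cases e1 : colF d K z = c
    · by_cases e2 : colF d K z' = c
      · have := hO.col_inj i z z' h1 h2 hz hz' (by omega); omega
      have top := hS.top z z' hlt (hO.col_up i z z' h1 h2 hz (by omega) hlt)
      have := E z hz e1 z'
      have nb : ¬ condB d K S i z z' := by
        rw [← this]; rintro ⟨_, _, a, _⟩; omega
      have : S (-i) z ≤ S (-i) z' := by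
        by_contra hcon
        exact nb (Or.inl ⟨by omega, hz'.1, by omega⟩)
      have := hS.le (-i) z'
      unfold Btw
      omega
    · by_cases e2 : colF d K z' = c
      · have := E z' hz' e2 z
        by_cases hA : condA d K S i z' z
        · have hB := this.1 hA
          obtain ⟨a1, a2, a3, a4⟩ := hA
          have := hz.1
          unfold condB at hB
          unfold Btw
          omega
        · have hB := mt this.2 hA
          have g1 : ¬ S (-i) z' < S z z' := fun hh => hA ⟨by omega, hz.1, hlt, hh⟩
          have g2 : ¬ S (-i) z < S (-i) z' := fun hh => hB (Or.inl ⟨by omega, hz.1, hh⟩)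
          unfold Btw
          omega
      · exact hs.1 z z' hz hz' (by omega) (by omega) hlt
  · intro z y hz hcz hy
    by_cases e1 : colF d K z = c
    · by_contra hcon
      have := (E z hz e1 y).2 (Or.inr ⟨hy, by omega⟩)
      obtain ⟨a1, a2, a3, a4⟩ := this
      omega
    · exact hs.2 z y hz (by omega) hy

lemma OL.seen_all (hO : OL d n e K) (hS : PreO K N S) (i : ℤ) (h1 : 1 ≤ i) (h2 : i ≤ d)
    (hb : BT d S (i-1)) (hbal : BalU d n e K S) :
    ∀ k : ℕ, SeenC d K S i ((e i : ℤ) + 1 - k) := by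
  intro k
  induction k with
  | zero =>
    have T : ∀ z, Sn d i z → (e i : ℤ) + 1 - (0:ℕ) ≤ colF d K z → S (-i) z = N + 1 := by
      intro z hz hcz
      have := hO.xN hS i z h1 h2 hz
      have := hS.le (-i) z
      omega
    constructor
    · intro z z' hz hz' hcz hcz' hlt
      have := T z hz hcz
      have := T z' hz' hcz'
      unfold Btw
      omega
    · intro z y hz hcz hy
      have hk : 0 < K z := by
        unfold colF at hcz
        split_ifs at hcz <;> omega
      have := hS.top y z (by have := hz.1; omega) (by have := hO.kneg' y hy; omega)
      have := hS.le (-i) z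
      omega
  | succ k ih =>
    refine hO.seen_step hS i _ h1 h2 (by omega) hb ?_ hbal
    convert ih using 1
    push_cast; ring

lemma Btw.mirror (hS : PreO K N S) {p q r : ℤ} (h : Btw S (-r) (-q) (-p)) : Btw S p q r := by
  unfold Btw at *
  rw [hS.symm p q, hS.symm q r, hS.symm p r]
  omega

lemma OL.BT_step (hO : OL d n e K) (hS : PreO K N S) (i : ℤ) (h1 : 1 ≤ i) (h2 : i ≤ d)
    (hb : BT d S (i-1)) (hbal : BalU d n e K S) : BT d S i := by
  have seen : SeenC d K S i (-i) := by
    have := hO.seen_all hS i h1 h2 hb hbal ((e i : ℤ) + 1 + i).toNat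
    convert this using 1
    omega
  have s1 : ∀ z z', Sn d i z → Sn d i z' → z < z' → Btw S (-i) z z' := by
    intro z z' hz hz' hlt
    exact seen.1 z z' hz hz' (hO.col_gt i z h1 h2 hz).le (hO.col_gt i z' h1 h2 hz').le hlt
  have s2 : ∀ z y : ℤ, Sn d i z → y < -d → S (-i) z ≤ S y z := by
    intro z y hz hy
    exact seen.2 z y hz (hO.col_gt i z h1 h2 hz).le hy
  have z1 : S (-i) 0 = S (-i) i := by simpa using hS.zr (-i) (by omega)
  have sn0 : Sn d i 0 := ⟨by omega, by omega⟩
  have tpi : ∀ m, (d:ℤ) < m → S i m = N + 1 := by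
    intro m hm
    exact hS.top _ _ (by omega) (by have := hO.kneg i h1 h2; have := hO.pos m hm; omega)
  have tp0 : ∀ m, (d:ℤ) < m → S 0 m = N + 1 := by
    intro m hm
    exact hS.top _ _ (by omega) (by have := hO.k0; have := hO.pos m hm; omega)
  have C2 : ∀ q r, LamS d i q → LamS d i r → -i < q → q < r → Btw S (-i) q r := by
    intro q r hq hr h3 h4
    by_cases hqi : q = i
    · subst hqi
      have hm : (d:ℤ) < r := by unfold LamS at hr; omega
      have t := s1 0 r sn0 ⟨by omega, by omega⟩ (by omega)
      have := tp0 r hm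
      have := tpi r hm
      have := hS.le (-q) r
      unfold Btw at *
      omega
    by_cases hri : r = i
    · subst hri
      rcases lt_trichotomy q 0 with h0 | h0 | h0
      · have t1 := s1 0 (-q) sn0 ⟨by omega, by omega⟩ (by omega)
        have t2 := s1 q 0 ⟨by omega, by omega⟩ sn0 (by omega)
        have e1 := hS.symm q r
        have e2 : S q 0 = S 0 (-q) := by simpa using hS.symm q 0
        unfold Btw at *
        omega
      · subst h0
        have e1 : S 0 r = S (-r) 0 := by simpa using hS.symm 0 r
        unfold Btw
        omega
      · have t1 := s1 0 q sn0 ⟨by omega, by omega⟩ (by omega)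
        have t2 := s1 (-q) 0 ⟨by omega, by omega⟩ sn0 (by omega)
        have e1 := hS.symm q r
        have e2 : S 0 q = S (-q) 0 := by simpa using hS.symm 0 q
        unfold Btw at *
        omega
    refine s1 q r ⟨h3, ?_⟩ ⟨by omega, ?_⟩ h4
    · unfold LamS at hq; omega
    · unfold LamS at hr; omega
  have C4 : ∀ p r, LamS d i p → LamS d i r → p < i → i < r → Btw S p i r := by
    intro p r hp hr h3 h4
    by_cases hpi : p = -i
    · subst hpi; exact C2 i r (Or.inl ⟨by omega, le_rfl⟩) hr (by omega) h4
    have hm : (d:ℤ) < r := by unfold LamS at hr; omega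
    have t := s2 (-p) (-r) (by unfold LamS at hp; unfold Sn; omega) (by omega)
    have := tpi r hm
    have e1 := hS.symm p i
    have e2 := hS.symm p r
    have := hS.le p r
    unfold Btw
    omega
  have C6 : ∀ q r, LamS d i q → i < q → q < r → Btw S i q r := by
    intro q r hq h3 h4
    have hm : (d:ℤ) < q := by unfold LamS at hq; omega
    have := tpi q hm
    have := tpi r (by omega)
    have := hS.le q r
    unfold Btw
    omega
  have lneg : ∀ z, LamS d i z → LamS d i (-z) := by intro z hz; unfold LamS at *; omega
  intro p q r hp hq hr h3 h4
  by_cases c1 : p = -i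
  · subst c1; exact C2 q r hq hr h3 h4
  by_cases c2 : r = i
  · subst c2
    exact Btw.mirror hS (C2 _ _ (lneg _ hq) (lneg _ hp) (by omega) (by omega))
  by_cases c3 : q = i
  · subst c3; exact C4 p r hp hr h3 h4
  by_cases c4 : q = -i
  · subst c4
    apply Btw.mirror hS
    rw [neg_neg]
    exact C4 _ _ (lneg _ hr) (lneg _ hp) (by omega) (by omega)
  by_cases c5 : p = i
  · subst c5; exact C6 q r hq h3 h4
  by_cases c6 : r = -i
  · subst c6
    apply Btw.mirror hS
    rw [neg_neg]
    exact C6 _ _ (lneg _ hq) (by omega) (by omega)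
  exact hb p q r (by unfold LamS at *; omega) (by unfold LamS at *; omega)
    (by unfold LamS at *; omega) h3 h4

lemma OL.BT_all (hO : OL d n e K) (hS : PreO K N S) (hbal : BalU d n e K S) :
    ∀ i : ℕ, i ≤ d → BT d S i := by
  intro i
  induction i with
  | zero =>
    intro _ p q r hp hq hr h3 h4
    have T : ∀ a b, LamS d (0:ℕ) a → LamS d (0:ℕ) b → a < b → S a b = N + 1 := by
      intro a b ha hb hab
      apply hS.top a b hab
      have n0 := hO.k0
      by_cases h0 : a = 0
      · have := hO.pos b (by unfold LamS at *; omega)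
        subst h0; omega
      by_cases h0' : b = 0
      · have := hO.kneg' a (by unfold LamS at *; omega)
        subst h0'; omega
      by_cases ha' : (d:ℤ) < a
      · exact hO.S a b ha' hab
      have ha2 := hO.kneg' a (by unfold LamS at *; omega)
      by_cases hb' : (d:ℤ) < b
      · have := hO.pos b hb'; omega
      have := hO.S (-b) (-a) (by unfold LamS at *; omega) (by omega)
      rw [hO.odd, hO.odd] at this
      omega
    have := T p q hp hq h3
    have := T q r hq hr h4
    have := T p r hp hr (by omega)
    unfold Btw; omega
  | succ k ih =>
    intro hk
    have := hO.BT_step hS ((k:ℤ)+1) (by omega) (by omega) (by simpa using ih (by omega)) hbal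
    push_cast; exact this

lemma OL.btw_iff (hO : OL d n e K) (hS : PreO K N S) :
    (∀ p q r, p < q → q < r → Btw S p q r) ↔ BalU d n e K S := by
  constructor
  · exact hO.bal hS
  · intro hbal p q r h1 h2
    exact hO.BT_all hS hbal d le_rfl p q r (by unfold LamS; omega) (by unfold LamS; omega)
      (by unfold LamS; omega) h1 h2
end

def ltr (K : Equiv.Perm ℤ) (c : ℤ) : ℤ := if c < 0 then -c else K.symm c
def Bx (d : ℕ) (e : ℤ → ℕ) (i c : ℤ) : Prop := 1 ≤ i ∧ i ≤ d ∧ -i < c ∧ c ≤ e i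
def Rw (d : ℕ) (i z : ℤ) : Prop := 1 ≤ i ∧ i ≤ d ∧ Sn d i z
def bb (d : ℕ) (B : ℤ × ℤ → ℕ) (i c : ℤ) : ℕ := B ((d:ℤ) + 1 - i, c)
def rv (d : ℕ) (e : ℤ → ℕ) (K : Equiv.Perm ℤ) (N : ℕ) (B : ℤ × ℤ → ℕ) (i z : ℤ) : ℕ :=
  if colF d K z ≤ e i then bb d B i (colF d K z) else N + 1

open Classical in
noncomputable def Sof (d : ℕ) (e : ℤ → ℕ) (K : Equiv.Perm ℤ) (N : ℕ) (B : ℤ × ℤ → ℕ) (p q : ℤ) : ℕ :=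
  if Rw d (-p) q then rv d e K N B (-p) q
  else if Rw d q (-p) then rv d e K N B q (-p)
  else if p = -q ∧ 1 ≤ q ∧ q ≤ d then bb d B q 0
  else if p < q then N + 1 else 0

open Classical in
noncomputable def Bof (d : ℕ) (lam : ℕ → ℕ) (K : Equiv.Perm ℤ) (S : ℤ → ℤ → ℕ) (p : ℤ × ℤ) : ℕ :=
  if p ∈ Diagram d lam then S (-((d:ℤ) + 1 - p.1)) (ltr K p.2) else 0

section
variable {d n N : ℕ} {e : ℤ → ℕ} {K : Equiv.Perm ℤ} {S : ℤ → ℤ → ℕ} {lam : ℕ → ℕ} {B : ℤ × ℤ → ℕ}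

lemma diag_iff (he : ∀ i : ℤ, 1 ≤ i → i ≤ d → (e i : ℤ) + i = lam ((d:ℤ) + 1 - i).toNat) (i c : ℤ) :
    ((d:ℤ) + 1 - i, c) ∈ Diagram d lam ↔ Bx d e i c := by
  unfold Diagram Bx
  simp only [Set.mem_ofPred_eq]
  constructor
  · rintro ⟨a, b, f, g⟩
    have := he i (by omega) (by omega)
    refine ⟨by omega, by omega, by omega, by omega⟩
  · rintro ⟨a, b, f, g⟩
    have := he i (by omega) (by omega)
    refine ⟨by omega, by omega, by omega, by omega⟩

lemma OL.ltr_col (h : OL d n e K) {i z : ℤ} (hz : Rw d i z) : ltr K (colF d K z) = z := by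
  obtain ⟨h1, h2, a, b⟩ := hz
  unfold colF ltr
  by_cases hc : 1 ≤ z ∧ z ≤ d
  · rw [if_pos hc, if_pos (by omega), neg_neg]
  · have : 0 ≤ K z := by
      by_cases h0 : z = 0
      · rw [h0, h.k0]
      by_cases h3 : d < z
      · exact (h.pos z h3).le
      exact (h.kpos z (by omega) (by omega)).le
    rw [if_neg hc, if_neg (by omega), Equiv.symm_apply_apply]

lemma OL.ltr_sn (h : OL d n e K) {i c : ℤ} (hb : Bx d e i c) : Rw d i (ltr K c) ∧ colF d K (ltr K c) = c := by
  obtain ⟨h1, h2, a, b⟩ := hb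
  rcases lt_trichotomy c 0 with h0 | h0 | h0
  · have : ltr K c = -c := by unfold ltr; rw [if_pos h0]
    rw [this]
    refine ⟨⟨h1, h2, by omega, by omega⟩, ?_⟩
    unfold colF
    rw [if_pos (by omega), neg_neg]
  · have : ltr K c = 0 := by
      unfold ltr; rw [if_neg (by omega), h0, Equiv.symm_apply_eq, h.k0]
    rw [this]
    refine ⟨⟨h1, h2, by omega, by omega⟩, ?_⟩
    unfold colF
    rw [if_neg (by omega), h.k0, h0]
  · have e1 : ltr K c = K.symm c := by unfold ltr; rw [if_neg (by omega)]
    have hp := h.place i h1 h2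
    have := (h.bef i h1 h2 c (by omega) (by omega)).2 b
    have hk : K (K.symm c) = c := Equiv.apply_symm_apply _ _
    have n1 : ¬ (1 ≤ K.symm c ∧ K.symm c ≤ d) := by
      rintro ⟨x, y⟩
      have := h.kneg _ x y; omega
    rw [e1]
    refine ⟨⟨h1, h2, this, by omega⟩, ?_⟩
    unfold colF
    rw [if_neg n1, hk]

lemma OL.col_bx (h : OL d n e K) {i z : ℤ} (hz : Rw d i z) : Bx d e i (colF d K z) ↔ colF d K z ≤ e i := by
  constructor
  · intro hb; exact hb.2.2.2
  · intro hb; exact ⟨hz.1, hz.2.1, h.col_gt i z hz.1 hz.2.1 hz.2.2, hb⟩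

lemma cls (p q : ℤ) (hpq : p < q) : Rw d (-p) q ∨ Rw d q (-p) ∨ (p = -q ∧ 1 ≤ q ∧ q ≤ d) ∨
    ((p < -d ∨ 0 ≤ p) ∧ (q ≤ 0 ∨ d < q)) := by
  unfold Rw Sn; omega

lemma OL.rest (h : OL d n e K) (p q : ℤ) (hpq : p < q) (h1 : p < -d ∨ 0 ≤ p) (h2 : q ≤ 0 ∨ d < q) :
    K p < K q := by
  have n0 := h.k0
  by_cases hq : (d:ℤ) < q
  · by_cases hp : (d:ℤ) < p
    · exact h.S p q hp hpq
    have := h.pos q hq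
    rcases h1 with h1 | h1
    · have := h.kneg' p h1; omega
    by_cases hp0 : p = 0
    · subst hp0; omega
    have := h.kneg p (by omega) (by omega); omega
  · have hp : p < -d := by omega
    have := h.kneg' p hp
    by_cases hq0 : q = 0
    · subst hq0; omega
    by_cases hq1 : -d ≤ q
    · have := h.kpos q (by omega) hq1; omega
    have := h.S (-q) (-p) (by omega) (by omega)
    rw [h.odd, h.odd] at this; omega

lemma Sof_a {i z : ℤ} (h : Rw d i z) : Sof d e K N B (-i) z = rv d e K N B i z := by
  unfold Sof
  rw [neg_neg, if_pos h]

lemma Sof_b {i z : ℤ} (h : Rw d i z) : Sof d e K N B (-z) i = rv d e K N B i z := by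
  unfold Sof
  rw [neg_neg, if_neg (by unfold Rw Sn at *; omega), if_pos h]

lemma Sof_c {i : ℤ} (h1 : 1 ≤ i) (h2 : i ≤ d) : Sof d e K N B (-i) i = bb d B i 0 := by
  unfold Sof
  rw [neg_neg, if_neg (by unfold Rw Sn at *; omega), if_neg (by unfold Rw Sn at *; omega), if_pos ⟨rfl, h1, h2⟩]

lemma Sof_d {p q : ℤ} (hpq : p < q) (h1 : p < -d ∨ 0 ≤ p) (h2 : q ≤ 0 ∨ d < q) :
    Sof d e K N B p q = N + 1 := by
  unfold Sof
  rw [if_neg (by unfold Rw Sn at *; omega), if_neg (by unfold Rw Sn at *; omega),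
    if_neg (by omega), if_pos hpq]

lemma Sof_z {p q : ℤ} (hpq : ¬ p < q) : Sof d e K N B p q = 0 := by
  unfold Sof
  rw [if_neg (by unfold Rw Sn at *; omega), if_neg (by unfold Rw Sn at *; omega),
    if_neg (by omega), if_neg hpq]

lemma Rw0 {i : ℤ} (h1 : 1 ≤ i) (h2 : i ≤ d) : Rw d i 0 := ⟨h1, h2, by omega, by omega⟩

lemma OL.col0 (h : OL d n e K) : colF d K 0 = 0 := by
  unfold colF; rw [if_neg (by omega), h.k0]

lemma OL.rv0 (h : OL d n e K) {i : ℤ} : rv d e K N B i 0 = bb d B i 0 := by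
  unfold rv; rw [h.col0, if_pos (by omega)]

structure Fil (d N : ℕ) (e : ℤ → ℕ) (B : ℤ × ℤ → ℕ) : Prop where
  pos : ∀ i c, Bx d e i c → 1 ≤ bb d B i c
  le : ∀ i c, Bx d e i c → bb d B i c ≤ N
  inj : ∀ i c i' c', Bx d e i c → Bx d e i' c' → bb d B i c = bb d B i' c' → i = i' ∧ c = c'
  surj : ∀ k, 1 ≤ k → k ≤ N → ∃ i c, Bx d e i c ∧ bb d B i c = k
  off : ∀ i c, ¬ Bx d e i c → bb d B i c = 0

lemma fil_iff (he : ∀ i : ℤ, 1 ≤ i → i ≤ d → (e i : ℤ) + i = lam ((d:ℤ) + 1 - i).toNat)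
    (hN : sizeP d lam = N) : IsFilling d lam B ↔ Fil d N e B := by
  subst hN
  have back : ∀ p : ℤ × ℤ, p = ((d:ℤ) + 1 - ((d:ℤ) + 1 - p.1), p.2) := by
    intro p; ext <;> simp
  constructor
  · rintro ⟨⟨h1, h2, h3⟩, h4⟩
    refine ⟨?_, ?_, ?_, ?_, ?_⟩
    · intro i c hb; exact (h1 ((diag_iff he i c).2 hb)).1
    · intro i c hb; exact (h1 ((diag_iff he i c).2 hb)).2
    · intro i c i' c' hb hb' heq
      have := h2 ((diag_iff he i c).2 hb) ((diag_iff he i' c').2 hb') heq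
      simp only [Prod.mk.injEq] at this
      omega
    · intro k hk1 hk2
      obtain ⟨p, hp, hk⟩ := h3 (show k ∈ Set.Icc 1 _ from ⟨hk1, hk2⟩)
      rw [back p] at hp hk
      exact ⟨_, _, (diag_iff he _ _).1 hp, hk⟩
    · intro i c hb
      exact h4 _ (by rwa [diag_iff he])
  · rintro ⟨h1, h2, h3, h4, h5⟩
    refine ⟨⟨?_, ?_, ?_⟩, ?_⟩
    · intro p hp
      rw [back p, diag_iff he] at hp
      rw [back p]
      exact ⟨h1 _ _ hp, h2 _ _ hp⟩
    · intro p hp q hq hpq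
      rw [back p, diag_iff he] at hp
      rw [back q, diag_iff he] at hq
      rw [back p, back q] at hpq
      have := h3 _ _ _ _ hp hq hpq
      ext <;> omega
    · intro k hk
      obtain ⟨i, c, hb, hk⟩ := h4 k hk.1 hk.2
      exact ⟨_, (diag_iff he i c).2 hb, hk⟩
    · intro p hp
      rw [back p, diag_iff he] at hp
      rw [back p]
      exact h5 _ _ hp

lemma OL.rv_pos (h : OL d n e K) (hf : Fil d N e B) {i z : ℤ} (hz : Rw d i z) : 1 ≤ rv d e K N B i z := by
  unfold rv
  split_ifs with hc
  · exact hf.pos _ _ ((h.col_bx hz).2 hc)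
  · omega

lemma OL.rv_le (h : OL d n e K) (hf : Fil d N e B) {i z : ℤ} (hz : Rw d i z) : rv d e K N B i z ≤ N + 1 := by
  unfold rv
  split_ifs with hc
  · have := hf.le _ _ ((h.col_bx hz).2 hc); omega
  · omega

lemma OL.rv_leN (h : OL d n e K) (hf : Fil d N e B) {i z : ℤ} (hz : Rw d i z) :
    rv d e K N B i z ≤ N ↔ colF d K z ≤ e i := by
  unfold rv
  split_ifs with hc
  · have := hf.le _ _ ((h.col_bx hz).2 hc); simp [hc, this]
  · simp [hc]

lemma OL.rep (h : OL d n e K) (hf : Fil d N e B) (p q : ℤ) (hpq : p < q) (hN : Sof d e K N B p q ≤ N) :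
    ∃ i z, Rw d i z ∧ colF d K z ≤ e i ∧ Sof d e K N B p q = bb d B i (colF d K z) ∧
      ((p = -i ∧ q = z) ∨ (p = -z ∧ q = i) ∨ (p = -i ∧ q = i ∧ z = 0)) := by
  rcases cls (d := d) p q hpq with hc | hc | hc | hc
  · have e1 := Sof_a (e := e) (K := K) (N := N) (B := B) hc
    rw [neg_neg] at e1
    rw [e1] at hN ⊢
    have := (h.rv_leN hf hc).1 hN
    refine ⟨-p, q, hc, this, ?_, Or.inl ⟨by omega, rfl⟩⟩
    unfold rv; rw [if_pos this]
  · have e1 := Sof_b (e := e) (K := K) (N := N) (B := B) hc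
    rw [neg_neg] at e1
    rw [e1] at hN ⊢
    have := (h.rv_leN hf hc).1 hN
    refine ⟨q, -p, hc, this, ?_, Or.inr (Or.inl ⟨by omega, rfl⟩)⟩
    unfold rv; rw [if_pos this]
  · obtain ⟨rfl, h1, h2⟩ := hc
    refine ⟨q, 0, Rw0 h1 h2, by rw [h.col0]; omega, ?_, Or.inr (Or.inr ⟨rfl, rfl, rfl⟩)⟩
    rw [Sof_c h1 h2, h.col0]
  · rw [Sof_d hpq hc.1 hc.2] at hN; omega

lemma OL.sof_pre (h : OL d n e K) (hf : Fil d N e B) : PreO K N (Sof d e K N B) := by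
  have bx0 : ∀ i : ℤ, 1 ≤ i → i ≤ d → Bx d e i 0 := fun i h1 h2 => ⟨h1, h2, by omega, by omega⟩
  have symm : ∀ p q, Sof d e K N B p q = Sof d e K N B (-q) (-p) := by
    intro p q
    by_cases hpq : p < q
    · rcases cls (d := d) p q hpq with hc | hc | hc | hc
      · have e1 := Sof_a (e := e) (K := K) (N := N) (B := B) hc
        rw [neg_neg] at e1
        rw [e1, Sof_b hc]
      · have e1 := Sof_b (e := e) (K := K) (N := N) (B := B) hc
        rw [neg_neg] at e1
        rw [e1, Sof_a hc]
      · obtain ⟨rfl, h1, h2⟩ := hc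
        rw [neg_neg]
      · rw [Sof_d hpq hc.1 hc.2, Sof_d (by omega) (by omega) (by omega)]
    · rw [Sof_z hpq, Sof_z (by omega)]
  refine ⟨fun p q => Sof_z, symm, ?_, ?_, ?_, ?_, ?_, ?_⟩
  · intro p q hpq
    rcases cls (d := d) p q hpq with hc | hc | hc | hc
    · have e1 := Sof_a (e := e) (K := K) (N := N) (B := B) hc
      rw [neg_neg] at e1
      rw [e1]; exact h.rv_pos hf hc
    · have e1 := Sof_b (e := e) (K := K) (N := N) (B := B) hc
      rw [neg_neg] at e1
      rw [e1]; exact h.rv_pos hf hc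
    · obtain ⟨rfl, h1, h2⟩ := hc
      rw [Sof_c h1 h2]; exact hf.pos _ _ (bx0 q h1 h2)
    · rw [Sof_d hpq hc.1 hc.2]; omega
  · intro p q
    by_cases hpq : p < q
    · rcases cls (d := d) p q hpq with hc | hc | hc | hc
      · have e1 := Sof_a (e := e) (K := K) (N := N) (B := B) hc
        rw [neg_neg] at e1
        rw [e1]; exact h.rv_le hf hc
      · have e1 := Sof_b (e := e) (K := K) (N := N) (B := B) hc
        rw [neg_neg] at e1
        rw [e1]; exact h.rv_le hf hc
      · obtain ⟨rfl, h1, h2⟩ := hc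
        rw [Sof_c h1 h2]; have := hf.le _ _ (bx0 q h1 h2); omega
      · rw [Sof_d hpq hc.1 hc.2]
    · rw [Sof_z hpq]; omega
  · intro p q hpq
    rcases cls (d := d) p q hpq with hc | hc | hc | hc
    · have e1 := Sof_a (e := e) (K := K) (N := N) (B := B) hc
      have e2 := h.col_lt _ _ hc.1 hc.2.1 hc.2.2
      rw [neg_neg] at e1 e2
      rw [e1, h.rv_leN hf hc, e2]
    · have e1 := Sof_b (e := e) (K := K) (N := N) (B := B) hc
      have e2 := h.col_lt _ _ hc.1 hc.2.1 hc.2.2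
      rw [neg_neg] at e1
      rw [e1, h.rv_leN hf hc, ← e2, h.odd, h.odd]
      omega
    · obtain ⟨rfl, h1, h2⟩ := hc
      rw [Sof_c h1 h2]
      have := hf.le _ _ (bx0 q h1 h2)
      have := h.kneg q h1 h2
      have := h.odd q
      constructor <;> intro <;> omega
    · rw [Sof_d hpq hc.1 hc.2]
      have := h.rest p q hpq hc.1 hc.2
      constructor <;> intro <;> omega
  · intro p q p' q' h1 h2 a1 a2 a3 a4 hN heq
    obtain ⟨i, z, r1, r2, r3, r4⟩ := h.rep hf p q h1 hN
    obtain ⟨i', z', r1', r2', r3', r4'⟩ := h.rep hf p' q' h2 (by omega)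
    obtain ⟨rfl, hcc⟩ := hf.inj _ _ _ _ ((h.col_bx r1).2 r2) ((h.col_bx r1').2 r2') (by omega)
    have := h.col_inj i z z' r1.1 r1.2.1 r1.2.2 r1'.2.2 hcc
    subst this
    omega
  · intro k hk1 hk2
    obtain ⟨i, c, hb, hk⟩ := hf.surj k hk1 hk2
    obtain ⟨r1, r2⟩ := h.ltr_sn hb
    refine ⟨-i, ltr K c, r1.2.2.1, ?_⟩
    rw [Sof_a r1]
    unfold rv
    rw [r2, if_pos hb.2.2.2, hk]
  · intro p hp
    by_cases hpd : -d ≤ p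
    · have hc : Rw d (-p) 0 := Rw0 (by omega) (by omega)
      have e1 := Sof_a (e := e) (K := K) (N := N) (B := B) hc
      have e2 := Sof_c (e := e) (K := K) (N := N) (B := B) hc.1 hc.2.1
      rw [neg_neg] at e1 e2
      rw [e1, e2, h.rv0]
    · rw [Sof_d hp (by omega) (by omega), Sof_d (by omega) (by omega) (by omega)]

lemma bof_bx (he : ∀ i : ℤ, 1 ≤ i → i ≤ d → (e i : ℤ) + i = lam ((d:ℤ) + 1 - i).toNat) {i c : ℤ}
    (hb : Bx d e i c) : bb d (Bof d lam K S) i c = S (-i) (ltr K c) := by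
  unfold bb Bof
  rw [if_pos ((diag_iff he i c).2 hb)]
  congr 1; simp

lemma OL.bof_fil (h : OL d n e K) (hS : PreO K N S)
    (he : ∀ i : ℤ, 1 ≤ i → i ≤ d → (e i : ℤ) + i = lam ((d:ℤ) + 1 - i).toNat) :
    Fil d N e (Bof d lam K S) := by
  have le : ∀ i c, Bx d e i c → bb d (Bof d lam K S) i c ≤ N := by
    intro i c hb
    rw [bof_bx he hb]
    obtain ⟨r1, r2⟩ := h.ltr_sn hb
    exact (h.xN hS i _ r1.1 r1.2.1 r1.2.2).2 (by rw [r2]; exact hb.2.2.2)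
  refine ⟨?_, le, ?_, ?_, ?_⟩
  · intro i c hb
    rw [bof_bx he hb]
    exact hS.pos _ _ (h.ltr_sn hb).1.2.2.1
  · intro i c i' c' hb hb' heq
    have l1 := le i c hb
    rw [bof_bx he hb, bof_bx he hb'] at heq
    rw [bof_bx he hb] at l1
    obtain ⟨r1, r2⟩ := h.ltr_sn hb
    obtain ⟨r1', r2'⟩ := h.ltr_sn hb'
    obtain ⟨_, _, _, _, H1, H2, H3⟩ := hS.inj' _ _ _ _ r1.2.2.1 r1'.2.2.1 l1 heq
    have : i = i' ∧ ltr K c = ltr K c' := by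
      unfold Rw Sn at r1 r1'
      omega
    refine ⟨this.1, ?_⟩
    rw [← r2, ← r2', this.2]
  · intro k hk1 hk2
    obtain ⟨p, q, hpq, hk⟩ := hS.surj k hk1 hk2
    have key : ∀ i z, Rw d i z → S (-i) z = k → ∃ i c, Bx d e i c ∧ bb d (Bof d lam K S) i c = k := by
      intro i z hz hk
      have hb := (h.col_bx hz).2 ((h.xN hS i z hz.1 hz.2.1 hz.2.2).1 (by omega))
      refine ⟨i, colF d K z, hb, ?_⟩
      rw [bof_bx he hb, h.ltr_col hz, hk]
    rcases cls (d := d) p q hpq with hc | hc | hc | hc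
    · exact key _ _ hc (by rwa [neg_neg])
    · exact key _ _ hc (by rw [← hS.symm]; exact hk)
    · obtain ⟨rfl, h1, h2⟩ := hc
      refine key q 0 (Rw0 h1 h2) ?_
      have := hS.zr (-q) (by omega)
      rw [neg_neg] at this
      omega
    · have := hS.top p q hpq (h.rest p q hpq hc.1 hc.2)
      omega
  · intro i c hb
    unfold bb Bof
    rw [if_neg (by rwa [diag_iff he])]

lemma OL.bof_sof (h : OL d n e K) (hf : Fil d N e B)
    (he : ∀ i : ℤ, 1 ≤ i → i ≤ d → (e i : ℤ) + i = lam ((d:ℤ) + 1 - i).toNat) :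
    Bof d lam K (Sof d e K N B) = B := by
  have key : ∀ i c, bb d (Bof d lam K (Sof d e K N B)) i c = bb d B i c := by
    intro i c
    by_cases hb : Bx d e i c
    · rw [bof_bx he hb]
      obtain ⟨r1, r2⟩ := h.ltr_sn hb
      rw [Sof_a r1]
      unfold rv
      rw [r2, if_pos hb.2.2.2]
    · rw [(h.bof_fil (h.sof_pre hf) he).off _ _ hb, hf.off _ _ hb]
  funext p
  have := key ((d:ℤ) + 1 - p.1) p.2
  simpa [bb] using this

lemma OL.sof_bof (h : OL d n e K) (hS : PreO K N S)
    (he : ∀ i : ℤ, 1 ≤ i → i ≤ d → (e i : ℤ) + i = lam ((d:ℤ) + 1 - i).toNat) :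
    Sof d e K N (Bof d lam K S) = S := by
  have key : ∀ i z, Rw d i z → rv d e K N (Bof d lam K S) i z = S (-i) z := by
    intro i z hz
    have hx := h.xN hS i z hz.1 hz.2.1 hz.2.2
    unfold rv
    split_ifs with hc
    · rw [bof_bx he ((h.col_bx hz).2 hc), h.ltr_col hz]
    · have := hS.le (-i) z
      omega
  funext p q
  by_cases hpq : p < q
  · rcases cls (d := d) p q hpq with hc | hc | hc | hc
    · have e1 := Sof_a (e := e) (K := K) (N := N) (B := Bof d lam K S) hc
      rw [key _ _ hc, neg_neg] at e1
      exact e1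
    · have e1 := Sof_b (e := e) (K := K) (N := N) (B := Bof d lam K S) hc
      rw [key _ _ hc, neg_neg, ← hS.symm] at e1
      exact e1
    · obtain ⟨rfl, h1, h2⟩ := hc
      have := hS.zr (-q) (by omega)
      rw [neg_neg] at this
      rw [Sof_c h1 h2, ← this, ← key q 0 (Rw0 h1 h2), h.rv0]
    · rw [Sof_d hpq hc.1 hc.2, hS.top p q hpq (h.rest p q hpq hc.1 hc.2)]
  · rw [Sof_z hpq, hS.zero p q hpq]
end

section
variable {d n N : ℕ} {e : ℤ → ℕ} {K : Equiv.Perm ℤ} {S : ℤ → ℤ → ℕ} {lam : ℕ → ℕ} {B : ℤ × ℤ → ℕ}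

lemma hook_mem (he : ∀ i : ℤ, 1 ≤ i → i ≤ d → (e i : ℤ) + i = lam ((d:ℤ) + 1 - i).toNat) (i c k c' : ℤ) :
    ((d:ℤ) + 1 - k, c') ∈ ExtHook d lam ((d:ℤ) + 1 - i) c ↔
      (k = i ∧ c' = c) ∨ (Bx d e k c' ∧ ((k = i ∧ c < c') ∨ (c' = c ∧ k < i))) ∨
      (Bx d e k c' ∧ c < 0 ∧ k = -c) ∨ (c < 0 ∧ k = -c ∧ c' = c) := by
  unfold ExtHook Hook
  simp only [Set.mem_union, Set.mem_ofPred_eq, Set.mem_singleton_iff, diag_iff he, Prod.mk.injEq]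
  have e1 : ((d:ℤ) + 1 - k = d + 1 - i) ↔ k = i := by omega
  have e2 : ((d:ℤ) + 1 - k = d + 1 + c) ↔ k = -c := by omega
  have e3 : ((d:ℤ) + 1 - i < d + 1 - k) ↔ k < i := by omega
  rw [e1, e2, e3]
  tauto

lemma extF (k c' : ℤ) (B : ℤ × ℤ → ℕ) : ExtFilling d B ((d:ℤ) + 1 - k, c') =
    if c' = -k then bb d B k 0 else bb d B k c' := by
  unfold ExtFilling bb
  simp only
  congr 1
  apply propext; omega

noncomputable def cH1 (d : ℕ) (e : ℤ → ℕ) (B : ℤ × ℤ → ℕ) (i c : ℤ) (X : ℕ) : Finset ℤ :=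
  (Finset.Ioc c (e i)).filter (fun c' => X < bb d B i c')
noncomputable def cH2 (d : ℕ) (e : ℤ → ℕ) (B : ℤ × ℤ → ℕ) (i c : ℤ) (X : ℕ) : Finset ℤ :=
  (Finset.Ico 1 i).filter (fun k => -k < c ∧ c ≤ e k ∧ X < bb d B k c)

lemma ncard_hook (he : ∀ i : ℤ, 1 ≤ i → i ≤ d → (e i : ℤ) + i = lam ((d:ℤ) + 1 - i).toNat) (i c : ℤ)
    (hb : Bx d e i c) (X : ℕ) (hX : bb d B i c = X) :
    ({q ∈ ExtHook d lam ((d:ℤ) + 1 - i) c | X < ExtFilling d B q}).ncard =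
      (cH1 d e B i c X).card + (cH2 d e B i c X).card +
      (if c < 0 then (cH1 d e B (-c) c X).card else 0) +
      (if c < 0 ∧ X < bb d B (-c) 0 then 1 else 0) := by
  obtain ⟨b1, b2, b3, b4⟩ := hb
  let F1 : Finset (ℤ × ℤ) := (cH1 d e B i c X).image (fun c' => ((d:ℤ) + 1 - i, c'))
  let F2 : Finset (ℤ × ℤ) := (cH2 d e B i c X).image (fun k => ((d:ℤ) + 1 - k, c))
  let F3 : Finset (ℤ × ℤ) := if c < 0 then (cH1 d e B (-c) c X).image (fun c' => ((d:ℤ) + 1 - (-c), c')) else ∅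
  let F4 : Finset (ℤ × ℤ) := if c < 0 ∧ X < bb d B (-c) 0 then {((d:ℤ) + 1 - (-c), c)} else ∅
  have m1 : ∀ k c', ((d:ℤ) + 1 - k, c') ∈ F1 ↔ k = i ∧ c < c' ∧ c' ≤ e i ∧ X < bb d B i c' := by
    intro k c'
    simp only [F1, cH1, Finset.mem_image, Finset.mem_filter, Finset.mem_Ioc, Prod.mk.injEq]
    constructor
    · rintro ⟨x, ⟨⟨a1, a2⟩, a3⟩, a4, rfl⟩
      exact ⟨by omega, a1, a2, a3⟩
    · rintro ⟨rfl, a1, a2, a3⟩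
      exact ⟨c', ⟨⟨a1, a2⟩, a3⟩, rfl, rfl⟩
  have m2 : ∀ k c', ((d:ℤ) + 1 - k, c') ∈ F2 ↔ c' = c ∧ 1 ≤ k ∧ k < i ∧ -k < c ∧ c ≤ e k ∧ X < bb d B k c := by
    intro k c'
    simp only [F2, cH2, Finset.mem_image, Finset.mem_filter, Finset.mem_Ico, Prod.mk.injEq]
    constructor
    · rintro ⟨x, ⟨⟨a1, a2⟩, a3⟩, a4, rfl⟩
      have : x = k := by omega
      subst this
      exact ⟨rfl, a1, a2, a3⟩
    · rintro ⟨rfl, a1, a2, a3⟩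
      exact ⟨k, ⟨⟨a1, a2⟩, a3⟩, rfl, rfl⟩
  have m3 : ∀ k c', ((d:ℤ) + 1 - k, c') ∈ F3 ↔ c < 0 ∧ k = -c ∧ c < c' ∧ c' ≤ e (-c) ∧ X < bb d B (-c) c' := by
    intro k c'
    by_cases hc : c < 0
    · simp only [F3, hc, if_true, cH1, Finset.mem_image, Finset.mem_filter, Finset.mem_Ioc, Prod.mk.injEq]
      constructor
      · rintro ⟨x, ⟨⟨a1, a2⟩, a3⟩, a4, rfl⟩
        exact ⟨trivial, by omega, a1, a2, a3⟩
      · rintro ⟨_, rfl, a1, a2, a3⟩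
        exact ⟨c', ⟨⟨a1, a2⟩, a3⟩, rfl, rfl⟩
    · simp [F3, hc]
  have m4 : ∀ k c', ((d:ℤ) + 1 - k, c') ∈ F4 ↔ c < 0 ∧ X < bb d B (-c) 0 ∧ k = -c ∧ c' = c := by
    intro k c'
    by_cases hc : c < 0 ∧ X < bb d B (-c) 0
    · simp only [F4, hc, and_self, if_true, Finset.mem_singleton, Prod.mk.injEq]
      constructor
      · rintro ⟨a, b⟩; exact ⟨trivial, trivial, by omega, b⟩
      · rintro ⟨_, _, a, b⟩; exact ⟨by omega, b⟩
    · simp only [F4, hc, if_false, Finset.notMem_empty, false_iff]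
      tauto
  have back : ∀ q : ℤ × ℤ, ∃ k c', q = ((d:ℤ) + 1 - k, c') := fun q =>
    ⟨(d:ℤ) + 1 - q.1, q.2, by ext <;> simp⟩
  have hQ : ({q ∈ ExtHook d lam ((d:ℤ) + 1 - i) c | X < ExtFilling d B q}) =
      ((((F1 ∪ F2) ∪ F3) ∪ F4 : Finset (ℤ × ℤ)) : Set (ℤ × ℤ)) := by
    ext q
    obtain ⟨k, c', rfl⟩ := back q
    simp only [Set.mem_ofPred_eq, Finset.coe_union, Set.mem_union, Finset.mem_coe, m1, m2, m3, m4,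
      hook_mem he, extF]
    constructor
    · rintro ⟨(⟨rfl, rfl⟩ | ⟨⟨x1, x2, x3, x4⟩, (⟨rfl, h5⟩ | ⟨rfl, h5⟩)⟩ | ⟨⟨x1, x2, x3, x4⟩, h5, rfl⟩ | ⟨h5, rfl, rfl⟩), hlt⟩
      · rw [if_neg (by omega)] at hlt; omega
      · rw [if_neg (by omega)] at hlt
        exact Or.inl (Or.inl (Or.inl ⟨rfl, h5, x4, hlt⟩))
      · rw [if_neg (by omega)] at hlt
        exact Or.inl (Or.inl (Or.inr ⟨rfl, x1, h5, x3, x4, hlt⟩))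
      · rw [if_neg (by omega)] at hlt
        exact Or.inl (Or.inr ⟨h5, rfl, by omega, x4, hlt⟩)
      · rw [if_pos (by omega)] at hlt
        exact Or.inr ⟨h5, hlt, rfl, rfl⟩
    · rintro (((⟨rfl, a1, a2, a3⟩ | ⟨rfl, a1, a2, a3, a4, a5⟩) | ⟨a1, rfl, a2, a3, a4⟩) | ⟨a1, a2, rfl, rfl⟩)
      · rw [if_neg (by omega)]
        exact ⟨Or.inr (Or.inl ⟨⟨b1, b2, by omega, a2⟩, Or.inl ⟨rfl, a1⟩⟩), a3⟩
      · rw [if_neg (by omega)]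
        exact ⟨Or.inr (Or.inl ⟨⟨a1, by omega, by omega, a4⟩, Or.inr ⟨rfl, a2⟩⟩), a5⟩
      · rw [if_neg (by omega)]
        exact ⟨Or.inr (Or.inr (Or.inl ⟨⟨by omega, by omega, by omega, a3⟩, a1, rfl⟩)), a4⟩
      · rw [if_pos (by omega)]
        exact ⟨Or.inr (Or.inr (Or.inr ⟨a1, rfl, rfl⟩)), a2⟩
  rw [hQ, Set.ncard_coe_finset, Finset.card_union_of_disjoint, Finset.card_union_of_disjoint,
    Finset.card_union_of_disjoint]
  · have c1 : F1.card = (cH1 d e B i c X).card :=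
      Finset.card_image_of_injective _ (fun a b hab => by simpa using hab)
    have c2 : F2.card = (cH2 d e B i c X).card :=
      Finset.card_image_of_injective _ (fun a b hab => by simpa using hab)
    have c3 : F3.card = if c < 0 then (cH1 d e B (-c) c X).card else 0 := by
      by_cases hc : c < 0
      · simp only [F3, hc, if_true]
        exact Finset.card_image_of_injective _ (fun a b hab => by simpa using hab)
      · simp [F3, hc]
    have c4 : F4.card = if c < 0 ∧ X < bb d B (-c) 0 then 1 else 0 := by
      by_cases hc : c < 0 ∧ X < bb d B (-c) 0
      · simp only [F4, hc, and_self, if_true, Finset.card_singleton]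
      · simp only [F4, hc, if_false, Finset.card_empty]
    rw [c1, c2, c3, c4]
  · rw [Finset.disjoint_left]
    intro q hq hq'
    obtain ⟨k, c', rfl⟩ := back q
    rw [m1] at hq; rw [m2] at hq'; omega
  · rw [Finset.disjoint_left]
    intro q hq hq'
    obtain ⟨k, c', rfl⟩ := back q
    rw [Finset.mem_union, m1, m2] at hq; rw [m3] at hq'; omega
  · rw [Finset.disjoint_left]
    intro q hq hq'
    obtain ⟨k, c', rfl⟩ := back q
    rw [Finset.mem_union, Finset.mem_union, m1, m2, m3] at hq; rw [m4] at hq'; omega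

lemma OL.sof_row (h : OL d n e K) {i z : ℤ} (hz : Rw d i z) (hc : colF d K z ≤ e i) :
    Sof d e K N B (-i) z = bb d B i (colF d K z) := by
  rw [Sof_a hz]; unfold rv; rw [if_pos hc]

/-- letters of a row versus columns. -/
lemma OL.rowcount (h : OL d n e K) (hf : Fil d N e B) (i c : ℤ) (h1 : 1 ≤ i) (h2 : i ≤ d) (hc : -i ≤ c)
    (Y : ℕ) (hY : Y ≤ N + 1) :
    ((Finset.Icc (-(n:ℤ)) n).filter (fun z => c < colF d K z ∧ -i < z ∧ Sof d e K N B (-i) z < Y)).card =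
    ((Finset.Ioc c (e i)).filter (fun c' => bb d B i c' < Y)).card := by
  have hS := h.sof_pre hf
  have dn := h.dn
  have sn : ∀ z, c < colF d K z → -i < z → Rw d i z := by
    intro z a b
    refine ⟨h1, h2, b, ?_⟩
    by_contra hcon
    unfold colF at a
    rw [if_pos (by omega)] at a
    omega
  apply Finset.card_bij' (fun z _ => colF d K z) (fun c' _ => ltr K c')
  · intro z hz
    simp only [Finset.mem_filter, Finset.mem_Icc, Finset.mem_Ioc] at hz ⊢
    obtain ⟨a, b, f, g⟩ := hz
    have r := sn z b f
    have hc := (h.xN hS i z h1 h2 r.2.2).1 (by omega)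
    refine ⟨⟨b, hc⟩, ?_⟩
    rwa [← h.sof_row r hc (N := N)]
  · intro c' hc'
    simp only [Finset.mem_filter, Finset.mem_Icc, Finset.mem_Ioc] at hc' ⊢
    obtain ⟨⟨a, b⟩, g⟩ := hc'
    obtain ⟨r1, r2⟩ := h.ltr_sn (i := i) (c := c') ⟨h1, h2, by omega, b⟩
    refine ⟨⟨by have := r1.2.2.1; omega, ?_⟩, by omega, r1.2.2.1, ?_⟩
    · by_contra hcon
      have p := h.place i h1 h2
      have := h.bd (-i) (by omega) (by omega)
      unfold colF at r2
      rw [if_neg (by omega), h.fix _ (by omega)] at r2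
      omega
    · rw [h.sof_row r1 (by omega), r2]; exact g
  · intro z hz
    simp only [Finset.mem_filter, Finset.mem_Icc] at hz
    exact h.ltr_col (sn z hz.2.1 hz.2.2.1)
  · intro c' hc'
    simp only [Finset.mem_filter, Finset.mem_Ioc] at hc'
    exact (h.ltr_sn (i := i) (c := c') ⟨h1, h2, by omega, hc'.1.2⟩).2

end

section
variable {d n N : ℕ} {e : ℤ → ℕ} {K : Equiv.Perm ℤ} {S : ℤ → ℤ → ℕ} {lam : ℕ → ℕ} {B : ℤ × ℤ → ℕ}

lemma cardH1 (hf : Fil d N e B) {i c : ℤ} (hb : Bx d e i c) (X : ℕ) (hX : bb d B i c = X) :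
    ((cH1 d e B i c X).card : ℤ) + ((Finset.Ioc c (e i)).filter (fun c' => bb d B i c' < X)).card = e i - c := by
  have hc : cH1 d e B i c X = (Finset.Ioc c (e i)).filter (fun c' => ¬ bb d B i c' < X) := by
    unfold cH1
    apply Finset.filter_congr
    intro c' hc'
    rw [Finset.mem_Ioc] at hc'
    constructor
    · intro; omega
    · intro h1
      by_contra h2
      have := hf.inj i c' i c ⟨hb.1, hb.2.1, by have := hb.2.2.1; omega, hc'.2⟩ hb (by omega)
      omega
  have := Finset.card_filter_add_card_filter_not (s := Finset.Ioc c (e i : ℤ)) (fun c' => bb d B i c' < X)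
  rw [Int.card_Ioc] at this
  rw [hc]
  have := hb.2.2.2
  omega

lemma cardH3 (i c : ℤ) (X : ℕ) (hc : c ≤ e i) :
    ((cH1 d e B i c X).card : ℤ) + ((Finset.Ioc c (e i)).filter (fun c' => bb d B i c' < X + 1)).card = e i - c := by
  have hc : cH1 d e B i c X = (Finset.Ioc c (e i)).filter (fun c' => ¬ bb d B i c' < X + 1) := by
    unfold cH1
    apply Finset.filter_congr
    intro c' hc'
    omega
  have := Finset.card_filter_add_card_filter_not (s := Finset.Ioc c (e i : ℤ)) (fun c' => bb d B i c' < X + 1)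
  rw [Int.card_Ioc] at this
  rw [hc]
  omega

lemma OL.cardB (h : OL d n e K) (hf : Fil d N e B) {i u : ℤ} (hu : Rw d i u) (hc : colF d K u ≤ e i)
    (X : ℕ) (hX : Sof d e K N B (-i) u = X) :
    (setB d n K (Sof d e K N B) i u).card =
      ((Finset.Ioc (colF d K u) (e i)).filter (fun c' => bb d B i c' < X)).card +
      ((Finset.Icc (-(n:ℤ)) n).filter (fun z : ℤ => z < -d ∧ Sof d e K N B z u < X)).card := by
  have hS := h.sof_pre hf
  have := hu.1
  have := hu.2.1
  rw [← h.rowcount hf i _ hu.1 hu.2.1 (h.col_gt i u hu.1 hu.2.1 hu.2.2).le X (by rw [← hX]; exact hS.le _ _),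
    ← Finset.card_union_of_disjoint]
  · congr 1
    ext z
    simp only [setB, Finset.mem_union, Finset.mem_filter, condB, hX]
    tauto
  · rw [Finset.disjoint_left]
    intro z hz hz'
    simp only [Finset.mem_filter] at hz hz'
    omega

lemma OL.cardA0 (h : OL d n e K) (hf : Fil d N e B) {i u : ℤ} (hu : Rw d i u) (hc : colF d K u ≤ e i)
    (hc0 : 0 ≤ colF d K u) (X : ℕ) (hX : Sof d e K N B (-i) u = X) :
    (setA d n K (Sof d e K N B) i u).card = (cH2 d e B i (colF d K u) X).card := by
  have dn := h.dn
  have hS := h.sof_pre hf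
  obtain ⟨h1, h2, hu1, hu2⟩ := hu
  have hnu : ¬ (1 ≤ u ∧ u ≤ d) := by
    intro hh; unfold colF at hc0; rw [if_pos hh] at hc0; omega
  have hcK : colF d K u = K u := by unfold colF; rw [if_neg hnu]
  have rk : ∀ k : ℤ, 1 ≤ k → k < i → -k < u → Rw d k u := fun k a b f => ⟨a, by omega, f, by omega⟩
  refine Finset.card_bij' (fun z _ => -z) (fun k _ => -k) ?_ ?_ ?_ ?_
  · intro z hz
    simp only [setA, condA, cH2, Finset.mem_filter, Finset.mem_Icc, Finset.mem_Ico] at hz ⊢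
    obtain ⟨⟨_, _⟩, a, b, f, g⟩ := hz
    have hz0 : z < 0 := by
      by_contra hcon
      by_cases hz1 : z ≤ d
      · unfold colF at a
        by_cases hz2 : z = 0
        · subst hz2; rw [if_neg hnu, if_neg (by omega), h.k0] at a
          rw [hcK] at hc0; omega
        · rw [if_neg hnu, if_pos (by omega)] at a
          rw [hcK] at hc0; omega
      · have := h.S z u (by omega) f
        unfold colF at a
        rw [if_neg hnu, if_neg (by omega)] at a; omega
    have r := rk (-z) (by omega) (by omega) (by omega)
    have hcz : colF d K z = K z := by unfold colF; rw [if_neg (by omega)]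
    have hle := (h.col_lt (-z) u (by omega) (by omega) r.2.2).1 (by rw [neg_neg]; omega)
    refine ⟨⟨by omega, by omega⟩, by omega, hle, ?_⟩
    rw [← h.sof_row r hle (N := N), neg_neg]
    omega
  · intro k hk
    simp only [setA, condA, cH2, Finset.mem_filter, Finset.mem_Icc, Finset.mem_Ico] at hk ⊢
    obtain ⟨⟨a, b⟩, f, g, g'⟩ := hk
    have hpl := h.place k a (by omega)
    have hku : -k < u := by
      by_cases h0 : K u = 0
      · have : u = 0 := K.injective (by rw [h0, h.k0])
        omega
      · have := (h.bef k a (by omega) (K u) (by omega) (by omega)).2 (by omega)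
        simpa using this
    have r := rk k a b hku
    have hck : colF d K (-k) = K (-k) := by unfold colF; rw [if_neg (by omega)]
    refine ⟨⟨by omega, by omega⟩, by omega, by omega, hku, ?_⟩
    rw [h.sof_row r g, hX]; exact g'
  · intro z _; simp
  · intro z _; simp

lemma OL.cardB2 (h : OL d n e K) (hf : Fil d N e B) {i u : ℤ} (hu : Rw d i u)
    (hc0 : 0 ≤ colF d K u) (X : ℕ) (hX : X ≤ N) :
    ((Finset.Icc (-(n:ℤ)) n).filter (fun z : ℤ => z < -d ∧ Sof d e K N B z u < X)).card = 0 := by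
  have hS := h.sof_pre hf
  obtain ⟨h1, h2, hu1, hu2⟩ := hu
  rw [Finset.card_eq_zero, Finset.filter_eq_empty_iff]
  rintro z _ ⟨a, b⟩
  have : 0 ≤ K u := by
    unfold colF at hc0
    split_ifs at hc0 <;> omega
  have := hS.top z u (by omega) (by have := h.kneg' z a; omega)
  omega

lemma OL.cardAneg (h : OL d n e K) (hf : Fil d N e B) {i j : ℤ} (h1 : 1 ≤ j) (h2 : j < i) (h3 : i ≤ d)
    (X : ℕ) (hX : Sof d e K N B (-i) j = X) :
    (setA d n K (Sof d e K N B) i j).card = (cH2 d e B i (-j) X).card +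
      (if X < bb d B j 0 then 1 else 0) +
      ((Finset.Ioo (-j) j).filter (fun z => X < Sof d e K N B z j)).card := by
  have dn := h.dn
  have hS := h.sof_pre hf
  have hcj : colF d K j = -j := by unfold colF; rw [if_pos (by omega)]
  have hcol : ∀ z, -i < z → z < j → -j < colF d K z := by
    intro z a b
    by_cases hz : 1 ≤ z
    · unfold colF; rw [if_pos (by omega)]; omega
    · have : 0 ≤ colF d K z := by
        by_cases hz0 : z = 0
        · rw [hz0, h.col0]
        · have := h.kpos z (by omega) (by omega)
          unfold colF; rw [if_neg (by omega)]; omega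
      omega
  have rk : ∀ k, j < k → k < i → Sof d e K N B (-k) j = bb d B k (-j) := by
    intro k a b
    rw [h.sof_row (i := k) (z := j) ⟨by omega, by omega, by omega, by omega⟩ (by omega), hcj]
  let F1 : Finset ℤ := (cH2 d e B i (-j) X).image (fun k => -k)
  let F2 : Finset ℤ := if X < bb d B j 0 then {-j} else ∅
  let F3 : Finset ℤ := (Finset.Ioo (-j) j).filter (fun z => X < Sof d e K N B z j)
  have m1 : ∀ z, z ∈ F1 ↔ -i < z ∧ z < -j ∧ X < bb d B (-z) (-j) := by
    intro z
    simp only [F1, cH2, Finset.mem_image, Finset.mem_filter, Finset.mem_Ico]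
    constructor
    · rintro ⟨k, ⟨⟨a, b⟩, c, f, g⟩, rfl⟩
      rw [neg_neg]
      exact ⟨by omega, by omega, g⟩
    · rintro ⟨a, b, c⟩
      exact ⟨-z, ⟨⟨by omega, by omega⟩, by omega, by omega, c⟩, by omega⟩
  have m2 : ∀ z, z ∈ F2 ↔ X < bb d B j 0 ∧ z = -j := by
    intro z
    by_cases hx : X < bb d B j 0 <;> simp [F2, hx]
  have m3 : ∀ z, z ∈ F3 ↔ (-j < z ∧ z < j) ∧ X < Sof d e K N B z j := by
    intro z
    simp only [F3, Finset.mem_filter, Finset.mem_Ioo]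
  have hQ : setA d n K (Sof d e K N B) i j = (F1 ∪ F2) ∪ F3 := by
    ext z
    rw [Finset.mem_union, Finset.mem_union, m1, m2, m3]
    simp only [setA, condA, Finset.mem_filter, Finset.mem_Icc, hcj, hX]
    constructor
    · rintro ⟨⟨_, _⟩, a, b, f, g⟩
      rcases lt_trichotomy z (-j) with hz | hz | hz
      · left; left
        have := rk (-z) (by omega) (by omega)
        rw [neg_neg] at this
        exact ⟨b, hz, by omega⟩
      · left; right
        subst hz
        rw [Sof_c (by omega) (by omega)] at g
        exact ⟨g, rfl⟩
      · right; exact ⟨⟨hz, f⟩, g⟩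
    · rintro ((⟨a, b, f⟩ | ⟨a, rfl⟩) | ⟨⟨a, b⟩, f⟩)
      · have := rk (-z) (by omega) (by omega)
        rw [neg_neg] at this
        exact ⟨⟨by omega, by omega⟩, hcol z (by omega) (by omega), by omega, by omega, by omega⟩
      · refine ⟨⟨by omega, by omega⟩, hcol _ (by omega) (by omega), by omega, by omega, ?_⟩
        rw [Sof_c (by omega) (by omega)]; exact a
      · exact ⟨⟨by omega, by omega⟩, hcol z (by omega) (by omega), by omega, by omega, by omega⟩
  rw [hQ, Finset.card_union_of_disjoint, Finset.card_union_of_disjoint]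
  · have c1 : F1.card = (cH2 d e B i (-j) X).card :=
      Finset.card_image_of_injective _ (fun a b hab => by simpa using hab)
    have c2 : F2.card = if X < bb d B j 0 then 1 else 0 := by
      by_cases hx : X < bb d B j 0 <;> simp [F2, hx]
    rw [c1, c2]
  · rw [Finset.disjoint_left]
    intro z hz hz'
    rw [m1] at hz; rw [m2] at hz'; omega
  · rw [Finset.disjoint_left]
    intro z hz hz'
    rw [Finset.mem_union, m1, m2] at hz; rw [m3] at hz'; omega

lemma OL.cardV (h : OL d n e K) (hf : Fil d N e B) {i j : ℤ} (h1 : 1 ≤ j) (h2 : j < i) (h3 : i ≤ d)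
    (X : ℕ) (hX : Sof d e K N B (-i) j = X) (hXN : X ≤ N) :
    ((Finset.Ioc (-j) (e j)).filter (fun c' => bb d B j c' < X + 1)).card =
      ((Finset.Ioo (-j) j).filter (fun z => ¬ X < Sof d e K N B z j)).card +
      ((Finset.Icc (-(n:ℤ)) n).filter (fun z : ℤ => z < -d ∧ Sof d e K N B z j < X)).card := by
  have dn := h.dn
  have hS := h.sof_pre hf
  rw [← h.rowcount hf j (-j) h1 (by omega) le_rfl (X+1) (by omega)]
  have hcg := h.col_gt j
  have ne : ∀ z : ℤ, z < -d → Sof d e K N B z j ≠ X := by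
    intro z hz hc
    obtain ⟨_, _, _, _, H1, H2, H3⟩ := hS.inj' (-i) j z j (by omega) (by omega) (by omega) (by omega)
    omega
  have nj : ∀ z, -j < colF d K z → -j < z → z < j ∨ d < z := by
    intro z a b
    by_contra hcon
    unfold colF at a
    rw [if_pos (by omega)] at a; omega
  rw [← Finset.card_image_of_injective ((Finset.Ioo (-j) j).filter _) (neg_injective (G := ℤ)),
    ← Finset.card_image_of_injective ((Finset.Icc (-(n:ℤ)) n).filter (fun z : ℤ => z < -d ∧ Sof d e K N B z j < X)) (neg_injective (G := ℤ)),
    ← Finset.card_union_of_disjoint]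
  · congr 1
    ext y
    simp only [Finset.mem_union, Finset.mem_image, Finset.mem_filter, Finset.mem_Icc, Finset.mem_Ioo]
    constructor
    · rintro ⟨⟨a1, a2⟩, a3, a4, a5⟩
      have e1 := hS.symm (-j) y
      rw [neg_neg] at e1
      rcases nj y a3 a4 with hy | hy
      · left; exact ⟨-y, ⟨⟨by omega, by omega⟩, by omega⟩, by omega⟩
      · right
        have := ne (-y) (by omega)
        exact ⟨-y, ⟨⟨by omega, by omega⟩, by omega, by omega⟩, by omega⟩
    · rintro (⟨z, ⟨⟨a1, a2⟩, a3⟩, rfl⟩ | ⟨z, ⟨⟨a1, a2⟩, a3, a4⟩, rfl⟩)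
      · have e1 := hS.symm z j
        exact ⟨⟨by omega, by omega⟩, hcg (-z) h1 (by omega) ⟨by omega, by omega⟩, by omega, by omega⟩
      · have e1 := hS.symm z j
        exact ⟨⟨by omega, by omega⟩, hcg (-z) h1 (by omega) ⟨by omega, by omega⟩, by omega, by omega⟩
  · rw [Finset.disjoint_left]
    intro y hy hy'
    simp only [Finset.mem_image, Finset.mem_filter, Finset.mem_Icc, Finset.mem_Ioo] at hy hy'
    obtain ⟨z, hz, hzy⟩ := hy
    obtain ⟨z', hz', hzy'⟩ := hy'
    omega

lemma OL.box_iff (h : OL d n e K) (hf : Fil d N e B)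
    (he : ∀ i : ℤ, 1 ≤ i → i ≤ d → (e i : ℤ) + i = lam ((d:ℤ) + 1 - i).toNat) {i u : ℤ}
    (hu : Rw d i u) (hc : colF d K u ≤ e i) :
    (({q ∈ ExtHook d lam ((d:ℤ) + 1 - i) (colF d K u) | bb d B i (colF d K u) < ExtFilling d B q}).ncard : ℤ) =
      rk d lam ((d:ℤ) + 1 - i) (colF d K u) - 1 ↔
    (setA d n K (Sof d e K N B) i u).card = (setB d n K (Sof d e K N B) i u).card := by
  have hb := (h.col_bx hu).2 hc
  obtain ⟨X, hX⟩ : ∃ X, bb d B i (colF d K u) = X := ⟨_, rfl⟩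
  have hXN : X ≤ N := hX ▸ hf.le _ _ hb
  have hXS : Sof d e K N B (-i) u = X := by rw [h.sof_row hu hc, hX]
  rw [hX, ncard_hook he i _ hb X hX, h.cardB hf hu hc X hXS]
  have k1 := cardH1 hf hb X hX
  have hei := he i hu.1 hu.2.1
  by_cases hc0 : 0 ≤ colF d K u
  · rw [h.cardA0 hf hu hc hc0 X hXS, h.cardB2 hf hu hc0 X hXN, if_neg (by omega), if_neg (by omega)]
    unfold rk
    rw [if_pos hc0, ← hei]
    push_cast
    constructor <;> intro <;> omega
  · obtain ⟨h1, h2, hu1, hu2⟩ := hu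
    have hu1 : 1 ≤ u ∧ u ≤ d := by
      by_contra hcon
      apply hc0
      by_cases h0 : u = 0
      · rw [h0, h.col0]
      unfold colF
      rw [if_neg hcon]
      by_cases hud : (d:ℤ) < u
      · exact (h.pos u hud).le
      · exact (h.kpos u (by omega) (by omega)).le
    have hcu : colF d K u = -u := by unfold colF; rw [if_pos hu1]
    rw [hcu] at k1 ⊢
    rw [h.cardAneg hf hu1.1 (by omega) h2 X hXS]
    have k2 := h.cardV hf hu1.1 (by omega) h2 X hXS hXN
    have k3 := cardH3 (d := d) (e := e) (B := B) u (-u) X (by omega)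
    have k4 := Finset.card_filter_add_card_filter_not (s := Finset.Ioo (-u) u) (fun z => X < Sof d e K N B z u)
    rw [Int.card_Ioo] at k4
    have heu := he u hu1.1 hu1.2
    have hrk : rk d lam ((d:ℤ) + 1 - i) (-u) = e i + e u + 2 := by
      unfold rk
      rw [if_neg (by omega), ← hei, show (d:ℤ) + 1 + -u = d + 1 - u by ring, ← heu]
      ring
    rw [hrk, neg_neg, if_pos (show -u < 0 by omega)]
    have e4 : (if -u < 0 ∧ X < bb d B u 0 then (1:ℕ) else 0) = if X < bb d B u 0 then 1 else 0 := by
      congr 1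
      apply propext
      constructor
      · exact fun x => x.2
      · exact fun x => ⟨by omega, x⟩
    rw [e4]
    generalize (if X < bb d B u 0 then (1:ℕ) else 0) = t
    push_cast
    constructor <;> intro <;> omega

lemma OL.bal_iff (h : OL d n e K)
    (he : ∀ i : ℤ, 1 ≤ i → i ≤ d → (e i : ℤ) + i = lam ((d:ℤ) + 1 - i).toNat)
    (hf : Fil d N e B) (hN : sizeP d lam = N) :
    IsBalanced d lam B ↔ BalU d n e K (Sof d e K N B) := by
  unfold IsBalanced
  rw [fil_iff he hN]
  constructor
  · rintro ⟨_, hbal⟩ i u h1 h2 hu hc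
    rw [← h.box_iff hf he ⟨h1, h2, hu⟩ hc]
    exact hbal ((d:ℤ) + 1 - i, colF d K u) ((diag_iff he _ _).2 ((h.col_bx ⟨h1, h2, hu⟩).2 hc))
  · intro hbal
    refine ⟨hf, ?_⟩
    rintro ⟨r, c⟩ hp
    obtain ⟨i, rfl⟩ : ∃ i, r = (d:ℤ) + 1 - i := ⟨(d:ℤ) + 1 - r, by omega⟩
    rw [diag_iff he] at hp
    obtain ⟨r1, r2⟩ := h.ltr_sn hp
    have hc : colF d K (ltr K c) ≤ e i := by rw [r2]; exact hp.2.2.2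
    have := (h.box_iff hf he r1 hc).2 (hbal i _ r1.1 r1.2.1 r1.2.2 hc)
    rw [r2] at this
    exact this

lemma OL.bs_card (h : OL d n e K)
    (he : ∀ i : ℤ, 1 ≤ i → i ≤ d → (e i : ℤ) + i = lam ((d:ℤ) + 1 - i).toNat)
    (hN : sizeP d lam = N) :
    Nat.card {B : ℤ × ℤ → ℕ // IsBalanced d lam B} =
      Nat.card {S // PreO K N S ∧ ∀ p q r, p < q → q < r → Btw S p q r} := by
  have fil : ∀ B, IsBalanced d lam B → Fil d N e B := fun B hB => (fil_iff he hN).1 hB.1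
  apply Nat.card_congr
  refine ⟨fun B => ⟨Sof d e K N B.1, h.sof_pre (fil _ B.2), ?_⟩,
    fun S => ⟨Bof d lam K S.1, ?_⟩, ?_, ?_⟩
  · rw [h.btw_iff (h.sof_pre (fil _ B.2)), ← h.bal_iff he (fil _ B.2) hN]
    exact B.2
  · rw [h.bal_iff he (h.bof_fil S.2.1 he) hN, h.sof_bof S.2.1 he, ← h.btw_iff S.2.1]
    exact S.2.2
  · intro B
    exact Subtype.ext (h.bof_sof (fil _ B.2) he)
  · intro S
    exact Subtype.ext (h.sof_bof S.2.1 he)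
end

theorem main_card (d : ℕ) (lam : ℕ → ℕ) (hlam : IsStrictPartition d lam) :
    Nat.card {B : ℤ × ℤ → ℕ // IsSYT d lam B} = Nat.card {B : ℤ × ℤ → ℕ // IsBalanced d lam B} := by
  obtain ⟨e, hedef⟩ : ∃ e : ℤ → ℕ, ∀ i, e i = ((lam ((d:ℤ) + 1 - i).toNat : ℤ) - i).toNat := ⟨_, fun _ => rfl⟩
  have hge : ∀ k : ℕ, k < d → k + 1 ≤ lam (d - k) := by
    intro k
    induction k with
    | zero => intro _; simpa using hlam.2
    | succ k ih =>
      intro hk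
      have := ih (by omega)
      have h2 := hlam.1 (d - (k+1)) (by omega) (by omega)
      rw [show d - (k+1) + 1 = d - k by omega] at h2
      omega
  have he : ∀ i : ℤ, 1 ≤ i → i ≤ d → (e i : ℤ) + i = lam ((d:ℤ) + 1 - i).toNat := by
    intro i h1 h2
    have := hge (i - 1).toNat (by omega)
    rw [show d - (i-1).toNat = ((d:ℤ) + 1 - i).toNat by omega] at this
    rw [hedef]
    omega
  have hst : ∀ i : ℤ, 1 ≤ i → i < d → e i ≤ e (i+1) := by
    intro i h1 h2
    have a := he i h1 h2.le
    have b := he (i+1) (by omega) (by omega)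
    have := hlam.1 ((d:ℤ) + 1 - (i+1)).toNat (by omega) (by omega)
    rw [show ((d:ℤ) + 1 - (i+1)).toNat + 1 = ((d:ℤ) + 1 - i).toNat by omega] at this
    omega
  have hmono : ∀ i j : ℤ, 1 ≤ i → i ≤ j → j ≤ d → e i ≤ e j := by
    intro i j h1 h2
    induction j, h2 using Int.le_induction with
    | base => intro _; exact le_rfl
    | succ j hj ih =>
      intro hjd
      exact (ih (by omega)).trans (hst j (by omega) (by omega))
  obtain ⟨w, hw⟩ := WL.exists d e hmono d le_rfl
  obtain ⟨n, hO⟩ := hw.ol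
  obtain ⟨w', hw', hG⟩ := St.reduce (sizeP d lam) d w (hw.st hmono)
  have hT := hw'.term lam hlam (by
    intro i h1 h2
    have := he i (by omega) (by omega)
    rw [show ((d:ℤ) + 1 - i).toNat = d + 1 - i by omega] at this
    omega)
  obtain ⟨m', hm'⟩ := hw'.fix
  obtain ⟨m, hm⟩ := hw.fix
  rw [(syt_card d _ lam w' hT m' hm' rfl).2, hG, hO.bs_card he rfl, goodO_card hw.odd,
    (good_card _ w hw.odd m hm).2]

/-- For every strict partition `λ`, the number of standard Young tableaux
of shifted shape `λ` equals the number of balanced shifted tableaux of shape `λ`. -/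
theorem syt_card_eq_bst_card (d : ℕ) (hd : 1 ≤ d) (lam : ℕ → ℕ)
    (hlam : IsStrictPartition d lam) :
    Nat.card {B : ℤ × ℤ → ℕ // IsSYT d lam B} =
      Nat.card {B : ℤ × ℤ → ℕ // IsBalanced d lam B} := by
  exact main_card d lam hlam

end BST
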